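/- For every non-empty set F ⊆ ℝ², the Assouad dimension of the distance set satisfies dim_A D(F) ≥ min{dim_A F, 1}. -/

import Mathlib

open Metric MeasureTheory Filter Set
open scoped ENNReal NNReal Pointwise Topology

noncomputable section

/-- The Assouad dimension of a subset of a (pseudo)metric space: the infimum of all
`α ≥ 0` for which there is `C > 0` such that for every `x ∈ E` and all scales `0 < r < R`,
the set `E ∩ B(x,R)` can be covered by at most `C (R/r)^α` sets of diameter at most `r`. -/
def assouadDim {X : Type*} [PseudoMetricSpace X] (E : Set X) : ℝ :=
  sInf {α : ℝ | 0 ≤ α ∧ ∃ C : ℝ, 0 < C ∧ ∀ x ∈ E, ∀ r R : ℝ, 0 < r → r < R →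
    ∃ 𝒰 : Finset (Set X), (E ∩ closedBall x R ⊆ ⋃ U ∈ 𝒰, U) ∧
      (∀ U ∈ 𝒰, EMetric.diam U ≤ ENNReal.ofReal r) ∧
      ((𝒰.card : ℝ) ≤ C * (R / r) ^ α)}

/-- Euclidean space `ℝⁿ`. -/
abbrev Euc (n : ℕ) := EuclideanSpace ℝ (Fin n)

/-- The distance set `D(F) = {|x - y| : x, y ∈ F}`. -/
def distSet {n : ℕ} (F : Set (Euc n)) : Set ℝ :=
  {d : ℝ | ∃ x ∈ F, ∃ y ∈ F, d = dist x y}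

lemma sqrt_sub_sq_le_mul_log {m q : ℝ} (hm : 0 ≤ m) (hq : 0 ≤ q) (h : m ≠ 0 → 0 < q) :
    (√m - √q) ^ 2 ≤ m * Real.log (m / q) + q - m := by
  rcases hm.eq_or_lt with rfl | hm'
  · simp [Real.sq_sqrt hq]
  have hq' := h hm'.ne'
  have h1 : Real.log (√q / √m) ≤ √q / √m - 1 :=
    Real.log_le_sub_one_of_pos (div_pos (Real.sqrt_pos.2 hq') (Real.sqrt_pos.2 hm'))
  have h2 : Real.log (m / q) = -2 * Real.log (√q / √m) := by
    rw [Real.log_div hm'.ne' hq'.ne', Real.log_div (Real.sqrt_pos.2 hq').ne'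
      (Real.sqrt_pos.2 hm').ne', Real.log_sqrt hq, Real.log_sqrt hm]
    ring
  have h3 : m * (√q / √m) = √m * √q := by
    have : √m ≠ 0 := (Real.sqrt_pos.2 hm').ne'
    field_simp
    rw [Real.sq_sqrt hm]
  have h4 : m * Real.log (√q / √m) ≤ √m * √q - m := by
    calc _ ≤ m * (√q / √m - 1) := mul_le_mul_of_nonneg_left h1 hm
      _ = _ := by rw [mul_sub, h3, mul_one]
  have h5 := Real.sq_sqrt hm
  have h6 := Real.sq_sqrt hq
  rw [h2]
  nlinarith

/-- A Pinsker-type lower bound for the mutual information of `X` and `Y` on the finite set `S`. -/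
lemma sum_sqrt_sub_sq_le_sum_log {Ω α β : Type*} [DecidableEq α] [DecidableEq β] (S : Finset Ω)
    (X : Ω → α) (Y : Ω → β) :
    ∑ x ∈ S.image X, ∑ y ∈ S.image Y,
      (√((S.filter fun ω => X ω = x ∧ Y ω = y).card : ℝ) -
        √((S.filter fun ω => X ω = x).card * (S.filter fun ω => Y ω = y).card / S.card : ℝ)) ^ 2 ≤
    ∑ ω ∈ S, Real.log ((S.filter fun ω' => X ω' = X ω ∧ Y ω' = Y ω).card /
      ((S.filter fun ω' => X ω' = X ω).card * (S.filter fun ω' => Y ω' = Y ω).card / S.card)) := by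
  set m : α → β → ℝ := fun x y => (S.filter fun ω => X ω = x ∧ Y ω = y).card with hm
  set a : α → ℝ := fun x => (S.filter fun ω => X ω = x).card with ha
  set b : β → ℝ := fun y => (S.filter fun ω => Y ω = y).card with hb
  rcases S.eq_empty_or_nonempty with rfl | hS
  · simp
  have hN : (0 : ℝ) < S.card := by exact_mod_cast hS.card_pos
  set q : α → β → ℝ := fun x y => a x * b y / S.card with hq
  have hR : ∑ ω ∈ S, Real.log (m (X ω) (Y ω) / q (X ω) (Y ω)) =
      ∑ x ∈ S.image X, ∑ y ∈ S.image Y, m x y * Real.log (m x y / q x y) := by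
    have h1 : ∀ ω ∈ S, (X ω, Y ω) ∈ S.image X ×ˢ S.image Y := fun ω hω => by
      simp only [Finset.mem_product, Finset.mem_image]
      exact ⟨⟨ω, hω, rfl⟩, ⟨ω, hω, rfl⟩⟩
    rw [← Finset.sum_product', ← Finset.sum_fiberwise_of_maps_to h1]
    refine Finset.sum_congr rfl fun p _ => ?_
    have h2 : ∀ ω ∈ S.filter (fun ω => (X ω, Y ω) = p),
        Real.log (m (X ω) (Y ω) / q (X ω) (Y ω)) = Real.log (m p.1 p.2 / q p.1 p.2) := by
      intro ω hω
      obtain ⟨-, rfl⟩ := Finset.mem_filter.1 hω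
      rfl
    rw [Finset.sum_congr rfl h2, Finset.sum_const, nsmul_eq_mul]
    congr 3
    ext ω
    simp [Prod.ext_iff]
  have hsa : ∑ x ∈ S.image X, a x = S.card := by
    rw [Finset.card_eq_sum_card_image X S]; push_cast; rfl
  have hsb : ∑ y ∈ S.image Y, b y = S.card := by
    rw [Finset.card_eq_sum_card_image Y S]; push_cast; rfl
  have hsq : ∑ x ∈ S.image X, ∑ y ∈ S.image Y, q x y = S.card := by
    simp only [hq, ← Finset.sum_div, ← Finset.mul_sum, ← Finset.sum_mul, hsa, hsb]
    field_simp
  have hsm : ∑ x ∈ S.image X, ∑ y ∈ S.image Y, m x y = S.card := by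
    rw [← hsa]
    refine Finset.sum_congr rfl fun x _ => ?_
    have : ∀ ω ∈ S.filter (fun ω => X ω = x), Y ω ∈ S.image Y := fun ω hω =>
      Finset.mem_image_of_mem _ (Finset.mem_filter.1 hω).1
    simp only [ha, hm]
    rw [Finset.card_eq_sum_card_fiberwise this]
    push_cast
    simp [Finset.filter_filter]
  change _ ≤ ∑ ω ∈ S, Real.log (m (X ω) (Y ω) / q (X ω) (Y ω))
  rw [hR]
  have key : ∀ x ∈ S.image X, ∀ y ∈ S.image Y,
      (√(m x y) - √(q x y)) ^ 2 ≤ m x y * Real.log (m x y / q x y) + q x y - m x y := by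
    intro x hx y hy
    refine sqrt_sub_sq_le_mul_log (Nat.cast_nonneg _) (by positivity) fun _ => ?_
    have h1 : 0 < a x := by
      obtain ⟨ω, hω, rfl⟩ := Finset.mem_image.1 hx
      exact Nat.cast_pos.2 (Finset.card_pos.2 ⟨ω, by simp [hω]⟩)
    have h2 : 0 < b y := by
      obtain ⟨ω, hω, rfl⟩ := Finset.mem_image.1 hy
      exact Nat.cast_pos.2 (Finset.card_pos.2 ⟨ω, by simp [hω]⟩)
    positivity
  calc _ ≤ ∑ x ∈ S.image X, ∑ y ∈ S.image Y,
        (m x y * Real.log (m x y / q x y) + q x y - m x y) :=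
        Finset.sum_le_sum fun x hx => Finset.sum_le_sum fun y hy => key x hx y hy
    _ = _ := by
      simp only [Finset.sum_sub_distrib, Finset.sum_add_distrib, hsq, hsm]
      ring


/-- If `X` and `Y` have small mutual information on `S`, then conditioning on `Y = y` hardly
changes the mean of a function of `X`. -/
lemma abs_sum_filter_sub_le {Ω α β : Type*} [DecidableEq α] [DecidableEq β] (S : Finset Ω)
    (X : Ω → α) (Y : Ω → β) (φ : α → ℝ) (hφ : ∀ x, |φ x| ≤ 1) {y : β} (hy : y ∈ S.image Y) :
    |∑ ω ∈ S with Y ω = y, φ (X ω) -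
      (S.filter fun ω => Y ω = y).card / S.card * ∑ ω ∈ S, φ (X ω)| ≤
    2 * √(S.card * ∑ ω ∈ S, Real.log ((S.filter fun ω' => X ω' = X ω ∧ Y ω' = Y ω).card /
      ((S.filter fun ω' => X ω' = X ω).card * (S.filter fun ω' => Y ω' = Y ω).card / S.card))) := by
  have hP := sum_sqrt_sub_sq_le_sum_log S X Y
  set M := ∑ ω ∈ S, Real.log ((S.filter fun ω' => X ω' = X ω ∧ Y ω' = Y ω).card /
      ((S.filter fun ω' => X ω' = X ω).card * (S.filter fun ω' => Y ω' = Y ω).card / S.card : ℝ))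
  set m : α → β → ℝ := fun x y => (S.filter fun ω => X ω = x ∧ Y ω = y).card with hm
  set a : α → ℝ := fun x => (S.filter fun ω => X ω = x).card with ha
  set b : β → ℝ := fun y => (S.filter fun ω => Y ω = y).card with hb
  set q : α → β → ℝ := fun x y => a x * b y / S.card with hq
  replace hP : ∑ x ∈ S.image X, ∑ y ∈ S.image Y, (√(m x y) - √(q x y)) ^ 2 ≤ M := hP
  have hN : (0 : ℝ) < S.card := by
    obtain ⟨ω, hω, -⟩ := Finset.mem_image.1 hy
    exact_mod_cast Finset.card_pos.2 ⟨ω, hω⟩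
  have hm0 : ∀ x y, 0 ≤ m x y := fun x y => Nat.cast_nonneg _
  have hq0 : ∀ x y, 0 ≤ q x y := fun x y => by positivity
  have hsa : ∑ x ∈ S.image X, a x = S.card := by
    rw [Finset.card_eq_sum_card_image X S]; push_cast; rfl
  have hmx : ∑ x ∈ S.image X, m x y = b y := by
    have : ∀ ω ∈ S.filter (fun ω => Y ω = y), X ω ∈ S.image X := fun ω hω =>
      Finset.mem_image_of_mem _ (Finset.mem_filter.1 hω).1
    simp only [hb, hm]
    rw [Finset.card_eq_sum_card_fiberwise this]
    push_cast
    simp [Finset.filter_filter, and_comm]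
  have hqx : ∑ x ∈ S.image X, q x y = b y := by
    simp only [hq, ← Finset.sum_div, ← Finset.sum_mul, hsa]
    field_simp
  have h1 : ∑ ω ∈ S with Y ω = y, φ (X ω) = ∑ x ∈ S.image X, φ x * m x y := by
    have : ∀ ω ∈ S.filter (fun ω => Y ω = y), X ω ∈ S.image X := fun ω hω =>
      Finset.mem_image_of_mem _ (Finset.mem_filter.1 hω).1
    rw [← Finset.sum_fiberwise_of_maps_to this]
    refine Finset.sum_congr rfl fun x _ => ?_
    have h2 : ∀ ω ∈ (S.filter (fun ω => Y ω = y)).filter (fun ω => X ω = x),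
        φ (X ω) = φ x := fun ω hω => by rw [(Finset.mem_filter.1 hω).2]
    rw [Finset.sum_congr rfl h2, Finset.sum_const, nsmul_eq_mul, mul_comm, Finset.filter_filter]
    simp only [hm, and_comm]
  have h2 : b y / S.card * ∑ ω ∈ S, φ (X ω) = ∑ x ∈ S.image X, φ x * q x y := by
    have : ∀ ω ∈ S, X ω ∈ S.image X := fun ω hω => Finset.mem_image_of_mem _ hω
    rw [← Finset.sum_fiberwise_of_maps_to this, Finset.mul_sum]
    refine Finset.sum_congr rfl fun x _ => ?_
    have h2 : ∀ ω ∈ S.filter (fun ω => X ω = x),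
        φ (X ω) = φ x := fun ω hω => by rw [(Finset.mem_filter.1 hω).2]
    rw [Finset.sum_congr rfl h2, Finset.sum_const, nsmul_eq_mul]
    simp only [hq, ha]
    ring
  have hPy : ∑ x ∈ S.image X, (√(m x y) - √(q x y)) ^ 2 ≤ M := by
    refine le_trans ?_ hP
    refine Finset.sum_le_sum fun x _ => ?_
    exact Finset.single_le_sum (f := fun y => (√(m x y) - √(q x y)) ^ 2)
      (fun y _ => sq_nonneg _) hy
  have hby : b y ≤ S.card := by
    simp only [hb]; exact_mod_cast Finset.card_filter_le _ _
  have hplus : ∑ x ∈ S.image X, (√(m x y) + √(q x y)) ^ 2 ≤ 4 * S.card := by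
    calc _ ≤ ∑ x ∈ S.image X, (2 * m x y + 2 * q x y) := by
          refine Finset.sum_le_sum fun x _ => ?_
          have e1 := Real.sq_sqrt (hm0 x y)
          have e2 := Real.sq_sqrt (hq0 x y)
          nlinarith [sq_nonneg (√(m x y) - √(q x y))]
      _ = 2 * b y + 2 * b y := by
          rw [Finset.sum_add_distrib, ← Finset.mul_sum, ← Finset.mul_sum, hmx, hqx]
      _ ≤ _ := by linarith
  have hM : 0 ≤ M := le_trans (Finset.sum_nonneg fun x _ => sq_nonneg _) hPy
  have hCS : (∑ x ∈ S.image X, |m x y - q x y|) ^ 2 ≤ 4 * (S.card * M) := by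
    have e : ∀ x ∈ S.image X, |m x y - q x y| =
        |√(m x y) - √(q x y)| * (√(m x y) + √(q x y)) := by
      intro x _
      have e1 := Real.mul_self_sqrt (hm0 x y)
      have e2 := Real.mul_self_sqrt (hq0 x y)
      have e3 : 0 ≤ √(m x y) + √(q x y) := by positivity
      rw [← abs_of_nonneg e3, ← abs_mul]
      congr 1
      linarith
    rw [Finset.sum_congr rfl e]
    refine (Finset.sum_mul_sq_le_sq_mul_sq _ _ _).trans ?_
    simp only [sq_abs]
    calc _ ≤ M * (4 * S.card) := by
          refine mul_le_mul hPy hplus (Finset.sum_nonneg fun x _ => sq_nonneg _) hM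
      _ = _ := by ring
  change |_ - b y / S.card * _| ≤ _
  rw [h1, h2, ← Finset.sum_sub_distrib]
  calc _ ≤ ∑ x ∈ S.image X, |φ x * m x y - φ x * q x y| := Finset.abs_sum_le_sum_abs _ _
    _ ≤ ∑ x ∈ S.image X, |m x y - q x y| := by
        refine Finset.sum_le_sum fun x _ => ?_
        rw [← mul_sub, abs_mul]
        exact mul_le_of_le_one_left (abs_nonneg _) (hφ x)
    _ ≤ √(4 * (S.card * M)) := Real.le_sqrt_of_sq_le hCS
    _ = 2 * √(S.card * M) := by
        rw [Real.sqrt_mul (by norm_num), show (4 : ℝ) = 2 ^ 2 by norm_num,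
          Real.sqrt_sq (by norm_num)]

section Entropy

variable {Ω : Type*} [Fintype Ω]

open Classical in
/-- The size of the class of `ω` in the partition `s`. -/
def cnt (s : Setoid Ω) (ω : Ω) : ℕ := (Finset.univ.filter fun ω' => s ω' ω).card

/-- The average of a real function on a finite space. -/
def avg (f : Ω → ℝ) : ℝ := (∑ ω, f ω) / Fintype.card Ω

/-- The Shannon entropy of the partition `s` for the uniform probability. -/
def ent (s : Setoid Ω) : ℝ := Real.log (Fintype.card Ω) - avg fun ω => Real.log (cnt s ω)

lemma cnt_pos (s : Setoid Ω) (ω : Ω) : 0 < cnt s ω := by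
  classical
  exact Finset.card_pos.2 ⟨ω, by simp⟩

lemma cnt_mono {s t : Setoid Ω} (h : s ≤ t) (ω : Ω) : cnt s ω ≤ cnt t ω := by
  classical
  refine Finset.card_le_card fun x hx => ?_
  simp only [Finset.mem_filter, Finset.mem_univ, true_and] at hx ⊢
  exact h hx

lemma cnt_congr (s : Setoid Ω) {ω ω' : Ω} (h : s ω ω') : cnt s ω = cnt s ω' := by
  classical
  unfold cnt
  congr 1
  ext x
  simp only [Finset.mem_filter, Finset.mem_univ, true_and]
  exact ⟨fun hx => s.trans' hx h, fun hx => s.trans' hx (s.symm' h)⟩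

lemma avg_mono {f g : Ω → ℝ} (h : ∀ ω, f ω ≤ g ω) : avg f ≤ avg g :=
  div_le_div_of_nonneg_right (Finset.sum_le_sum fun ω _ => h ω) (Nat.cast_nonneg _)

lemma avg_add (f g : Ω → ℝ) : avg (fun ω => f ω + g ω) = avg f + avg g := by
  simp [avg, Finset.sum_add_distrib, add_div]

lemma avg_sub (f g : Ω → ℝ) : avg (fun ω => f ω - g ω) = avg f - avg g := by
  simp [avg, Finset.sum_sub_distrib, sub_div]

lemma avg_const [Nonempty Ω] (c : ℝ) : avg (fun _ : Ω => c) = c := by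
  simp [avg]

lemma avg_mul_const (f : Ω → ℝ) (c : ℝ) : avg (fun ω => f ω * c) = avg f * c := by
  simp [avg, ← Finset.sum_mul, div_mul_eq_mul_div]

lemma avg_nonneg {f : Ω → ℝ} (h : ∀ ω, 0 ≤ f ω) : 0 ≤ avg f :=
  div_nonneg (Finset.sum_nonneg fun ω _ => h ω) (Nat.cast_nonneg _)

lemma ent_anti {s t : Setoid Ω} (h : s ≤ t) : ent t ≤ ent s := by
  unfold ent
  have : avg (fun ω => Real.log (cnt s ω)) ≤ avg fun ω => Real.log (cnt t ω) :=
    avg_mono fun ω => Real.log_le_log (by exact_mod_cast cnt_pos s ω)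
      (by exact_mod_cast cnt_mono h ω)
  linarith

/-- The information density of `s` and `t` given `c`. -/
def mi (s t c : Setoid Ω) (ω : Ω) : ℝ :=
  Real.log (cnt (s ⊓ t) ω) + Real.log (cnt c ω) - Real.log (cnt s ω) - Real.log (cnt t ω)

lemma avg_mi (s t c : Setoid Ω) :
    avg (mi s t c) = ent s + ent t - ent (s ⊓ t) - ent c := by
  have : mi s t c = fun ω => Real.log (cnt (s ⊓ t) ω) + Real.log (cnt c ω) -
      Real.log (cnt s ω) - Real.log (cnt t ω) := rfl
  rw [this, avg_sub, avg_sub, avg_add]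
  unfold ent
  ring

open Classical in
lemma sum_class_mi_eq {s t c : Setoid Ω} (hs : s ≤ c) (ht : t ≤ c) (ω₀ : Ω) :
    ∑ ω with c ω ω₀, mi s t c ω =
    ∑ ω with c ω ω₀, Real.log
      (((Finset.univ.filter fun ω => c ω ω₀).filter fun ω' =>
          Quotient.mk s ω' = Quotient.mk s ω ∧ Quotient.mk t ω' = Quotient.mk t ω).card /
      (((Finset.univ.filter fun ω => c ω ω₀).filter fun ω' =>
          Quotient.mk s ω' = Quotient.mk s ω).card *
       ((Finset.univ.filter fun ω => c ω ω₀).filter fun ω' =>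
          Quotient.mk t ω' = Quotient.mk t ω).card /
        (Finset.univ.filter fun ω => c ω ω₀).card)) := by
  refine Finset.sum_congr rfl fun ω hω => ?_
  have hω : c ω ω₀ := (Finset.mem_filter.1 hω).2
  have e1 : ((Finset.univ.filter fun ω => c ω ω₀).filter fun ω' =>
      Quotient.mk s ω' = Quotient.mk s ω) = Finset.univ.filter fun ω' => s ω' ω := by
    ext x
    simp only [Finset.mem_filter, Finset.mem_univ, true_and, Quotient.eq]
    exact ⟨fun h => h.2, fun h => ⟨c.trans' (hs h) hω, h⟩⟩
  have e2 : ((Finset.univ.filter fun ω => c ω ω₀).filter fun ω' =>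
      Quotient.mk t ω' = Quotient.mk t ω) = Finset.univ.filter fun ω' => t ω' ω := by
    ext x
    simp only [Finset.mem_filter, Finset.mem_univ, true_and, Quotient.eq]
    exact ⟨fun h => h.2, fun h => ⟨c.trans' (ht h) hω, h⟩⟩
  have e3 : ((Finset.univ.filter fun ω => c ω ω₀).filter fun ω' =>
      Quotient.mk s ω' = Quotient.mk s ω ∧ Quotient.mk t ω' = Quotient.mk t ω) =
      Finset.univ.filter fun ω' => (s ⊓ t) ω' ω := by
    ext x
    simp only [Finset.mem_filter, Finset.mem_univ, true_and, Quotient.eq]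
    exact ⟨fun h => h.2, fun h => ⟨c.trans' (hs h.1) hω, h⟩⟩
  rw [e1, e2, e3]
  have hc : (Finset.univ.filter fun ω => c ω ω₀).card = cnt c ω := (cnt_congr c hω).symm
  rw [hc]
  change _ = Real.log ((cnt (s ⊓ t) ω : ℝ) / (cnt s ω * cnt t ω / cnt c ω))
  have h1 : (cnt (s ⊓ t) ω : ℝ) ≠ 0 := by exact_mod_cast (cnt_pos _ ω).ne'
  have h2 : (cnt s ω : ℝ) ≠ 0 := by exact_mod_cast (cnt_pos _ ω).ne'
  have h3 : (cnt t ω : ℝ) ≠ 0 := by exact_mod_cast (cnt_pos _ ω).ne'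
  have h4 : (cnt c ω : ℝ) ≠ 0 := by exact_mod_cast (cnt_pos _ ω).ne'
  rw [Real.log_div h1 (by positivity), Real.log_div (by positivity) h4, Real.log_mul h2 h3]
  unfold mi
  ring

open Classical in
lemma sum_class_mi_nonneg {s t c : Setoid Ω} (hs : s ≤ c) (ht : t ≤ c) (ω₀ : Ω) :
    0 ≤ ∑ ω with c ω ω₀, mi s t c ω := by
  rw [sum_class_mi_eq hs ht]
  refine le_trans ?_ (sum_sqrt_sub_sq_le_sum_log _ _ _)
  exact Finset.sum_nonneg fun x _ => Finset.sum_nonneg fun y _ => sq_nonneg _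

open Classical in
lemma abs_sum_class_sub_le {s t c : Setoid Ω} (hs : s ≤ c) (ht : t ≤ c) {ω₀ ω₁ : Ω}
    (h₁ : c ω₁ ω₀) (φ : Ω → ℝ) (hφ : ∀ ω, |φ ω| ≤ 1) (hφs : ∀ ω ω', s ω ω' → φ ω = φ ω') :
    |∑ ω with t ω ω₁, φ ω - cnt t ω₁ / cnt c ω₀ * ∑ ω with c ω ω₀, φ ω| ≤
      2 * √(cnt c ω₀ * ∑ ω with c ω ω₀, mi s t c ω) := by
  rw [sum_class_mi_eq hs ht]
  have h := abs_sum_filter_sub_le (Finset.univ.filter fun ω => c ω ω₀) (Quotient.mk s)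
    (Quotient.mk t) (fun x => Quotient.lift φ hφs x)
    (fun x => Quotient.inductionOn x fun ω => hφ ω) (y := Quotient.mk t ω₁)
    (Finset.mem_image_of_mem _ (by simpa using h₁))
  have e2 : ((Finset.univ.filter fun ω => c ω ω₀).filter fun ω' =>
      Quotient.mk t ω' = Quotient.mk t ω₁) = Finset.univ.filter fun ω' => t ω' ω₁ := by
    ext x
    simp only [Finset.mem_filter, Finset.mem_univ, true_and, Quotient.eq]
    exact ⟨fun h => h.2, fun h => ⟨c.trans' (ht h) h₁, h⟩⟩
  rw [e2] at h
  exact h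

open Classical in
lemma sum_eq_sum_class (c : Setoid Ω) (f : Ω → ℝ) :
    ∑ ω, (∑ ω' with c ω' ω, f ω') / cnt c ω = ∑ ω, f ω := by
  simp_rw [Finset.sum_div, Finset.sum_filter]
  rw [Finset.sum_comm]
  refine Finset.sum_congr rfl fun ω _ => ?_
  have : ∀ ω' ∈ Finset.univ, (if c ω ω' then f ω / cnt c ω' else 0) =
      if c ω' ω then f ω / cnt c ω else 0 := by
    intro ω' _
    by_cases h : c ω ω'
    · rw [if_pos h, if_pos (c.symm' h), cnt_congr c h]
    · rw [if_neg h, if_neg fun h' => h (c.symm' h')]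
  rw [Finset.sum_congr rfl this, ← Finset.sum_filter, Finset.sum_const, nsmul_eq_mul]
  change (cnt c ω : ℝ) * _ = _
  have : (cnt c ω : ℝ) ≠ 0 := by exact_mod_cast (cnt_pos _ ω).ne'
  field_simp

open Classical in
lemma avg_class (c : Setoid Ω) (f : Ω → ℝ) :
    avg (fun ω => (∑ ω' with c ω' ω, f ω') / cnt c ω) = avg f := by
  unfold avg
  rw [sum_eq_sum_class]

/-- Submodularity of entropy. -/
lemma ent_submod {s t c : Setoid Ω} (hs : s ≤ c) (ht : t ≤ c) :
    ent (s ⊓ t) + ent c ≤ ent s + ent t := by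
  classical
  have h : 0 ≤ avg (mi s t c) := by
    rw [← avg_class c]
    exact avg_nonneg fun ω => div_nonneg (sum_class_mi_nonneg hs ht ω) (Nat.cast_nonneg _)
  rw [avg_mi] at h
  linarith

open Classical in
/-- The number of `s`-classes inside the `t`-class of `ω` (for `s ≤ t`). -/
def ncl (s t : Setoid Ω) (ω : Ω) : ℕ :=
  ((Finset.univ.filter fun ω' => t ω' ω).image (Quotient.mk s)).card

lemma ncl_pos (s t : Setoid Ω) (ω : Ω) : 0 < ncl s t ω := by
  classical
  exact Finset.card_pos.2 ⟨_, Finset.mem_image_of_mem _ (by simp : ω ∈ _)⟩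

lemma ncl_le {α : Type*} {s t : Setoid Ω} {ω : Ω} (X : Ω → α) (A : Finset α)
    (hA : ∀ ω', t ω' ω → X ω' ∈ A)
    (hX : ∀ ω₁ ω₂, t ω₁ ω → t ω₂ ω → X ω₁ = X ω₂ → s ω₁ ω₂) : ncl s t ω ≤ A.card := by
  classical
  have h : ∀ p ∈ (Finset.univ.filter fun ω' => t ω' ω).image (Quotient.mk s),
      ∃ ω', t ω' ω ∧ Quotient.mk s ω' = p := by
    intro p hp
    obtain ⟨ω', h1, h2⟩ := Finset.mem_image.1 hp
    exact ⟨ω', (Finset.mem_filter.1 h1).2, h2⟩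
  have : Nonempty Ω := ⟨ω⟩
  choose! f hf1 hf2 using h
  refine Finset.card_le_card_of_injOn (fun p => X (f p)) (fun p hp => hA _ (hf1 p hp)) ?_
  intro p hp p' hp' e
  rw [← hf2 p hp, ← hf2 p' hp', Quotient.eq]
  exact hX _ _ (hf1 p hp) (hf1 p' hp') e

open Classical in
/-- Conditional entropy is at most the average logarithm of the number of classes. -/
lemma ent_sub_le {s t : Setoid Ω} (h : s ≤ t) :
    ent s - ent t ≤ avg fun ω => Real.log (ncl s t ω) := by
  have e : ent s - ent t = avg fun ω => Real.log (cnt t ω) - Real.log (cnt s ω) := by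
    rw [avg_sub]; unfold ent; ring
  rw [e, ← avg_class t, ← avg_class t fun ω => Real.log (ncl s t ω)]
  refine avg_mono fun ω => div_le_div_of_nonneg_right ?_ (Nat.cast_nonneg _)
  set S := Finset.univ.filter fun ω' => t ω' ω with hS
  have hK : ∀ ω' ∈ S, (ncl s t ω' : ℝ) = ncl s t ω := by
    intro ω' hω'
    have h1 := (Finset.mem_filter.1 hω').2
    have : (Finset.univ.filter fun x => t x ω') = Finset.univ.filter fun x => t x ω := by
      ext x
      simp only [Finset.mem_filter, Finset.mem_univ, true_and]
      exact ⟨fun hx => t.trans' hx h1, fun hx => t.trans' hx (t.symm' h1)⟩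
    unfold ncl
    rw [this]
  have hN : ∀ ω' ∈ S, (cnt t ω' : ℝ) = S.card := by
    intro ω' hω'
    exact_mod_cast cnt_congr t (Finset.mem_filter.1 hω').2
  have hKpos : (0 : ℝ) < ncl s t ω := by exact_mod_cast ncl_pos s t ω
  have hNpos : (0 : ℝ) < S.card := by
    have : 0 < cnt t ω := cnt_pos t ω
    exact_mod_cast this
  have hpt : ∀ ω' ∈ S, Real.log (cnt t ω') - Real.log (cnt s ω') ≤
      S.card / ncl s t ω * (cnt s ω' : ℝ)⁻¹ - 1 + Real.log (ncl s t ω') := by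
    intro ω' hω'
    have hc : (0 : ℝ) < cnt s ω' := by exact_mod_cast cnt_pos s ω'
    rw [hN ω' hω', hK ω' hω']
    have := Real.log_le_sub_one_of_pos (x := S.card / ncl s t ω * (cnt s ω' : ℝ)⁻¹)
      (by positivity)
    rw [Real.log_mul (by positivity) (by positivity), Real.log_div (by positivity) (by positivity),
      Real.log_inv] at this
    linarith
  have hcount : ∑ ω' ∈ S, (cnt s ω' : ℝ)⁻¹ = ncl s t ω := by
    have h1 : ∀ ω' ∈ S, Quotient.mk s ω' ∈ S.image (Quotient.mk s) :=
      fun ω' hω' => Finset.mem_image_of_mem _ hω'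
    rw [← Finset.sum_fiberwise_of_maps_to h1]
    have h2 : ∀ p ∈ S.image (Quotient.mk s),
        ∑ ω' ∈ S with Quotient.mk s ω' = p, (cnt s ω' : ℝ)⁻¹ = 1 := by
      intro p hp
      obtain ⟨ω₁, hω₁, rfl⟩ := Finset.mem_image.1 hp
      have h3 : S.filter (fun ω' => Quotient.mk s ω' = Quotient.mk s ω₁) =
          Finset.univ.filter fun ω' => s ω' ω₁ := by
        ext x
        simp only [hS, Finset.mem_filter, Finset.mem_univ, true_and, Quotient.eq]
        exact ⟨fun hx => hx.2, fun hx => ⟨t.trans' (h hx) (Finset.mem_filter.1 hω₁).2, hx⟩⟩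
      rw [h3]
      have h4 : ∀ x ∈ Finset.univ.filter (fun ω' => s ω' ω₁), (cnt s x : ℝ)⁻¹ =
          (cnt s ω₁ : ℝ)⁻¹ := fun x hx => by rw [cnt_congr s (Finset.mem_filter.1 hx).2]
      rw [Finset.sum_congr rfl h4, Finset.sum_const, nsmul_eq_mul]
      exact mul_inv_cancel₀ (by exact_mod_cast (cnt_pos s ω₁).ne')
    rw [Finset.sum_congr rfl h2]
    simp only [Finset.sum_const, nsmul_eq_mul, mul_one]
    rfl
  refine (Finset.sum_le_sum hpt).trans ?_
  rw [Finset.sum_add_distrib, Finset.sum_sub_distrib, ← Finset.mul_sum, hcount]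
  simp only [Finset.sum_const, nsmul_eq_mul, mul_one]
  have : (S.card : ℝ) / ncl s t ω * ncl s t ω = S.card := by field_simp
  linarith

end Entropy

/-- Conditional means of a test function, normalised. -/
lemma abs_mean_sub_mean_le {b N τ e x y : ℝ} (hN : 0 < N) (hτ : 0 < τ) (hb : τ * N ≤ b)
    (h : |x - b / N * y| ≤ e * N) : |x / b - y / N| ≤ e / τ := by
  have hb' : 0 < b := lt_of_lt_of_le (by positivity) hb
  have he : 0 ≤ e := by
    by_contra hc
    have := abs_nonneg (x - b / N * y)
    nlinarith
  have e1 : x / b - y / N = (x - b / N * y) / b := by field_simp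
  rw [e1, abs_div, abs_of_pos hb']
  calc _ ≤ e * N / b := by gcongr
    _ ≤ e * N / (τ * N) := by gcongr
    _ = e / τ := by field_simp

/-- If `U` and `U'` are both almost independent of `Y` and `U' ≈ U + g Y`, then the law of `U` is
almost invariant under the translation by `g (y₁ - y₀)`. -/
lemma abs_mean_translate_sub_le {Ω : Type*} (S : Finset Ω) (hS : S.Nonempty)
    (U U' : Ω → ℝ) (Y : Ω → ℤ) {g e τ : ℝ} {y₀ y₁ : ℤ} (hτ : 0 < τ)
    (hUU' : ∀ ω ∈ S, |U' ω - U ω - g * Y ω| ≤ 2)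
    (hb : ∀ y ∈ ({y₀, y₁} : Set ℤ), τ * S.card ≤ (S.filter fun ω => Y ω = y).card)
    (hU : ∀ y ∈ ({y₀, y₁} : Set ℤ), ∀ Φ : ℝ → ℝ, (∀ v, |Φ v| ≤ 1) →
      |∑ ω ∈ S with Y ω = y, Φ (U ω) -
        (S.filter fun ω => Y ω = y).card / S.card * ∑ ω ∈ S, Φ (U ω)| ≤ e * S.card)
    (hU' : ∀ y ∈ ({y₀, y₁} : Set ℤ), ∀ Φ : ℝ → ℝ, (∀ v, |Φ v| ≤ 1) →
      |∑ ω ∈ S with Y ω = y, Φ (U' ω) -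
        (S.filter fun ω => Y ω = y).card / S.card * ∑ ω ∈ S, Φ (U' ω)| ≤ e * S.card)
    {κ : ℝ} (Φ : ℝ → ℝ) (hΦ : ∀ v, |Φ v| ≤ 1) (hL : ∀ v w, |Φ v - Φ w| ≤ κ * |v - w|) :
    |(∑ ω ∈ S, Φ (U ω + g * (y₁ - y₀))) / S.card - (∑ ω ∈ S, Φ (U ω)) / S.card| ≤
      4 * (e / τ) + 4 * κ := by
  have hN : (0 : ℝ) < S.card := by exact_mod_cast hS.card_pos
  have hκ : 0 ≤ κ := by
    have := (abs_nonneg _).trans (hL 1 0)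
    simpa using this
  set Ψ : ℝ → ℝ := fun v => Φ (v - g * y₀) with hΨ
  have hΨ1 : ∀ v, |Ψ v| ≤ 1 := fun v => hΦ _
  have hΨL : ∀ v w, |Ψ v - Ψ w| ≤ κ * |v - w| := fun v w => by
    have := hL (v - g * y₀) (w - g * y₀)
    simpa [hΨ] using this
  have main : ∀ y ∈ ({y₀, y₁} : Set ℤ),
      |(∑ ω ∈ S, Ψ (U ω + g * y)) / S.card - (∑ ω ∈ S, Ψ (U' ω)) / S.card| ≤
        2 * (e / τ) + 2 * κ := by
    intro y hy
    set b : ℝ := ((S.filter fun ω => Y ω = y).card : ℝ)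
    have hb' : 0 < b := lt_of_lt_of_le (by positivity) (hb y hy)
    have h1 := abs_mean_sub_mean_le hN hτ (hb y hy)
      (hU y hy (fun v => Ψ (v + g * y)) fun v => hΨ1 _)
    have h2 := abs_mean_sub_mean_le hN hτ (hb y hy) (hU' y hy Ψ hΨ1)
    have h3 : |(∑ ω ∈ S with Y ω = y, Ψ (U ω + g * y)) / b -
        (∑ ω ∈ S with Y ω = y, Ψ (U' ω)) / b| ≤ 2 * κ := by
      rw [← sub_div, abs_div, abs_of_pos hb', div_le_iff₀ hb', ← Finset.sum_sub_distrib]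
      refine (Finset.abs_sum_le_sum_abs _ _).trans ?_
      calc _ ≤ ∑ ω ∈ S with Y ω = y, 2 * κ := by
            refine Finset.sum_le_sum fun ω hω => (hΨL _ _).trans ?_
            obtain ⟨hω1, hω2⟩ := Finset.mem_filter.1 hω
            have h4 := hUU' ω hω1
            rw [hω2, show U' ω - U ω - g * y = -(U ω + g * y - U' ω) by ring, abs_neg] at h4
            nlinarith
        _ = _ := by rw [Finset.sum_const, nsmul_eq_mul, mul_comm]
    rw [abs_le] at h1 h2 h3 ⊢
    constructor <;> linarith [h1.1, h1.2, h2.1, h2.2, h3.1, h3.2]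
  have h0 := main y₀ (by simp)
  have h1 := main y₁ (by simp)
  have e0 : ∀ ω, Ψ (U ω + g * y₀) = Φ (U ω) := fun ω => by simp [hΨ]
  have e1 : ∀ ω, Ψ (U ω + g * y₁) = Φ (U ω + g * (y₁ - y₀)) := fun ω => by
    simp only [hΨ]; congr 1; ring
  simp only [e0, e1] at h0 h1
  rw [abs_le] at h0 h1 ⊢
  constructor <;> linarith [h0.1, h0.2, h1.1, h1.2]

/-- A law cannot be almost invariant under translation by `h` if its support is porous along
arithmetic progressions of step `h`. -/
lemma not_porous_of_almost_invariant {Ω : Type*} (S : Finset Ω) (hS : S.Nonempty)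
    (U : Ω → ℝ) {h ε : ℝ} (hh : 0 < h) {L : ℕ} (hL : 0 < L) (hLε : L * ε < 1 / 2)
    (hinv : ∀ Φ : ℝ → ℝ, (∀ v, |Φ v| ≤ 1) → (∀ v w, |Φ v - Φ w| ≤ 4 / h * |v - w|) →
      |(∑ ω ∈ S, Φ (U ω + h)) / S.card - (∑ ω ∈ S, Φ (U ω)) / S.card| ≤ ε)
    (hpor : ∀ v : ℝ, ∀ I : Finset ℕ, (∀ i ∈ I, i < L) →
      (∀ i ∈ I, ∃ ω ∈ S, |v + i * h - U ω| < h / 4) → (I.card : ℝ) ≤ L / 2) : False := by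
  classical
  have hN : (0 : ℝ) < S.card := by exact_mod_cast hS.card_pos
  set N : Set ℝ := U '' S with hNdef
  have hNne : N.Nonempty := by
    obtain ⟨ω, hω⟩ := hS
    exact ⟨_, ω, hω, rfl⟩
  set Φ : ℝ → ℝ := fun v => max (1 - 4 / h * infDist v N) 0 with hΦ
  have hΦ0 : ∀ v, 0 ≤ Φ v := fun v => le_max_right _ _
  have hΦ1 : ∀ v, Φ v ≤ 1 := fun v => max_le (by
    have : 0 ≤ 4 / h * infDist v N := mul_nonneg (by positivity) infDist_nonneg
    linarith) zero_le_one
  have hΦL : ∀ v w, |Φ v - Φ w| ≤ 4 / h * |v - w| := by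
    intro v w
    refine (abs_max_sub_max_le_abs _ _ _).trans ?_
    have h1 : |infDist v N - infDist w N| ≤ |v - w| := by
      have := (lipschitz_infDist_pt N).dist_le_mul v w
      simpa [Real.dist_eq] using this
    calc _ = 4 / h * |infDist v N - infDist w N| := by
          rw [show 1 - 4 / h * infDist v N - (1 - 4 / h * infDist w N) =
            -(4 / h * (infDist v N - infDist w N)) by ring, abs_neg, abs_mul,
            abs_of_pos (by positivity : 0 < 4 / h)]
      _ ≤ _ := by gcongr
  have hΦS : ∀ ω ∈ S, Φ (U ω) = 1 := by
    intro ω hω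
    have : infDist (U ω) N = 0 := infDist_zero_of_mem ⟨ω, hω, rfl⟩
    simp [hΦ, this]
  have hε : 0 ≤ ε := (abs_nonneg _).trans (hinv (fun _ => 0) (by simp) (by
    intro v w; simp; positivity))
  have hiter : ∀ i : ℕ, 1 - i * ε ≤ (∑ ω ∈ S, Φ (U ω + i * h)) / S.card := by
    intro i
    induction i with
    | zero =>
      simp only [Nat.cast_zero, zero_mul, add_zero, sub_zero]
      rw [Finset.sum_congr rfl hΦS]
      simp [hN.ne']
    | succ i ih =>
      have := hinv (fun v => Φ (v + i * h)) (fun v => by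
          rw [abs_of_nonneg (hΦ0 _)]; exact hΦ1 _) (fun v w => by
          have := hΦL (v + i * h) (w + i * h)
          simpa using this)
      have e : ∀ ω, U ω + ((i + 1 : ℕ) : ℝ) * h = U ω + h + i * h := fun ω => by
        push_cast; ring
      simp only [e]
      push_cast
      rw [abs_le] at this
      linarith [this.1]
  have hlow : (L : ℝ) / 2 < ∑ i ∈ Finset.range L, (∑ ω ∈ S, Φ (U ω + i * h)) / S.card := by
    have hL' : (0 : ℝ) < L := by exact_mod_cast hL
    calc (L : ℝ) / 2 < L * (1 - L * ε) := by nlinarith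
      _ = ∑ i ∈ Finset.range L, (1 - L * ε) := by rw [Finset.sum_const, Finset.card_range, nsmul_eq_mul]
      _ ≤ _ := by
        refine Finset.sum_le_sum fun i hi => le_trans ?_ (hiter i)
        have : (i : ℝ) ≤ L := by exact_mod_cast (Finset.mem_range.1 hi).le
        nlinarith
  have hup : ∑ i ∈ Finset.range L, (∑ ω ∈ S, Φ (U ω + i * h)) / S.card ≤ (L : ℝ) / 2 := by
    rw [← Finset.sum_div, Finset.sum_comm, div_le_iff₀ hN]
    calc _ ≤ ∑ ω ∈ S, (L : ℝ) / 2 := by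
          refine Finset.sum_le_sum fun ω hω => ?_
          set I := (Finset.range L).filter fun i : ℕ => 0 < Φ (U ω + i * h) with hI
          have h1 : ∑ i ∈ Finset.range L, Φ (U ω + i * h) ≤ I.card := by
            rw [← Finset.sum_filter_add_sum_filter_not (Finset.range L)
              (fun i : ℕ => 0 < Φ (U ω + i * h))]
            have h2 : ∑ i ∈ Finset.range L with ¬ 0 < Φ (U ω + (i : ℕ) * h),
                Φ (U ω + i * h) ≤ 0 := by
              refine Finset.sum_nonpos fun i hi => ?_
              exact not_lt.1 (Finset.mem_filter.1 hi).2
            have h3 : ∑ i ∈ I, Φ (U ω + i * h) ≤ I.card := by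
              calc _ ≤ ∑ i ∈ I, (1 : ℝ) := Finset.sum_le_sum fun i _ => hΦ1 _
                _ = _ := by simp
            linarith
          refine h1.trans (hpor (U ω) I (fun i hi => Finset.mem_range.1
            (Finset.mem_filter.1 hi).1) fun i hi => ?_)
          have h2 : 0 < 1 - 4 / h * infDist (U ω + i * h) N := by
            have := (Finset.mem_filter.1 hi).2
            simp only [hΦ, lt_max_iff, lt_irrefl, or_false] at this
            exact this
          have h3 : infDist (U ω + i * h) N < h / 4 := by
            rw [lt_div_iff₀ (by norm_num)]
            have : 4 / h * infDist (U ω + i * h) N * h = 4 * infDist (U ω + i * h) N := by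
              field_simp
            nlinarith
          obtain ⟨_, ⟨ω', hω', rfl⟩, h4⟩ := (infDist_lt_iff hNne).1 h3
          exact ⟨ω', hω', by simpa [Real.dist_eq] using h4⟩
      _ = _ := by rw [Finset.sum_const, nsmul_eq_mul, mul_comm]
  linarith

section Floor

lemma floor_eq_floor_of_refine {n m : ℕ} {a b : ℝ} (h : ⌊2 ^ (n + m) * a⌋ = ⌊2 ^ (n + m) * b⌋) :
    ⌊2 ^ n * a⌋ = ⌊2 ^ n * b⌋ := by
  have key : ∀ v : ℝ, ⌊2 ^ n * v⌋ = ⌊2 ^ (n + m) * v⌋ / ((2 ^ m : ℕ) : ℤ) := fun v => by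
    rw [← Int.floor_div_natCast]
    congr 1
    push_cast
    rw [pow_add]
    field_simp
  rw [key, key, h]

lemma floor_mem_Icc {a b : ℝ} {N : ℤ} (h : |a - b| ≤ N) :
    ⌊a⌋ ∈ Finset.Icc (⌊b⌋ - N) (⌊b⌋ + N) := by
  rw [abs_le] at h
  rw [Finset.mem_Icc, Int.le_floor]
  constructor
  · push_cast
    linarith [Int.floor_le b]
  · rw [← Int.floor_add_intCast]
    exact Int.floor_le_floor (by linarith)

lemma card_Icc_sub_add (a : ℤ) (N : ℕ) : (Finset.Icc (a - N) (a + N)).card = 2 * N + 1 := by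
  rw [Int.card_Icc]
  omega

end Floor

/-- The finite set `A` has small projections in direction `(1, t)` at scales above `ρ₀`. -/
def ProjBound (A : Finset (ℝ × ℝ)) (t C α ρ₀ : ℝ) : Prop :=
  ∀ B ⊆ A, ∀ ρ R, ρ₀ ≤ ρ → ρ ≤ R →
    (∀ z ∈ B, ∀ z' ∈ B, z ≠ z' → ρ ≤ |(z.1 + t * z.2) - (z'.1 + t * z'.2)| ∧
      |(z.1 + t * z.2) - (z'.1 + t * z'.2)| ≤ R) → (B.card : ℝ) ≤ C * (R / ρ) ^ α

lemma ProjBound.card_le {A : Finset (ℝ × ℝ)} {t C α ρ₀ : ℝ} (h : ProjBound A t C α ρ₀)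
    (hρ₀ : 0 < ρ₀) {ι : Type*} (I : Finset ι) (z : ι → ℝ × ℝ) (hz : ∀ i ∈ I, z i ∈ A)
    {ρ R : ℝ} (hρ : ρ₀ ≤ ρ) (hR : ρ ≤ R)
    (hsep : ∀ i ∈ I, ∀ i' ∈ I, i ≠ i' →
      ρ ≤ |((z i).1 + t * (z i).2) - ((z i').1 + t * (z i').2)| ∧
      |((z i).1 + t * (z i).2) - ((z i').1 + t * (z i').2)| ≤ R) :
    (I.card : ℝ) ≤ C * (R / ρ) ^ α := by
  classical
  have hinj : Set.InjOn z I := by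
    intro i hi i' hi' e
    by_contra hne
    have := (hsep i hi i' hi' hne).1
    rw [e, sub_self, abs_zero] at this
    linarith
  rw [← Finset.card_image_of_injOn hinj]
  refine h _ (fun x hx => ?_) ρ R hρ hR ?_
  · obtain ⟨i, hi, rfl⟩ := Finset.mem_image.1 hx
    exact hz i hi
  · intro x hx x' hx' hne
    obtain ⟨i, hi, rfl⟩ := Finset.mem_image.1 hx
    obtain ⟨i', hi', rfl⟩ := Finset.mem_image.1 hx'
    exact hsep i hi i' hi' fun e => hne (by rw [e])

section Space

/-- The points of `A` together with a random horizontal shift. -/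
abbrev Sp (A : Finset (ℝ × ℝ)) (K : ℕ) := {z // z ∈ A} × Fin (2 ^ K)

variable {A : Finset (ℝ × ℝ)} {K : ℕ}

/-- The shifted abscissa. -/
def xc (ω : Sp A K) : ℝ := ω.1.1.1 + (ω.2 : ℕ) / 2 ^ K

/-- The ordinate. -/
def yc (ω : Sp A K) : ℝ := ω.1.1.2

/-- The partition into dyadic squares of side `2⁻ʲ` (and according to the shift). -/
def Qs (A : Finset (ℝ × ℝ)) (K j : ℕ) : Setoid (Sp A K) :=
  Setoid.ker fun ω => (ω.2, ⌊2 ^ j * xc ω⌋, ⌊2 ^ j * yc ω⌋)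

/-- The partition into strips of width `2⁻ⁿ` for the projection `x + t y`. -/
def Ts (A : Finset (ℝ × ℝ)) (K : ℕ) (t : ℝ) (n : ℕ) : Setoid (Sp A K) :=
  Setoid.ker fun ω => ⌊2 ^ n * (xc ω + t * yc ω)⌋

/-- The partition into horizontal strips of width `2⁻ⁿ`. -/
def Ys (A : Finset (ℝ × ℝ)) (K n : ℕ) : Setoid (Sp A K) :=
  Setoid.ker fun ω => ⌊2 ^ n * yc ω⌋

lemma Qs_iff {j : ℕ} {ω ω' : Sp A K} : Qs A K j ω ω' ↔
    ω.2 = ω'.2 ∧ ⌊2 ^ j * xc ω⌋ = ⌊2 ^ j * xc ω'⌋ ∧ ⌊2 ^ j * yc ω⌋ = ⌊2 ^ j * yc ω'⌋ := by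
  rw [Qs, Setoid.ker_def, Prod.mk.injEq, Prod.mk.injEq]

lemma Ts_iff {t : ℝ} {n : ℕ} {ω ω' : Sp A K} : Ts A K t n ω ω' ↔
    ⌊2 ^ n * (xc ω + t * yc ω)⌋ = ⌊2 ^ n * (xc ω' + t * yc ω')⌋ := Iff.rfl

lemma Ys_iff {n : ℕ} {ω ω' : Sp A K} : Ys A K n ω ω' ↔
    ⌊2 ^ n * yc ω⌋ = ⌊2 ^ n * yc ω'⌋ := Iff.rfl

lemma Qs_anti (j m : ℕ) : Qs A K (j + m) ≤ Qs A K j := by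
  intro ω ω' h
  obtain ⟨h1, h2, h3⟩ := Qs_iff.1 h
  exact Qs_iff.2 ⟨h1, floor_eq_floor_of_refine h2, floor_eq_floor_of_refine h3⟩

lemma Ts_anti (t : ℝ) (n m : ℕ) : Ts A K t (n + m) ≤ Ts A K t n :=
  fun _ _ h => floor_eq_floor_of_refine h

lemma Qs_le_Ys (j : ℕ) : Qs A K j ≤ Ys A K j := fun _ _ h => (Qs_iff.1 h).2.2

lemma abs_two_pow_mul_sub_lt {n : ℕ} {a b : ℝ} (h : ⌊2 ^ n * a⌋ = ⌊2 ^ n * b⌋) :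
    2 ^ n * |a - b| < 1 := by
  have := Int.abs_sub_lt_one_of_floor_eq_floor h
  rwa [← mul_sub, abs_mul, abs_of_pos (by positivity : (0 : ℝ) < 2 ^ n)] at this

lemma abs_proj_sub_lt {j : ℕ} {t : ℝ} (ht : |t| ≤ 1) {ω ω' : Sp A K} (h : Qs A K j ω ω') :
    2 ^ j * |(xc ω + t * yc ω) - (xc ω' + t * yc ω')| < 2 := by
  obtain ⟨h1, h2, h3⟩ := Qs_iff.1 h
  have h2 := abs_two_pow_mul_sub_lt h2
  have h3 := abs_two_pow_mul_sub_lt h3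
  have : |(xc ω + t * yc ω) - (xc ω' + t * yc ω')| ≤ |xc ω - xc ω'| + |yc ω - yc ω'| := by
    rw [show (xc ω + t * yc ω) - (xc ω' + t * yc ω') = (xc ω - xc ω') + t * (yc ω - yc ω') by ring]
    refine (abs_add_le _ _).trans ?_
    rw [abs_mul]
    have := mul_le_mul_of_nonneg_right ht (abs_nonneg (yc ω - yc ω'))
    linarith
  have := mul_le_mul_of_nonneg_left this (by positivity : (0 : ℝ) ≤ 2 ^ j)
  linarith

/-- The conditional entropy of the projection at scale `2^{-(j+m)}` given the square of side
`2⁻ʲ`. -/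
def cH (A : Finset (ℝ × ℝ)) (K : ℕ) (t : ℝ) (j m : ℕ) : ℝ :=
  ent (Ts A K t (j + m) ⊓ Qs A K j) - ent (Qs A K j)

lemma cH_nonneg (t : ℝ) (j m : ℕ) : 0 ≤ cH A K t j m :=
  sub_nonneg.2 (ent_anti inf_le_right)

lemma ent_sub_le_log [Nonempty (Sp A K)] {s t : Setoid (Sp A K)} (h : s ≤ t) {B : ℝ}
    (hB : ∀ ω, (ncl s t ω : ℝ) ≤ B) : ent s - ent t ≤ Real.log B := by
  refine (ent_sub_le h).trans ?_
  rw [← avg_const (Ω := Sp A K) (Real.log B)]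
  exact avg_mono fun ω => Real.log_le_log (by exact_mod_cast ncl_pos s t ω) (hB ω)

lemma cH_le [Nonempty (Sp A K)] {t : ℝ} (ht : |t| ≤ 1) (j m : ℕ) :
    cH A K t j m ≤ (m + 3) * Real.log 2 := by
  have : (m + 3) * Real.log 2 = Real.log (2 ^ (m + 3)) := by
    rw [Real.log_pow]; push_cast; ring
  rw [this]
  refine ent_sub_le_log inf_le_right fun ω => ?_
  have h := ncl_le (s := Ts A K t (j + m) ⊓ Qs A K j) (t := Qs A K j) (ω := ω)
    (fun ω => ⌊2 ^ (j + m) * (xc ω + t * yc ω)⌋)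
    (Finset.Icc (⌊2 ^ (j + m) * (xc ω + t * yc ω)⌋ - (2 ^ (m + 1) : ℕ))
      (⌊2 ^ (j + m) * (xc ω + t * yc ω)⌋ + (2 ^ (m + 1) : ℕ)))
    (fun ω' hω' => by
      refine floor_mem_Icc ?_
      rw [← mul_sub, abs_mul, abs_of_pos (by positivity : (0 : ℝ) < 2 ^ (j + m))]
      have := abs_proj_sub_lt ht hω'
      push_cast
      have h2 := mul_lt_mul_of_pos_left this (by positivity : (0 : ℝ) < 2 ^ m)
      rw [pow_add, pow_succ]
      linarith)
    (fun ω₁ ω₂ h1 h2 e => ⟨e, (Qs A K j).trans' h1 ((Qs A K j).symm' h2)⟩)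
  rw [card_Icc_sub_add] at h
  have h2 : 2 * 2 ^ (m + 1) + 1 ≤ 2 ^ (m + 3) := by
    have : 1 ≤ 2 ^ m := Nat.one_le_two_pow
    rw [pow_succ, pow_succ, pow_succ, pow_succ]
    omega
  exact_mod_cast h.trans h2

lemma xc_sub_of_eq {ω ω' : Sp A K} (h : ω.2 = ω'.2) : xc ω - xc ω' = ω.1.1.1 - ω'.1.1.1 := by
  simp [xc, h]

lemma card_class_le {t C α : ℝ} {i : ℕ} (hP : ProjBound A t C α (1 / 2 ^ i)) (ht : |t| ≤ 1)
    {j m : ℕ} (hjm : j + m ≤ i) (ω : Sp A K) (W : Finset ℤ)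
    (hW : ∀ w ∈ W, ∃ ω', Qs A K j ω' ω ∧ ⌊2 ^ (j + m) * (xc ω' + t * yc ω')⌋ = w)
    (hpar : ∀ w ∈ W, ∀ w' ∈ W, w < w' → w + 2 ≤ w') :
    (W.card : ℝ) ≤ C * (2 ^ (m + 1)) ^ α := by
  have : Nonempty (Sp A K) := ⟨ω⟩
  choose! f hf1 hf2 using hW
  have h2 : (0 : ℝ) < 2 ^ (j + m) := by positivity
  have := hP.card_le (by positivity) W (fun w => (f w).1.1) (fun w _ => (f w).1.2)
    (ρ := 1 / 2 ^ (j + m)) (R := 2 / 2 ^ j)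
    (one_div_le_one_div_of_le (by positivity) (pow_le_pow_right₀ (by norm_num) hjm))
    (by
      rw [div_le_div_iff₀ (by positivity) (by positivity), pow_add]
      have : (1 : ℝ) ≤ 2 ^ m := one_le_pow₀ (by norm_num)
      have h3 : (0 : ℝ) < 2 ^ j := by positivity
      nlinarith)
    (by
      intro w hw w' hw' hne
      have hk : (f w).2 = (f w').2 :=
        (Qs_iff.1 (hf1 w hw)).1.trans (Qs_iff.1 (hf1 w' hw')).1.symm
      have e : ((f w).1.1.1 + t * (f w).1.1.2) - ((f w').1.1.1 + t * (f w').1.1.2) =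
          (xc (f w) + t * yc (f w)) - (xc (f w') + t * yc (f w')) := by
        have := xc_sub_of_eq hk
        simp only [yc]
        linarith
      rw [e]
      constructor
      · rw [div_le_iff₀ h2, mul_comm]
        rw [← abs_of_pos h2, ← abs_mul, mul_sub]
        set a := 2 ^ (j + m) * (xc (f w) + t * yc (f w)) with ha
        set b := 2 ^ (j + m) * (xc (f w') + t * yc (f w')) with hb
        have ea : ⌊a⌋ = w := hf2 w hw
        have eb : ⌊b⌋ = w' := hf2 w' hw'
        have a1 := Int.floor_le a
        have a2 := Int.lt_floor_add_one a
        have b1 := Int.floor_le b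
        have b2 := Int.lt_floor_add_one b
        rw [ea] at a1 a2
        rw [eb] at b1 b2
        rcases lt_or_gt_of_ne hne with hlt | hlt
        · have : (w : ℝ) + 2 ≤ w' := by exact_mod_cast hpar w hw w' hw' hlt
          rw [abs_sub_comm]
          exact le_trans (by linarith) (le_abs_self _)
        · have : (w' : ℝ) + 2 ≤ w := by exact_mod_cast hpar w' hw' w hw hlt
          exact le_trans (by linarith) (le_abs_self _)
      · rw [le_div_iff₀ (by positivity), mul_comm]
        exact (abs_proj_sub_lt ht ((Qs A K j).trans' (hf1 w hw)
          ((Qs A K j).symm' (hf1 w' hw')))).le)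
  convert this using 3
  rw [pow_succ, pow_add]
  field_simp

lemma cH_le_of_projBound [Nonempty (Sp A K)] {t C α : ℝ} (hC : 0 < C) {i : ℕ}
    (hP : ProjBound A t C α (1 / 2 ^ i)) (ht : |t| ≤ 1) {j m : ℕ} (hjm : j + m ≤ i) :
    cH A K t j m ≤ Real.log (2 * C) + α * ((m + 1) * Real.log 2) := by
  classical
  have e : Real.log (2 * C) + α * ((m + 1) * Real.log 2) =
      Real.log (2 * (C * (2 ^ (m + 1)) ^ α)) := by
    have h1 : ((2 : ℝ) ^ (m + 1)) ^ α ≠ 0 := by positivity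
    rw [← mul_assoc 2 C, Real.log_mul (by positivity) h1, Real.log_rpow (by positivity), Real.log_pow]
    push_cast
    ring
  rw [e]
  refine ent_sub_le_log inf_le_right fun ω => ?_
  set W := (Finset.univ.filter fun ω' => Qs A K j ω' ω).image
    (fun ω => ⌊2 ^ (j + m) * (xc ω + t * yc ω)⌋) with hWdef
  have h := ncl_le (s := Ts A K t (j + m) ⊓ Qs A K j) (t := Qs A K j) (ω := ω)
    (fun ω => ⌊2 ^ (j + m) * (xc ω + t * yc ω)⌋) W
    (fun ω' hω' => Finset.mem_image.2 ⟨ω', by simpa using hω', rfl⟩)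
    (fun ω₁ ω₂ h1 h2 e => ⟨e, (Qs A K j).trans' h1 ((Qs A K j).symm' h2)⟩)
  have hW : ∀ w ∈ W, ∃ ω', Qs A K j ω' ω ∧ ⌊2 ^ (j + m) * (xc ω' + t * yc ω')⌋ = w := by
    intro w hw
    obtain ⟨ω', h1, h2⟩ := Finset.mem_image.1 hw
    exact ⟨ω', (Finset.mem_filter.1 h1).2, h2⟩
  have h0 := card_class_le hP ht hjm ω (W.filter Even)
    (fun w hw => hW w (Finset.mem_filter.1 hw).1) (fun w hw w' hw' hlt => by
      obtain ⟨a, ha⟩ := (Finset.mem_filter.1 hw).2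
      obtain ⟨b, hb⟩ := (Finset.mem_filter.1 hw').2
      omega)
  have h1 := card_class_le hP ht hjm ω (W.filter fun w => ¬ Even w)
    (fun w hw => hW w (Finset.mem_filter.1 hw).1) (fun w hw w' hw' hlt => by
      obtain ⟨a, ha⟩ := Int.not_even_iff_odd.1 (Finset.mem_filter.1 hw).2
      obtain ⟨b, hb⟩ := Int.not_even_iff_odd.1 (Finset.mem_filter.1 hw').2
      omega)
  have h2 : ((W.filter Even).card : ℝ) + (W.filter fun w => ¬ Even w).card = W.card := by
    exact_mod_cast Finset.card_filter_add_card_filter_not _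
  have h3 : (ncl (Ts A K t (j + m) ⊓ Qs A K j) (Qs A K j) ω : ℝ) ≤ W.card := by exact_mod_cast h
  linarith

end Space

section Lattice

variable {Ω : Type*} [Fintype Ω]

lemma ent_data_processing {f Y Q B T : Setoid Ω} (hQ : Q ≤ Y) :
    ent (f ⊓ (B ⊓ T)) + ent (Y ⊓ (B ⊓ T)) - ent (f ⊓ (B ⊓ T) ⊓ (Y ⊓ (B ⊓ T))) - ent (B ⊓ T) ≤
      (ent (f ⊓ B) + ent (Q ⊓ B) - ent (f ⊓ B ⊓ (Q ⊓ B)) - ent B) +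
      (ent (T ⊓ (f ⊓ B)) - ent (f ⊓ B)) := by
  have h1 : ent (Y ⊓ (B ⊓ T)) + ent B ≤ ent (Y ⊓ B) + ent (B ⊓ T) := by
    have := ent_submod (s := Y ⊓ B) (t := B ⊓ T) (c := B) inf_le_right inf_le_left
    rwa [show Y ⊓ B ⊓ (B ⊓ T) = Y ⊓ (B ⊓ T) by rw [inf_assoc, ← inf_assoc B B, inf_idem]] at this
  have h2 : ent (f ⊓ B ⊓ Y) ≤ ent (f ⊓ (B ⊓ T) ⊓ (Y ⊓ (B ⊓ T))) :=
    ent_anti (le_inf (inf_le_left.trans (inf_le_inf_left _ inf_le_left))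
      (inf_le_right.trans inf_le_left))
  have h3 : ent (f ⊓ B ⊓ (Q ⊓ B)) + ent (Y ⊓ B) ≤ ent (Q ⊓ B) + ent (f ⊓ B ⊓ Y) := by
    have := ent_submod (s := Q ⊓ B) (t := f ⊓ B ⊓ Y) (c := Y ⊓ B)
      (inf_le_inf_right _ hQ) (le_inf inf_le_right (inf_le_left.trans inf_le_right))
    rwa [show Q ⊓ B ⊓ (f ⊓ B ⊓ Y) = f ⊓ B ⊓ (Q ⊓ B) from le_antisymm
      (le_inf (inf_le_right.trans inf_le_left) inf_le_left)
      (le_inf inf_le_right (le_inf inf_le_left ((inf_le_right.trans inf_le_left).trans hQ)))]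
      at this
  have h4 : ent (f ⊓ (B ⊓ T)) = ent (T ⊓ (f ⊓ B)) := by
    rw [← inf_assoc, inf_comm]
  linarith

lemma card_mul_eq_of_rotation {m : ℕ} [NeZero m] (f : Ω → ZMod m) (σ : Ω ≃ Ω)
    (hσ : ∀ ω, f (σ ω) = f ω + 1) (r : ZMod m) :
    m * (Finset.univ.filter fun ω => f ω = r).card = Fintype.card Ω := by
  have step : ∀ r, (Finset.univ.filter fun ω => f ω = r + 1).card =
      (Finset.univ.filter fun ω => f ω = r).card := by
    intro r
    refine (Finset.card_equiv σ fun ω => ?_).symm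
    simp [hσ]
  have all : ∀ n : ℕ, (Finset.univ.filter fun ω => f ω = (n : ZMod m)).card =
      (Finset.univ.filter fun ω => f ω = 0).card := by
    intro n
    induction n with
    | zero => simp
    | succ n ih => rw [Nat.cast_succ, step, ih]
  have all' : ∀ r, (Finset.univ.filter fun ω => f ω = r).card =
      (Finset.univ.filter fun ω => f ω = 0).card := by
    intro r
    rw [← ZMod.natCast_zmod_val r, all]
  have := Finset.card_eq_sum_card_fiberwise (f := f) (s := Finset.univ) (t := Finset.univ)
    (fun _ _ => Finset.mem_univ _)
  rw [Finset.card_univ, Finset.sum_congr rfl fun b _ => all' b, Finset.sum_const,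
    Finset.card_univ, ZMod.card, smul_eq_mul] at this
  rw [all' r, this]

lemma avg_indicator_eq (p : Ω → Prop) [DecidablePred p] :
    avg (fun ω => if p ω then (1 : ℝ) else 0) =
      (Finset.univ.filter p).card / Fintype.card Ω := by
  simp [avg, Finset.sum_boole]

end Lattice

section Space

variable {A : Finset (ℝ × ℝ)} {K : ℕ}

lemma avg_mi_proj (t : ℝ) (j n l q : ℕ) :
    avg (mi (Ts A K t (j + (n + l + q)) ⊓ (Qs A K j ⊓ Ts A K t (j + (n + l))))
      (Qs A K (j + l) ⊓ (Qs A K j ⊓ Ts A K t (j + (n + l))))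
      (Qs A K j ⊓ Ts A K t (j + (n + l)))) =
    (cH A K t j (n + l + q) - cH A K t j (n + l)) -
      (cH A K t (j + l) (n + q) - cH A K t (j + l) n) := by
  rw [avg_mi]
  have hT : Ts A K t (j + (n + l + q)) ≤ Ts A K t (j + (n + l)) := by
    rw [← add_assoc j]; exact Ts_anti _ _ _
  have hQ : Qs A K (j + l) ≤ Qs A K j := Qs_anti _ _
  have e1 : Ts A K t (j + (n + l + q)) ⊓ (Qs A K j ⊓ Ts A K t (j + (n + l))) =
      Ts A K t (j + (n + l + q)) ⊓ Qs A K j := le_antisymm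
    (inf_le_inf_left _ inf_le_left) (le_inf inf_le_left (le_inf inf_le_right
      (inf_le_left.trans hT)))
  have e2 : Qs A K (j + l) ⊓ (Qs A K j ⊓ Ts A K t (j + (n + l))) =
      Ts A K t (j + (n + l)) ⊓ Qs A K (j + l) := le_antisymm
    (le_inf (inf_le_right.trans inf_le_right) inf_le_left)
    (le_inf inf_le_right (le_inf (inf_le_right.trans hQ) inf_le_left))
  have e3 : Ts A K t (j + (n + l + q)) ⊓ Qs A K j ⊓ (Ts A K t (j + (n + l)) ⊓ Qs A K (j + l)) =
      Ts A K t (j + (n + l + q)) ⊓ Qs A K (j + l) := le_antisymm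
    (le_inf (inf_le_left.trans inf_le_left) (inf_le_right.trans inf_le_right))
    (le_inf (le_inf inf_le_left (inf_le_right.trans hQ)) (le_inf (inf_le_left.trans hT)
      inf_le_right))
  rw [e1, e2, e3]
  unfold cH
  rw [show j + l + (n + q) = j + (n + l + q) by ring, show j + l + n = j + (n + l) by ring,
    inf_comm (Qs A K j) (Ts A K t (j + (n + l)))]
  ring

lemma cH_convex (t : ℝ) (j n : ℕ) :
    cH A K t (j + 1) (n + 1) - cH A K t (j + 1) n ≤ cH A K t j (n + 2) - cH A K t j (n + 1) := by
  have h := avg_mi_proj (A := A) (K := K) t j n 1 1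
  have h2 := ent_submod
    (s := Ts A K t (j + (n + 1 + 1)) ⊓ (Qs A K j ⊓ Ts A K t (j + (n + 1))))
    (t := Qs A K (j + 1) ⊓ (Qs A K j ⊓ Ts A K t (j + (n + 1))))
    (c := Qs A K j ⊓ Ts A K t (j + (n + 1))) inf_le_right inf_le_right
  rw [avg_mi] at h
  linarith

lemma floor_eq_of_not_boundary {a : ℕ} {v v' : ℝ}
    (h0 : ((⌊2 ^ a * v⌋ : ℤ) : ZMod (2 ^ a)) ≠ 0) (h1 : ((⌊2 ^ a * v⌋ : ℤ) : ZMod (2 ^ a)) ≠ -1)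
    (h : 2 ^ a * |v' - v| < 1) : ⌊v'⌋ = ⌊v⌋ := by
  set w := ⌊2 ^ a * v⌋ with hw
  set Q := ⌊v⌋ with hQ
  have hp : (0 : ℝ) < 2 ^ a := by positivity
  have hz : ((2 : ZMod (2 ^ a)) ^ a) = 0 := by
    have := ZMod.natCast_self (2 ^ a)
    push_cast at this
    exact this
  have hw1 : 2 ^ a * Q ≤ w := by
    rw [hw, Int.le_floor]
    push_cast
    exact mul_le_mul_of_nonneg_left (Int.floor_le v) hp.le
  have hw2 : w < 2 ^ a * Q + 2 ^ a := by
    rw [hw, Int.floor_lt]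
    push_cast
    have := mul_lt_mul_of_pos_left (Int.lt_floor_add_one v) hp
    linarith
  have hw3 : w ≠ 2 ^ a * Q := by
    intro e
    apply h0
    rw [e]
    push_cast
    rw [hz, zero_mul]
  have hw4 : w ≠ 2 ^ a * Q + 2 ^ a - 1 := by
    intro e
    apply h1
    rw [e]
    push_cast
    rw [hz]
    ring
  have hw5 : 2 ^ a * Q + 1 ≤ w := by omega
  have hw6 : w + 2 ≤ 2 ^ a * Q + 2 ^ a := by omega
  have hw5' : (2 : ℝ) ^ a * Q + 1 ≤ w := by exact_mod_cast hw5
  have hw6' : (w : ℝ) + 2 ≤ 2 ^ a * Q + 2 ^ a := by exact_mod_cast hw6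
  have f1 : (w : ℝ) ≤ 2 ^ a * v := Int.floor_le _
  have f2 : 2 ^ a * v < w + 1 := Int.lt_floor_add_one _
  rw [← abs_of_pos hp, ← abs_mul, mul_sub, abs_lt] at h
  rw [Int.floor_eq_iff]
  constructor
  · exact le_of_mul_le_mul_left (by linarith [h.1]) hp
  · exact lt_of_mul_lt_mul_left (by linarith [h.2]) hp.le

/-- The rotation of the random shift. -/
def rot (A : Finset (ℝ × ℝ)) (K c : ℕ) : Sp A K ≃ Sp A K :=
  Equiv.prodCongr (Equiv.refl _)
    (Equiv.addRight (⟨c % 2 ^ K, Nat.mod_lt _ (by positivity)⟩ : Fin (2 ^ K)))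

lemma rot_spec {M : ℕ} (hM : M ≤ K) (ω : Sp A K) :
    ∃ e : ℕ, yc (rot A K (2 ^ (K - M)) ω) = yc ω ∧
      2 ^ M * xc (rot A K (2 ^ (K - M)) ω) = 2 ^ M * xc ω + 1 - 2 ^ M * e := by
  refine ⟨(ω.2 + 2 ^ (K - M)) / 2 ^ K, rfl, ?_⟩
  have h1 : (((rot A K (2 ^ (K - M)) ω).2 : ℕ)) = (ω.2 + 2 ^ (K - M)) % 2 ^ K := by
    simp [rot, Fin.val_add]
  have h2 := Nat.mod_add_div (ω.2 + 2 ^ (K - M)) (2 ^ K)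
  rw [← h1] at h2
  have h3 : (((rot A K (2 ^ (K - M)) ω).2 : ℕ) : ℝ) =
      (ω.2 : ℕ) + 2 ^ (K - M) - 2 ^ K * ((ω.2 + 2 ^ (K - M)) / 2 ^ K : ℕ) := by
    have : ((((rot A K (2 ^ (K - M)) ω).2 : ℕ) +
      2 ^ K * ((ω.2 + 2 ^ (K - M)) / 2 ^ K) : ℕ) : ℝ) = ((ω.2 + 2 ^ (K - M) : ℕ) : ℝ) := by
      rw [h2]
    push_cast at this ⊢
    linarith
  have h4 : (2 : ℝ) ^ M * 2 ^ (K - M) = 2 ^ K := by rw [← pow_add]; congr 1; omega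
  have h5 : (rot A K (2 ^ (K - M)) ω).1 = ω.1 := rfl
  unfold xc
  rw [h3, h5]
  have hK : (2 : ℝ) ^ K ≠ 0 := by positivity
  field_simp
  linear_combination h4

/-- The projection is close to a dyadic boundary with small probability. -/
lemma card_boundary (s : ℝ) {n a : ℕ} (h : n + a ≤ K) (r : ZMod (2 ^ a)) :
    2 ^ a * (Finset.univ.filter fun ω : Sp A K =>
      ((⌊2 ^ a * (2 ^ n * (xc ω + s * yc ω))⌋ : ℤ) : ZMod (2 ^ a)) = r).card =
      Fintype.card (Sp A K) := by
  have : NeZero (2 ^ a) := ⟨by positivity⟩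
  refine card_mul_eq_of_rotation (m := 2 ^ a) _ (rot A K (2 ^ (K - (n + a)))) (fun ω => ?_) r
  obtain ⟨e, he1, he2⟩ := rot_spec h ω
  rw [he1]
  have e1 : (2 : ℝ) ^ a * (2 ^ n * (xc (rot A K (2 ^ (K - (n + a))) ω) + s * yc ω)) =
      2 ^ a * (2 ^ n * (xc ω + s * yc ω)) + ((1 - 2 ^ (n + a) * e : ℤ) : ℝ) := by
    push_cast
    rw [pow_add] at he2 ⊢
    linear_combination he2
  rw [e1, Int.floor_add_intCast]
  have hz : ((2 : ZMod (2 ^ a)) ^ a) = 0 := by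
    have := ZMod.natCast_self (2 ^ a)
    push_cast at this
    exact this
  push_cast
  rw [pow_add, hz]
  ring

lemma two_pow_mul_abs_proj_lt {s s' : ℝ} {j n q a l : ℕ} (hD : 2 ^ (n + q) * |s' - s| ≤ 2 ^ l)
    (hq : q = a + l + 1) {ω ω' : Sp A K}
    (h : (Ts A K s (j + (n + q)) ⊓ Qs A K j) ω' ω) :
    2 ^ a * |2 ^ (j + n) * (xc ω' + s' * yc ω') - 2 ^ (j + n) * (xc ω + s' * yc ω)| < 1 := by
  obtain ⟨hT, hQ⟩ := h
  have h1 := abs_two_pow_mul_sub_lt hT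
  have h2 := abs_two_pow_mul_sub_lt (Qs_iff.1 hQ).2.2
  set u := (xc ω' + s * yc ω') - (xc ω + s * yc ω) with hu
  set y := yc ω' - yc ω with hy
  have e : 2 ^ (j + n) * (xc ω' + s' * yc ω') - 2 ^ (j + n) * (xc ω + s' * yc ω) =
      2 ^ (j + n) * (u + (s' - s) * y) := by rw [hu, hy]; ring
  rw [e, abs_mul, abs_of_pos (by positivity : (0 : ℝ) < 2 ^ (j + n))]
  have h3 : |u + (s' - s) * y| ≤ |u| + |s' - s| * |y| := by
    rw [← abs_mul]; exact abs_add_le _ _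
  have h4 : 2 ^ (j + n + q) * (|u| + |s' - s| * |y|) < 1 + 2 ^ l := by
    have : 2 ^ (j + n + q) * (|u| + |s' - s| * |y|) =
        2 ^ (j + (n + q)) * |u| + (2 ^ (n + q) * |s' - s|) * (2 ^ j * |y|) := by
      simp only [pow_add]; ring
    rw [this]
    have h5 : (2 ^ (n + q) * |s' - s|) * (2 ^ j * |y|) ≤ 2 ^ l * 1 :=
      mul_le_mul hD h2.le (by positivity) (by positivity)
    linarith
  have h6 : (1 : ℝ) + 2 ^ l ≤ 2 ^ (l + 1) := by
    rw [pow_succ]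
    have : (1 : ℝ) ≤ 2 ^ l := one_le_pow₀ (by norm_num)
    linarith
  have h7 : (2 : ℝ) ^ (j + n + q) = 2 ^ a * 2 ^ (j + n) * 2 ^ (l + 1) := by
    rw [hq]; simp only [pow_add]; ring
  have h8 : (0 : ℝ) < 2 ^ (l + 1) := by positivity
  have h9 : 2 ^ (l + 1) * (2 ^ a * (2 ^ (j + n) * |u + (s' - s) * y|)) < 2 ^ (l + 1) * 1 := by
    calc _ = 2 ^ (j + n + q) * |u + (s' - s) * y| := by rw [h7]; ring
      _ ≤ 2 ^ (j + n + q) * (|u| + |s' - s| * |y|) := by gcongr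
      _ < _ := by linarith
  exact lt_of_mul_lt_mul_left h9 h8.le

/-- A fine projection in one direction nearly determines the coarse projection in a nearby
direction. -/
lemma ent_ambiguity_le [Nonempty (Sp A K)] {s s' : ℝ} {j n q a l : ℕ}
    (hD : 2 ^ (n + q) * |s' - s| ≤ 2 ^ l) (hq : q = a + l + 1) (hK : j + n + a ≤ K) :
    ent (Ts A K s' (j + n) ⊓ (Ts A K s (j + (n + q)) ⊓ Qs A K j)) -
      ent (Ts A K s (j + (n + q)) ⊓ Qs A K j) ≤ 2 / 2 ^ a * Real.log 3 := by
  classical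
  refine (ent_sub_le inf_le_right).trans ?_
  set c := Ts A K s (j + (n + q)) ⊓ Qs A K j with hc
  set f : Sp A K → ZMod (2 ^ a) := fun ω =>
    ((⌊2 ^ a * (2 ^ (j + n) * (xc ω + s' * yc ω))⌋ : ℤ) : ZMod (2 ^ a)) with hf
  have hpt : ∀ ω, Real.log (ncl (Ts A K s' (j + n) ⊓ c) c ω) ≤
      ((if f ω = 0 then 1 else 0) + (if f ω = -1 then 1 else 0)) * Real.log 3 := by
    intro ω
    have hpos : (0 : ℝ) < ncl (Ts A K s' (j + n) ⊓ c) c ω := by exact_mod_cast ncl_pos _ _ _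
    have hlog : 0 ≤ Real.log 3 := Real.log_nonneg (by norm_num)
    have h3 : (ncl (Ts A K s' (j + n) ⊓ c) c ω : ℝ) ≤ 3 := by
      have h := ncl_le (s := Ts A K s' (j + n) ⊓ c) (t := c) (ω := ω)
        (fun ω => ⌊2 ^ (j + n) * (xc ω + s' * yc ω)⌋)
        (Finset.Icc (⌊2 ^ (j + n) * (xc ω + s' * yc ω)⌋ - (1 : ℕ))
          (⌊2 ^ (j + n) * (xc ω + s' * yc ω)⌋ + (1 : ℕ)))
        (fun ω' hω' => by
          refine floor_mem_Icc ?_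
          have h1 := two_pow_mul_abs_proj_lt hD hq hω'
          have h2 : (1 : ℝ) ≤ 2 ^ a := one_le_pow₀ (by norm_num)
          push_cast
          nlinarith [abs_nonneg (2 ^ (j + n) * (xc ω' + s' * yc ω') -
            2 ^ (j + n) * (xc ω + s' * yc ω))])
        (fun ω₁ ω₂ h1 h2 e => ⟨e, c.trans' h1 (c.symm' h2)⟩)
      rw [card_Icc_sub_add] at h
      exact_mod_cast h
    by_cases hb : f ω = 0 ∨ f ω = -1
    · have h1 : (1 : ℝ) ≤ (if f ω = 0 then 1 else 0) + (if f ω = -1 then 1 else 0) := by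
        rcases hb with hb | hb
        · rw [if_pos hb]; split_ifs <;> norm_num
        · rw [if_pos hb]; split_ifs <;> norm_num
      have h2 := Real.log_le_log hpos h3
      nlinarith
    · push Not at hb
      rw [if_neg hb.1, if_neg hb.2, add_zero, zero_mul]
      have h := ncl_le (s := Ts A K s' (j + n) ⊓ c) (t := c) (ω := ω)
        (fun ω => ⌊2 ^ (j + n) * (xc ω + s' * yc ω)⌋)
        {⌊2 ^ (j + n) * (xc ω + s' * yc ω)⌋}
        (fun ω' hω' => by
          rw [Finset.mem_singleton]
          exact floor_eq_of_not_boundary hb.1 hb.2 (two_pow_mul_abs_proj_lt hD hq hω'))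
        (fun ω₁ ω₂ h1 h2 e => ⟨e, c.trans' h1 (c.symm' h2)⟩)
      rw [Finset.card_singleton] at h
      have : ncl (Ts A K s' (j + n) ⊓ c) c ω = 1 := le_antisymm h (ncl_pos _ _ _)
      simp [this]
  refine (avg_mono hpt).trans ?_
  rw [avg_mul_const, avg_add, avg_indicator_eq, avg_indicator_eq]
  have hN : (0 : ℝ) < Fintype.card (Sp A K) := by exact_mod_cast Fintype.card_pos
  have hr : ∀ r, ((Finset.univ.filter fun ω => f ω = r).card : ℝ) / Fintype.card (Sp A K) =
      1 / 2 ^ a := by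
    intro r
    have h1 : (2 : ℝ) ^ a * (Finset.univ.filter fun ω => f ω = r).card =
        Fintype.card (Sp A K) := by
      have h2 : 2 ^ a * (Finset.univ.filter fun ω => f ω = r).card = Fintype.card (Sp A K) := by
        convert card_boundary (A := A) s' hK r
      exact_mod_cast h2
    rw [div_eq_div_iff hN.ne' (by positivity), ← h1]
    ring
  rw [hr, hr]
  apply le_of_eq
  ring

end Space

section Space

variable {A : Finset (ℝ × ℝ)} {K : ℕ}

/-- The class of `ω` in `C` contains two well separated heavy horizontal strips. -/
def Branching (C : Setoid (Sp A K)) (n p : ℕ) (τ : ℝ) (ω : Sp A K) : Prop :=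
  ∃ ω₁ ω₂, C ω₁ ω ∧ C ω₂ ω ∧ ⌊2 ^ n * yc ω₁⌋ + 2 ^ p ≤ ⌊2 ^ n * yc ω₂⌋ ∧
    τ * cnt C ω ≤ cnt (Ys A K n ⊓ C) ω₁ ∧ τ * cnt C ω ≤ cnt (Ys A K n ⊓ C) ω₂

lemma floor_mem_Ico_of_refine {j l : ℕ} {y y' : ℝ} (h : ⌊2 ^ j * y'⌋ = ⌊2 ^ j * y⌋) :
    ⌊2 ^ (j + l) * y'⌋ ∈ Finset.Ico (2 ^ l * ⌊2 ^ j * y⌋) (2 ^ l * ⌊2 ^ j * y⌋ + 2 ^ l) := by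
  have hp : (0 : ℝ) < 2 ^ l := by positivity
  have h1 := mul_le_mul_of_nonneg_left (Int.floor_le (2 ^ j * y')) hp.le
  have h2 := mul_lt_mul_of_pos_left (Int.lt_floor_add_one (2 ^ j * y')) hp
  rw [h] at h1 h2
  rw [Finset.mem_Ico, Int.le_floor, Int.floor_lt, pow_add]
  push_cast
  constructor <;> nlinarith

lemma card_Ico_two_pow (a : ℤ) (l : ℕ) : (Finset.Ico a (a + 2 ^ l)).card = 2 ^ l := by
  rw [Int.card_Ico, add_sub_cancel_left]
  have : ((2 : ℤ) ^ l) = ((2 ^ l : ℕ) : ℤ) := by push_cast; rfl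
  rw [this, Int.toNat_natCast]

open Classical in
lemma avg_light_le {C : Setoid (Sp A K)} {j l : ℕ} (hC : C ≤ Qs A K j) {τ : ℝ} (hτ : 0 ≤ τ)
    [Nonempty (Sp A K)] :
    avg (fun ω => if τ * cnt C ω ≤ cnt (Ys A K (j + l) ⊓ C) ω then (0 : ℝ) else 1) ≤
      2 ^ l * τ := by
  rw [← avg_class C, ← avg_const (Ω := Sp A K) (2 ^ l * τ)]
  refine avg_mono fun ω => ?_
  have hN : (0 : ℝ) < cnt C ω := by exact_mod_cast cnt_pos C ω
  rw [div_le_iff₀ hN]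
  set S := Finset.univ.filter fun ω' => C ω' ω with hS
  set L := S.filter fun ω => ¬ (τ * cnt C ω ≤ cnt (Ys A K (j + l) ⊓ C) ω) with hL
  have e1 : ∑ ω' ∈ S, (if τ * cnt C ω' ≤ cnt (Ys A K (j + l) ⊓ C) ω' then (0 : ℝ) else 1) =
      L.card := by
    rw [hL, Finset.card_filter]
    push_cast
    refine Finset.sum_congr rfl fun x _ => ?_
    split_ifs <;> simp_all
  rw [e1]
  set I := Finset.Ico (2 ^ l * ⌊2 ^ j * yc ω⌋) (2 ^ l * ⌊2 ^ j * yc ω⌋ + 2 ^ l) with hI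
  have hmaps : ∀ ω' ∈ L, ⌊2 ^ (j + l) * yc ω'⌋ ∈ I := by
    intro ω' hω'
    have h1 := (Finset.mem_filter.1 (Finset.mem_filter.1 hω').1).2
    exact floor_mem_Ico_of_refine (Qs_iff.1 (hC h1)).2.2
  have hfib : ∀ w ∈ I, ((L.filter fun ω' => ⌊2 ^ (j + l) * yc ω'⌋ = w).card : ℝ) ≤
      τ * cnt C ω := by
    intro w _
    rcases (L.filter fun ω' => ⌊2 ^ (j + l) * yc ω'⌋ = w).eq_empty_or_nonempty with h0 | ⟨ω₁, h1⟩
    · rw [h0]; simp; positivity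
    · obtain ⟨h2, h3⟩ := Finset.mem_filter.1 h1
      obtain ⟨h4, h5⟩ := Finset.mem_filter.1 h2
      have h6 := (Finset.mem_filter.1 h4).2
      rw [cnt_congr C h6] at h5
      refine le_trans ?_ (not_le.1 h5).le
      refine Nat.cast_le.2 ?_
      refine Finset.card_le_card fun x hx => ?_
      obtain ⟨g1, g2⟩ := Finset.mem_filter.1 hx
      have g3 := (Finset.mem_filter.1 (Finset.mem_filter.1 g1).1).2
      simp only [Finset.mem_filter, Finset.mem_univ, true_and]
      exact ⟨Ys_iff.2 (g2.trans h3.symm), C.trans' g3 (C.symm' h6)⟩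
  rw [Finset.card_eq_sum_card_fiberwise hmaps]
  push_cast
  refine (Finset.sum_le_sum hfib).trans ?_
  rw [Finset.sum_const, card_Ico_two_pow, nsmul_eq_mul]
  push_cast
  linarith

open Classical in
lemma ent_strip_le {C : Setoid (Sp A K)} {j l p : ℕ} (hC : C ≤ Qs A K j)
    [Nonempty (Sp A K)] :
    ent (Ys A K (j + l) ⊓ C) - ent C ≤ 3 * Real.log 2 + l * Real.log 2 *
      avg (fun ω => if Branching C (j + (l + p)) p (1 / 2 ^ (2 * (l + p))) ω
        then (1 : ℝ) else 0) := by
  set τ : ℝ := 1 / 2 ^ (2 * (l + p)) with hτ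
  set n := j + (l + p) with hn
  set heavy : Sp A K → Bool := fun ω => decide (τ * cnt C ω ≤ cnt (Ys A K n ⊓ C) ω) with hheavy
  set Z : Setoid (Sp A K) := Setoid.ker heavy with hZ
  have hlog : 0 < Real.log 2 := Real.log_pos (by norm_num)
  have h1 : ent (Z ⊓ C) - ent C ≤ Real.log 2 := by
    refine ent_sub_le_log inf_le_right fun ω => ?_
    have h := ncl_le (s := Z ⊓ C) (t := C) (ω := ω) heavy Finset.univ
      (fun _ _ => Finset.mem_univ _)
      (fun ω₁ ω₂ h1 h2 e => ⟨e, C.trans' h1 (C.symm' h2)⟩)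
    rw [Finset.card_univ, Fintype.card_bool] at h
    exact_mod_cast h
  have h2 : ent (Ys A K (j + l) ⊓ C) ≤ ent (Ys A K (j + l) ⊓ (Z ⊓ C)) :=
    ent_anti (inf_le_inf_left _ inf_le_right)
  have h3 := ent_sub_le (s := Ys A K (j + l) ⊓ (Z ⊓ C)) (t := Z ⊓ C) inf_le_right
  have hpt : ∀ ω, Real.log (ncl (Ys A K (j + l) ⊓ (Z ⊓ C)) (Z ⊓ C) ω) ≤
      Real.log 2 + ((if Branching C n p τ ω then (1 : ℝ) else 0) +
        (if τ * cnt C ω ≤ cnt (Ys A K n ⊓ C) ω then (0 : ℝ) else 1)) * (l * Real.log 2) := by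
    intro ω
    have hpos : (0 : ℝ) < ncl (Ys A K (j + l) ⊓ (Z ⊓ C)) (Z ⊓ C) ω := by
      exact_mod_cast ncl_pos _ _ _
    by_cases hgood : ¬ Branching C n p τ ω ∧ τ * cnt C ω ≤ cnt (Ys A K n ⊓ C) ω
    · rw [if_neg hgood.1, if_pos hgood.2]
      have hcls : ∀ ω', (Z ⊓ C) ω' ω → C ω' ω ∧ τ * cnt C ω ≤ cnt (Ys A K n ⊓ C) ω' := by
        rintro ω' ⟨g1, g2⟩
        refine ⟨g2, ?_⟩
        have g3 : heavy ω' = heavy ω := g1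
        rw [hheavy] at g3
        simp only [hgood.2, decide_true, decide_eq_true_eq] at g3
        rwa [cnt_congr C g2] at g3
      have hclose : ∀ ω₁ ω₂, (Z ⊓ C) ω₁ ω → (Z ⊓ C) ω₂ ω →
          ⌊2 ^ (j + l) * yc ω₂⌋ ≤ ⌊2 ^ (j + l) * yc ω₁⌋ + 1 := by
        intro ω₁ ω₂ g1 g2
        have hlt : ⌊2 ^ n * yc ω₂⌋ < ⌊2 ^ n * yc ω₁⌋ + 2 ^ p := by
          by_contra hc
          exact hgood.1 ⟨ω₁, ω₂, (hcls _ g1).1, (hcls _ g2).1, not_lt.1 hc, (hcls _ g1).2,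
            (hcls _ g2).2⟩
        have hlt' : (⌊2 ^ n * yc ω₂⌋ : ℝ) + 1 ≤ ⌊2 ^ n * yc ω₁⌋ + 2 ^ p := by exact_mod_cast hlt
        have k1 := Int.lt_floor_add_one (2 ^ n * yc ω₂)
        have k2 := Int.floor_le (2 ^ n * yc ω₁)
        have k3 : 2 ^ (j + l) * yc ω₂ ≤ 2 ^ (j + l) * yc ω₁ + 1 := by
          have hp : (0 : ℝ) < 2 ^ p := by positivity
          refine le_of_mul_le_mul_left ?_ hp
          have : (2 : ℝ) ^ n = 2 ^ p * 2 ^ (j + l) := by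
            rw [hn, ← pow_add]; congr 1; omega
          rw [this] at k1 k2 hlt'
          linarith
        rw [← Int.floor_add_one]
        exact Int.floor_le_floor k3
      set W := (Finset.univ.filter fun ω' => (Z ⊓ C) ω' ω).image
        (fun ω' => ⌊2 ^ (j + l) * yc ω'⌋) with hW
      have hWne : W.Nonempty := ⟨_, Finset.mem_image_of_mem _ (a := ω) (by simp)⟩
      obtain ⟨w₀, hw₀, hmin⟩ := Finset.exists_min_image W id hWne
      obtain ⟨ω₀, hω₀, rfl⟩ := Finset.mem_image.1 hw₀
      have hω₀ := (Finset.mem_filter.1 hω₀).2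
      have h := ncl_le (s := Ys A K (j + l) ⊓ (Z ⊓ C)) (t := Z ⊓ C) (ω := ω)
        (fun ω' => ⌊2 ^ (j + l) * yc ω'⌋)
        (Finset.Icc ⌊2 ^ (j + l) * yc ω₀⌋ (⌊2 ^ (j + l) * yc ω₀⌋ + 1))
        (fun ω' hω' => Finset.mem_Icc.2 ⟨hmin _ (Finset.mem_image_of_mem _ (by simpa using hω')),
          hclose _ _ hω₀ hω'⟩)
        (fun ω₁ ω₂ h1 h2 e => ⟨e, (Z ⊓ C).trans' h1 ((Z ⊓ C).symm' h2)⟩)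
      rw [Int.card_Icc, show (⌊2 ^ (j + l) * yc ω₀⌋ + 1 + 1 - ⌊2 ^ (j + l) * yc ω₀⌋).toNat = 2 by
        omega] at h
      simp only [add_zero, zero_mul]
      exact Real.log_le_log hpos (by exact_mod_cast h)
    · have hb : (1 : ℝ) ≤ (if Branching C n p τ ω then (1 : ℝ) else 0) +
          (if τ * cnt C ω ≤ cnt (Ys A K n ⊓ C) ω then (0 : ℝ) else 1) := by
        by_cases b1 : Branching C n p τ ω
        · rw [if_pos b1]; split_ifs <;> norm_num
        · have b2 : ¬ (τ * cnt C ω ≤ cnt (Ys A K n ⊓ C) ω) := fun h => hgood ⟨b1, h⟩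
          rw [if_neg b1, if_neg b2]; norm_num
      have h := ncl_le (s := Ys A K (j + l) ⊓ (Z ⊓ C)) (t := Z ⊓ C) (ω := ω)
        (fun ω' => ⌊2 ^ (j + l) * yc ω'⌋)
        (Finset.Ico (2 ^ l * ⌊2 ^ j * yc ω⌋) (2 ^ l * ⌊2 ^ j * yc ω⌋ + 2 ^ l))
        (fun ω' hω' => floor_mem_Ico_of_refine (Qs_iff.1 (hC hω'.2)).2.2)
        (fun ω₁ ω₂ h1 h2 e => ⟨e, (Z ⊓ C).trans' h1 ((Z ⊓ C).symm' h2)⟩)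
      rw [card_Ico_two_pow] at h
      have h4 : Real.log (ncl (Ys A K (j + l) ⊓ (Z ⊓ C)) (Z ⊓ C) ω) ≤ l * Real.log 2 := by
        rw [← Real.log_pow]
        exact Real.log_le_log hpos (by exact_mod_cast h)
      have : 0 ≤ l * Real.log 2 := by positivity
      nlinarith
  have h4 := h3.trans (avg_mono hpt)
  rw [avg_add, avg_const, avg_mul_const, avg_add] at h4
  have h5 := avg_light_le (l := l + p) hC (τ := τ) (by positivity)
  have h6 : (2 : ℝ) ^ (l + p) * τ * (l * Real.log 2) ≤ Real.log 2 := by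
    have e : (2 : ℝ) ^ (l + p) * τ = 1 / 2 ^ (l + p) := by
      rw [hτ, two_mul, pow_add _ (l + p) (l + p)]; field_simp
    have h7 : (l : ℝ) ≤ 2 ^ (l + p) := by
      have : l ≤ 2 ^ (l + p) := (Nat.lt_two_pow_self).le.trans
        (Nat.pow_le_pow_right (by norm_num) (Nat.le_add_right l p))
      exact_mod_cast this
    rw [e, one_div, inv_mul_le_iff₀ (by positivity)]
    exact mul_le_mul_of_nonneg_right h7 hlog.le
  have h8 := mul_le_mul_of_nonneg_right h5 (by positivity : 0 ≤ l * Real.log 2)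
  rw [← hn] at h8
  rw [add_mul] at h4
  linarith

/-- The conditioning partition used to compare two directions. -/
def Cs (A : Finset (ℝ × ℝ)) (K : ℕ) (t t' : ℝ) (j n : ℕ) : Setoid (Sp A K) :=
  Qs A K j ⊓ Ts A K t (j + n) ⊓ Ts A K t' (j + n)

lemma le_ent_strip [Nonempty (Sp A K)] {t t' : ℝ} (ht : |t| ≤ 1) {j n l : ℕ}
    (htt' : 2 ^ (n + l) * |t' - t| ≤ 1) :
    (cH A K t (j + l) n + ent (Qs A K (j + l))) - (cH A K t j (n + l) + ent (Qs A K j)) -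
      2 * Real.log 5 ≤ ent (Ys A K (j + l) ⊓ Cs A K t t' j (n + l)) -
        ent (Cs A K t t' j (n + l)) := by
  set C := Cs A K t t' j (n + l) with hC
  have h1 : ent (Ts A K t (j + l + n) ⊓ Qs A K (j + l)) ≤
      ent (Qs A K (j + l) ⊓ (Ys A K (j + l) ⊓ C)) := by
    refine ent_anti (le_inf ?_ inf_le_left)
    rw [show j + l + n = j + (n + l) by ring]
    exact inf_le_right.trans (inf_le_right.trans (inf_le_left.trans inf_le_right))
  have h2 : ent (Qs A K (j + l) ⊓ (Ys A K (j + l) ⊓ C)) - ent (Ys A K (j + l) ⊓ C) ≤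
      Real.log 5 := by
    refine ent_sub_le_log inf_le_right fun ω => ?_
    have h := ncl_le (s := Qs A K (j + l) ⊓ (Ys A K (j + l) ⊓ C)) (t := Ys A K (j + l) ⊓ C) (ω := ω)
      (fun ω => ⌊2 ^ (j + l) * xc ω⌋)
      (Finset.Icc (⌊2 ^ (j + l) * xc ω⌋ - (2 : ℕ)) (⌊2 ^ (j + l) * xc ω⌋ + (2 : ℕ)))
      (fun ω' hω' => by
        refine floor_mem_Icc ?_
        obtain ⟨hY, ⟨hQ, hT⟩, -⟩ := hω'
        have g1 := abs_two_pow_mul_sub_lt hY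
        have g2 := abs_two_pow_mul_sub_lt hT
        rw [← mul_sub, abs_mul, abs_of_pos (by positivity : (0 : ℝ) < 2 ^ (j + l))]
        have g3 : (2 : ℝ) ^ (j + l) ≤ 2 ^ (j + (n + l)) :=
          pow_le_pow_right₀ (by norm_num) (by omega)
        set u := xc ω' + t * yc ω' - (xc ω + t * yc ω) with hu
        have g4 : |xc ω' - xc ω| ≤ |u| + |yc ω' - yc ω| := by
          rw [show xc ω' - xc ω = u - t * (yc ω' - yc ω) by rw [hu]; ring]
          refine (abs_sub _ _).trans ?_
          rw [abs_mul]
          have := mul_le_mul_of_nonneg_right ht (abs_nonneg (yc ω' - yc ω))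
          linarith
        have g5 : (2 : ℝ) ^ (j + l) * |xc ω' - xc ω| ≤ 2 ^ (j + l) * (|u| + |yc ω' - yc ω|) := by
          gcongr
        have g6 : (2 : ℝ) ^ (j + l) * |u| ≤ 2 ^ (j + (n + l)) * |u| := by gcongr
        push_cast
        linarith)
      (fun ω₁ ω₂ h1 h2 e => ⟨Qs_iff.2 ⟨(Qs_iff.1 h1.2.1.1).1.trans (Qs_iff.1 h2.2.1.1).1.symm, e,
        h1.1.trans h2.1.symm⟩,
        (Ys A K (j + l) ⊓ C).trans' h1 ((Ys A K (j + l) ⊓ C).symm' h2)⟩)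
    rw [card_Icc_sub_add] at h
    exact_mod_cast h
  have h3 : ent C - ent (Qs A K j ⊓ Ts A K t (j + (n + l))) ≤ Real.log 5 := by
    refine ent_sub_le_log inf_le_left fun ω => ?_
    have h := ncl_le (s := C) (t := Qs A K j ⊓ Ts A K t (j + (n + l))) (ω := ω)
      (fun ω => ⌊2 ^ (j + (n + l)) * (xc ω + t' * yc ω)⌋)
      (Finset.Icc (⌊2 ^ (j + (n + l)) * (xc ω + t' * yc ω)⌋ - (2 : ℕ))
        (⌊2 ^ (j + (n + l)) * (xc ω + t' * yc ω)⌋ + (2 : ℕ)))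
      (fun ω' hω' => by
        refine floor_mem_Icc ?_
        obtain ⟨hQ, hT⟩ := hω'
        have g1 := abs_two_pow_mul_sub_lt (Qs_iff.1 hQ).2.2
        have g2 := abs_two_pow_mul_sub_lt hT
        rw [← mul_sub, abs_mul, abs_of_pos (by positivity : (0 : ℝ) < 2 ^ (j + (n + l)))]
        set u := xc ω' + t * yc ω' - (xc ω + t * yc ω) with hu
        have g4 : |xc ω' + t' * yc ω' - (xc ω + t' * yc ω)| ≤ |u| + |t' - t| * |yc ω' - yc ω| := by
          rw [show xc ω' + t' * yc ω' - (xc ω + t' * yc ω) = u + (t' - t) * (yc ω' - yc ω) by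
            rw [hu]; ring, ← abs_mul]
          exact abs_add_le _ _
        have g5 := mul_le_mul_of_nonneg_left g4 (by positivity : (0 : ℝ) ≤ 2 ^ (j + (n + l)))
        have g6 : (2 : ℝ) ^ (j + (n + l)) * (|t' - t| * |yc ω' - yc ω|) ≤ 1 * 1 := by
          calc _ = (2 ^ (n + l) * |t' - t|) * (2 ^ j * |yc ω' - yc ω|) := by
                rw [pow_add 2 j]; ring
            _ ≤ _ := mul_le_mul htt' g1.le (by positivity) (by norm_num)
        push_cast
        linarith)
      (fun ω₁ ω₂ h1 h2 e => ⟨(Qs A K j ⊓ Ts A K t (j + (n + l))).trans' h1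
        ((Qs A K j ⊓ Ts A K t (j + (n + l))).symm' h2), e⟩)
    rw [card_Icc_sub_add] at h
    exact_mod_cast h
  unfold cH
  rw [inf_comm (Qs A K j)] at h3
  linarith

lemma ent_top [Nonempty (Sp A K)] : ent (⊤ : Setoid (Sp A K)) = 0 := by
  have : ∀ ω, cnt (⊤ : Setoid (Sp A K)) ω = Fintype.card (Sp A K) := fun ω => by
    classical
    unfold cnt
    rw [Finset.filter_true_of_mem (fun _ _ => by simp [Setoid.top_def]), Finset.card_univ]
  unfold ent
  simp only [this]
  rw [avg_const, sub_self]

lemma ent_Qs_le [Nonempty (Sp A K)] (hA : ∀ z ∈ A, |z.1| ≤ 1 ∧ |z.2| ≤ 1) (l : ℕ) :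
    ent (Qs A K l) ≤ K * Real.log 2 + 2 * ((l + 3) * Real.log 2) := by
  have e : K * Real.log 2 + 2 * ((l + 3) * Real.log 2) =
      Real.log (2 ^ K * (2 ^ (l + 3) * 2 ^ (l + 3))) := by
    rw [Real.log_mul (by positivity) (by positivity), Real.log_mul (by positivity) (by positivity),
      Real.log_pow, Real.log_pow]
    push_cast
    ring
  have h0 := ent_sub_le_log (s := Qs A K l) (t := ⊤) le_top
    (B := 2 ^ K * (2 ^ (l + 3) * 2 ^ (l + 3))) fun ω => ?_
  · rw [ent_top, sub_zero] at h0
    rwa [e]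
  · have h := ncl_le (s := Qs A K l) (t := ⊤) (ω := ω)
      (fun ω => (ω.2, ⌊2 ^ l * xc ω⌋, ⌊2 ^ l * yc ω⌋))
      (Finset.univ ×ˢ (Finset.Icc (0 - ((2 ^ (l + 1) : ℕ) : ℤ)) (0 + (2 ^ (l + 1) : ℕ)) ×ˢ
        Finset.Icc (0 - ((2 ^ (l + 1) : ℕ) : ℤ)) (0 + (2 ^ (l + 1) : ℕ))))
      (fun ω' _ => by
        have hp : (0 : ℝ) < 2 ^ l := by positivity
        have g : ∀ v : ℝ, |v| ≤ 2 → ⌊2 ^ l * v⌋ ∈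
            Finset.Icc (0 - ((2 ^ (l + 1) : ℕ) : ℤ)) (0 + (2 ^ (l + 1) : ℕ)) := by
          intro v hv
          have := floor_mem_Icc (a := 2 ^ l * v) (b := 0) (N := (2 ^ (l + 1) : ℕ)) (by
            rw [sub_zero, abs_mul, abs_of_pos hp]
            push_cast
            rw [pow_succ]
            gcongr)
          rwa [Int.floor_zero] at this
        obtain ⟨g1, g2⟩ := hA _ ω'.1.2
        simp only [Finset.mem_product, Finset.mem_univ, true_and]
        refine ⟨g _ ?_, g _ (g2.trans (by norm_num))⟩
        unfold xc
        have g3 : ((ω'.2 : ℕ) : ℝ) / 2 ^ K ≤ 1 := by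
          rw [div_le_one (by positivity)]
          exact_mod_cast ω'.2.2.le
        have g4 : 0 ≤ ((ω'.2 : ℕ) : ℝ) / 2 ^ K := by positivity
        rw [abs_le] at g1 ⊢
        constructor <;> linarith [g1.1, g1.2])
      (fun ω₁ ω₂ _ _ e => e)
    rw [Finset.card_product, Finset.card_product, Finset.card_univ, Fintype.card_fin,
      card_Icc_sub_add] at h
    have h2 : 2 * 2 ^ (l + 1) + 1 ≤ 2 ^ (l + 3) := by
      have : 1 ≤ 2 ^ l := Nat.one_le_two_pow
      rw [pow_succ, pow_succ, pow_succ, pow_succ]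
      omega
    have h3 := h.trans (Nat.mul_le_mul_left _ (Nat.mul_le_mul h2 h2))
    exact_mod_cast h3

lemma ent_Qs_eq [Nonempty (Sp A K)] {i : ℕ}
    (hsep : ∀ z ∈ A, ∀ z' ∈ A, z ≠ z' → 1 / 2 ^ i ≤ |z.1 - z'.1| ∨ 1 / 2 ^ i ≤ |z.2 - z'.2|) :
    ent (Qs A K i) = Real.log A.card + K * Real.log 2 := by
  classical
  have hcnt : ∀ ω, cnt (Qs A K i) ω = 1 := by
    intro ω
    unfold cnt
    rw [Finset.card_eq_one]
    refine ⟨ω, ?_⟩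
    ext ω'
    simp only [Finset.mem_filter, Finset.mem_univ, true_and, Finset.mem_singleton]
    refine ⟨fun h => ?_, fun h => h ▸ (Qs A K i).refl' _⟩
    obtain ⟨h1, h2, h3⟩ := Qs_iff.1 h
    have h2 := abs_two_pow_mul_sub_lt h2
    have h3 := abs_two_pow_mul_sub_lt h3
    rw [xc_sub_of_eq h1] at h2
    by_contra hne
    have hz : ω'.1.1 ≠ ω.1.1 := fun e => hne (Prod.ext (Subtype.ext e) h1)
    have hp : (0 : ℝ) < 2 ^ i := by positivity
    rcases hsep _ ω'.1.2 _ ω.1.2 hz with g | g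
    · rw [div_le_iff₀ hp] at g; linarith
    · rw [div_le_iff₀ hp] at g
      simp only [yc] at h3
      linarith
  have hA : (A.card : ℝ) ≠ 0 := by
    obtain ⟨ω⟩ := ‹Nonempty (Sp A K)›
    exact_mod_cast (Finset.card_pos.2 ⟨_, ω.1.2⟩).ne'
  unfold ent
  simp only [hcnt, Nat.cast_one, Real.log_one, avg_const, sub_zero, Fintype.card_prod,
    Fintype.card_coe, Fintype.card_fin, Nat.cast_mul, Nat.cast_pow, Nat.cast_ofNat]
  rw [Real.log_mul hA (by positivity), Real.log_pow]

end Space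

section Space

variable {A : Finset (ℝ × ℝ)} {K : ℕ}

set_option maxHeartbeats 800000 in
open Classical in
lemma false_of_branching {t t' C α τ θ : ℝ} {i j n l q p L : ℕ} (hτ : 0 < τ) (hθ : 0 ≤ θ)
    (hP : ProjBound A t C α (1 / 2 ^ i)) (hi : j + (n + q) ≤ i)
    (hD₁ : 2 ^ l < 2 * (2 ^ (n + q) * (t' - t))) (hD₂ : 2 ^ (n + q) * (t' - t) ≤ 2 ^ l)
    (hL : 0 < L) (hCL : C * (8 * L) ^ α ≤ L / 2) (hp : 4 ≤ p)
    (hLθ : L * (8 * √θ / τ + 32 / 2 ^ p) < 1 / 2) {ω : Sp A K}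
    (hb : Branching (Cs A K t t' j n) (j + l) p τ ω)
    (hm : ∑ ω' with Cs A K t t' j n ω' ω, mi (Ts A K t (j + (n + q)) ⊓ Cs A K t t' j n)
      (Ys A K (j + l) ⊓ Cs A K t t' j n) (Cs A K t t' j n) ω' ≤ θ * cnt (Cs A K t t' j n) ω)
    (hm' : ∑ ω' with Cs A K t t' j n ω' ω, mi (Ts A K t' (j + (n + q)) ⊓ Cs A K t t' j n)
      (Ys A K (j + l) ⊓ Cs A K t t' j n) (Cs A K t t' j n) ω' ≤ θ * cnt (Cs A K t t' j n) ω) :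
    False := by
  set Z := Cs A K t t' j n with hZ
  set M := j + (n + q) with hM
  obtain ⟨ω₁, ω₂, h₁, h₂, hsep, hw₁, hw₂⟩ := hb
  set S : Finset (Sp A K) := Finset.univ.filter fun ω' => Z ω' ω with hS
  have hScard : (S.card : ℝ) = cnt Z ω := rfl
  have hSne : S.Nonempty := ⟨ω, by simp [hS]⟩
  set Y : Sp A K → ℤ := fun ω' => ⌊2 ^ (j + l) * yc ω'⌋ with hY
  set U : ℝ → Sp A K → ℝ := fun s ω' => (⌊2 ^ M * (xc ω' + s * yc ω')⌋ : ℝ) with hU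
  set g : ℝ := 2 ^ (n + q) * (t' - t) / 2 ^ l with hg
  have hl0 : (0 : ℝ) < 2 ^ l := by positivity
  have hg₁ : 1 / 2 < g := by rw [hg, lt_div_iff₀ hl0]; linarith
  have hg₂ : g ≤ 1 := by rw [hg, div_le_iff₀ hl0]; linarith
  have hfil : ∀ ω₃, Z ω₃ ω → (S.filter fun ω' => Y ω' = Y ω₃) =
      Finset.univ.filter fun ω' => (Ys A K (j + l) ⊓ Z) ω' ω₃ := by
    intro ω₃ h₃
    ext ω'
    simp only [hS, Finset.mem_filter, Finset.mem_univ, true_and]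
    exact ⟨fun h => ⟨h.2, Z.trans' h.1 (Z.symm' h₃)⟩, fun h => ⟨Z.trans' h.2 h₃, h.1⟩⟩
  have hcardfil : ∀ ω₃, Z ω₃ ω →
      ((S.filter fun ω' => Y ω' = Y ω₃).card : ℝ) = cnt (Ys A K (j + l) ⊓ Z) ω₃ := by
    intro ω₃ h₃; rw [hfil ω₃ h₃]; rfl
  have key : ∀ s : ℝ, ∑ ω' with Z ω' ω, mi (Ts A K s M ⊓ Z) (Ys A K (j + l) ⊓ Z) Z ω' ≤
      θ * cnt Z ω → ∀ ω₃, Z ω₃ ω → ∀ Φ : ℝ → ℝ, (∀ v, |Φ v| ≤ 1) →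
      |∑ ω' ∈ S with Y ω' = Y ω₃, Φ (U s ω') -
        (S.filter fun ω' => Y ω' = Y ω₃).card / S.card * ∑ ω' ∈ S, Φ (U s ω')| ≤
        2 * √θ * S.card := by
    intro s hs ω₃ h₃ Φ hΦ
    rw [hcardfil ω₃ h₃, hfil ω₃ h₃, hScard]
    refine (abs_sum_class_sub_le (s := Ts A K s M ⊓ Z) (t := Ys A K (j + l) ⊓ Z) inf_le_right
      inf_le_right h₃ (fun ω' => Φ (U s ω')) (fun _ => hΦ _) ?_).trans ?_
    · intro a b hab
      have := Ts_iff.1 hab.1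
      simp only [hU, this]
    · have h0 : (0 : ℝ) ≤ cnt Z ω := Nat.cast_nonneg _
      have : √(cnt Z ω * ∑ ω' with Z ω' ω, mi (Ts A K s M ⊓ Z) (Ys A K (j + l) ⊓ Z) Z ω') ≤
          √θ * cnt Z ω := by
        refine (Real.sqrt_le_sqrt (mul_le_mul_of_nonneg_left hs h0)).trans ?_
        rw [show (cnt Z ω : ℝ) * (θ * cnt Z ω) = θ * (cnt Z ω) ^ 2 by ring, Real.sqrt_mul hθ,
          Real.sqrt_sq h0]
      linarith
  have hUU' : ∀ ω' ∈ S, |U t' ω' - U t ω' - g * Y ω'| ≤ 2 := by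
    intro ω' _
    have e : 2 ^ M * (xc ω' + t' * yc ω') =
        2 ^ M * (xc ω' + t * yc ω') + g * (2 ^ (j + l) * yc ω') := by
      rw [hg, hM, pow_add 2 j, pow_add 2 j l]; field_simp; ring
    have a1 := Int.floor_le (2 ^ M * (xc ω' + t' * yc ω'))
    have a2 := Int.lt_floor_add_one (2 ^ M * (xc ω' + t' * yc ω'))
    have b1 := Int.floor_le (2 ^ M * (xc ω' + t * yc ω'))
    have b2 := Int.lt_floor_add_one (2 ^ M * (xc ω' + t * yc ω'))
    have c1 := Int.floor_le (2 ^ (j + l) * yc ω')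
    have c2 := Int.lt_floor_add_one (2 ^ (j + l) * yc ω')
    have d1 := mul_le_mul_of_nonneg_left c1 (by linarith : 0 ≤ g)
    have d2 := mul_le_mul_of_nonneg_left c2.le (by linarith : 0 ≤ g)
    simp only [hU, hY]
    rw [abs_le]
    constructor <;> linarith
  set h : ℝ := g * ((Y ω₂ : ℝ) - Y ω₁) with hh
  have hsep' : (2 : ℝ) ^ p ≤ (Y ω₂ : ℝ) - Y ω₁ := by
    have : ((⌊2 ^ (j + l) * yc ω₁⌋ + 2 ^ p : ℤ) : ℝ) ≤ (⌊2 ^ (j + l) * yc ω₂⌋ : ℤ) := by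
      exact_mod_cast hsep
    push_cast at this
    simp only [hY]
    linarith
  have hp16 : (16 : ℝ) ≤ 2 ^ p := by
    calc (16 : ℝ) = 2 ^ 4 := by norm_num
      _ ≤ 2 ^ p := pow_le_pow_right₀ (by norm_num) hp
  have hhp : (2 : ℝ) ^ p / 2 ≤ h := by
    have := mul_le_mul hg₁.le hsep' (by positivity) (by linarith)
    linarith
  have hh8 : 8 ≤ h := by linarith
  have hκ : 4 / h ≤ 8 / 2 ^ p := by
    rw [div_le_div_iff₀ (by linarith) (by positivity)]; linarith
  refine not_porous_of_almost_invariant S hSne (U t) (h := h) (by linarith) hL hLθ ?_ ?_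
  · intro Φ hΦ hLip
    have := abs_mean_translate_sub_le S hSne (U t) (U t') Y (g := g) (e := 2 * √θ) (τ := τ)
      (y₀ := Y ω₁) (y₁ := Y ω₂) hτ hUU' ?_ ?_ ?_ Φ hΦ hLip
    · refine this.trans ?_
      have : 4 * (2 * √θ / τ) = 8 * √θ / τ := by ring
      have : 4 * (8 / (2 : ℝ) ^ p) = 32 / 2 ^ p := by ring
      linarith
    · rintro y (rfl | rfl)
      · rw [hcardfil _ h₁]; exact hw₁
      · rw [hcardfil _ h₂]; exact hw₂
    · rintro y (rfl | rfl)
      · exact key t hm _ h₁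
      · exact key t hm _ h₂
    · rintro y (rfl | rfl)
      · exact key t' hm' _ h₁
      · exact key t' hm' _ h₂
  · intro v I hI hex
    have : Nonempty (Sp A K) := ⟨ω⟩
    choose! w hwS hw using hex
    have hM0 : (0 : ℝ) < 2 ^ M := by positivity
    have hL0 : (0 : ℝ) < L := by exact_mod_cast hL
    have hL1 : (1 : ℝ) ≤ L := by exact_mod_cast hL
    have hle := hP.card_le (by positivity) I (fun k => (w k).1.1) (fun k _ => (w k).1.2)
      (ρ := h / 4 / 2 ^ M) (R := 2 * L * h / 2 ^ M) ?_ ?_ ?_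
    · refine hle.trans (le_trans (le_of_eq ?_) hCL)
      congr 2
      have : h ≠ 0 := by linarith
      field_simp
      ring
    · have : (2 : ℝ) ^ M ≤ 2 ^ i := pow_le_pow_right₀ (by norm_num) hi
      rw [div_le_div_iff₀ (by positivity) (by positivity)]
      nlinarith
    · gcongr
      nlinarith
    · have hord : ∀ k ∈ I, ∀ k' ∈ I, k < k' →
          h / 4 / 2 ^ M ≤ |((w k).1.1.1 + t * (w k).1.1.2) - ((w k').1.1.1 + t * (w k').1.1.2)| ∧
          |((w k).1.1.1 + t * (w k).1.1.2) - ((w k').1.1.1 + t * (w k').1.1.2)| ≤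
            2 * L * h / 2 ^ M := by
        intro k hk k' hk' hkk'
        have hc : (w k).2 = (w k').2 := by
          have z1 : Z (w k) ω := (Finset.mem_filter.1 (hwS k hk)).2
          have z2 : Z (w k') ω := (Finset.mem_filter.1 (hwS k' hk')).2
          exact (Qs_iff.1 z1.1.1).1.trans (Qs_iff.1 z2.1.1).1.symm
        have e : ((w k).1.1.1 + t * (w k).1.1.2) - ((w k').1.1.1 + t * (w k').1.1.2) =
            (xc (w k) + t * yc (w k)) - (xc (w k') + t * yc (w k')) := by
          have := xc_sub_of_eq hc
          simp only [yc]
          linarith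
        have e2 : |(xc (w k) + t * yc (w k)) - (xc (w k') + t * yc (w k'))| =
            |2 ^ M * (xc (w k) + t * yc (w k)) - 2 ^ M * (xc (w k') + t * yc (w k'))| / 2 ^ M := by
          rw [← mul_sub, abs_mul, abs_of_pos hM0]; field_simp
        rw [e, e2]
        have a1 := Int.floor_le (2 ^ M * (xc (w k) + t * yc (w k)))
        have a2 := Int.lt_floor_add_one (2 ^ M * (xc (w k) + t * yc (w k)))
        have b1 := Int.floor_le (2 ^ M * (xc (w k') + t * yc (w k')))
        have b2 := Int.lt_floor_add_one (2 ^ M * (xc (w k') + t * yc (w k')))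
        have c1 := abs_lt.1 (hw k hk)
        have c2 := abs_lt.1 (hw k' hk')
        simp only [hU] at c1 c2
        have d1 : (k : ℝ) + 1 ≤ k' := by exact_mod_cast hkk'
        have d2 : (k' : ℝ) + 1 ≤ L := by exact_mod_cast hI k' hk'
        have d3 : (0 : ℝ) ≤ k := Nat.cast_nonneg _
        have f1 : h ≤ k' * h - k * h := by nlinarith
        have f2 : k' * h - k * h ≤ L * h - h := by nlinarith
        have f3 : h ≤ L * h := by nlinarith
        constructor
        · gcongr
          rw [le_abs]; right
          linarith
        · gcongr
          rw [abs_le]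
          constructor <;> linarith
      intro k hk k' hk' hne
      rcases lt_or_gt_of_ne hne with hlt | hlt
      · exact hord k hk k' hk' hlt
      · rw [abs_sub_comm]; exact hord k' hk' k hk hlt

end Space

lemma abs_sum_range_shift_sub_le {φ : ℕ → ℝ} {M : ℝ} (h0 : ∀ j, 0 ≤ φ j) (hM : ∀ j, φ j ≤ M)
    (i l : ℕ) :
    |∑ j ∈ Finset.range i, φ (j + l) - ∑ j ∈ Finset.range i, φ j| ≤ l * M := by
  have h1 := Finset.sum_range_add φ l i
  have h2 := Finset.sum_range_add φ i l
  rw [add_comm i l, h1] at h2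
  simp only [add_comm l] at h2
  have b : ∀ s : ℕ → ℕ, 0 ≤ ∑ j ∈ Finset.range l, φ (s j) ∧
      ∑ j ∈ Finset.range l, φ (s j) ≤ l * M := fun s =>
    ⟨Finset.sum_nonneg fun _ _ => h0 _, by
      simpa using Finset.sum_le_sum (s := Finset.range l) fun j _ => hM (s j)⟩
  have b1 := b id
  have b2 := b (fun j => i + j)
  simp only [id] at b1
  rw [abs_le]
  constructor <;> linarith

lemma le_sum_range_shift_sub {φ : ℕ → ℝ} (hφ : Monotone φ) (i l : ℕ) :
    l * (φ i - φ l) ≤ ∑ j ∈ Finset.range i, (φ (j + l) - φ j) := by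
  have h1 := Finset.sum_range_add φ l i
  have h2 := Finset.sum_range_add φ i l
  rw [add_comm i l, h1] at h2
  simp only [add_comm l] at h2
  have b1 : ∑ j ∈ Finset.range l, φ j ≤ l * φ l := by
    simpa using Finset.sum_le_sum (s := Finset.range l)
      fun j hj => hφ (Finset.mem_range.1 hj).le
  have b2 : l * φ i ≤ ∑ j ∈ Finset.range l, φ (i + j) := by
    simpa using Finset.sum_le_sum (s := Finset.range l) (f := fun _ => φ i)
      fun j _ => hφ (Nat.le_add_right i j)
  rw [Finset.sum_sub_distrib]
  linarith

section Space

variable {A : Finset (ℝ × ℝ)} {K : ℕ}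

lemma avg_mi_le [Nonempty (Sp A K)] {t t' : ℝ} {j n l q a : ℕ}
    (hD : 2 ^ (n + l + q) * |t' - t| ≤ 2 ^ l) (hq : q = a + l + 1) (hK : j + (n + l) + a ≤ K) :
    avg (mi (Ts A K t (j + (n + l + q)) ⊓ Cs A K t t' j (n + l))
      (Ys A K (j + l) ⊓ Cs A K t t' j (n + l)) (Cs A K t t' j (n + l))) ≤
    ((cH A K t j (n + l + q) - cH A K t j (n + l)) -
      (cH A K t (j + l) (n + q) - cH A K t (j + l) n)) + 2 / 2 ^ a * Real.log 3 := by
  have h1 := ent_data_processing (f := Ts A K t (j + (n + l + q))) (Y := Ys A K (j + l))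
    (Q := Qs A K (j + l)) (B := Qs A K j ⊓ Ts A K t (j + (n + l)))
    (T := Ts A K t' (j + (n + l))) (Qs_le_Ys _)
  have h2 := avg_mi_proj (A := A) (K := K) t j n l q
  have h3 := ent_ambiguity_le (A := A) hD hq hK
  have hT : Ts A K t (j + (n + l + q)) ≤ Ts A K t (j + (n + l)) := by
    have := Ts_anti (A := A) (K := K) t (j + (n + l)) q
    rwa [add_assoc] at this
  have e : Ts A K t (j + (n + l + q)) ⊓ (Qs A K j ⊓ Ts A K t (j + (n + l))) =
      Ts A K t (j + (n + l + q)) ⊓ Qs A K j := by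
    rw [inf_comm (Qs A K j), ← inf_assoc, inf_eq_left.2 hT]
  rw [avg_mi] at h2 ⊢
  rw [Cs]
  rw [e] at h1 h2
  linarith

lemma Cs_comm (t t' : ℝ) (j n : ℕ) : Cs A K t t' j n = Cs A K t' t j n := inf_right_comm _ _ _

open Classical in
lemma avg_branching_le [Nonempty (Sp A K)] {t t' C α τ θ : ℝ} {i j n l q p L : ℕ} (hτ : 0 < τ)
    (hθ : 0 ≤ θ) (hP : ProjBound A t C α (1 / 2 ^ i)) (hi : j + (n + q) ≤ i)
    (hD₁ : 2 ^ l < 2 * (2 ^ (n + q) * (t' - t))) (hD₂ : 2 ^ (n + q) * (t' - t) ≤ 2 ^ l)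
    (hL : 0 < L) (hCL : C * (8 * L) ^ α ≤ L / 2) (hp : 4 ≤ p)
    (hLθ : L * (8 * √θ / τ + 32 / 2 ^ p) < 1 / 2) :
    θ * avg (fun ω => if Branching (Cs A K t t' j n) (j + l) p τ ω then (1 : ℝ) else 0) ≤
      avg (mi (Ts A K t (j + (n + q)) ⊓ Cs A K t t' j n)
        (Ys A K (j + l) ⊓ Cs A K t t' j n) (Cs A K t t' j n)) +
      avg (mi (Ts A K t' (j + (n + q)) ⊓ Cs A K t t' j n)
        (Ys A K (j + l) ⊓ Cs A K t t' j n) (Cs A K t t' j n)) := by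
  rw [mul_comm, ← avg_mul_const, ← avg_class (Cs A K t t' j n) (mi _ _ _),
    ← avg_class (Cs A K t t' j n) (mi (Ts A K t' _ ⊓ _) _ _), ← avg_add]
  refine avg_mono fun ω => ?_
  have n1 := sum_class_mi_nonneg (s := Ts A K t (j + (n + q)) ⊓ Cs A K t t' j n)
    (t := Ys A K (j + l) ⊓ Cs A K t t' j n) (c := Cs A K t t' j n) inf_le_right inf_le_right ω
  have n2 := sum_class_mi_nonneg (s := Ts A K t' (j + (n + q)) ⊓ Cs A K t t' j n)
    (t := Ys A K (j + l) ⊓ Cs A K t t' j n) (c := Cs A K t t' j n) inf_le_right inf_le_right ω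
  have hc : (0 : ℝ) < cnt (Cs A K t t' j n) ω := by exact_mod_cast cnt_pos _ _
  rw [← add_div, le_div_iff₀ hc]
  split_ifs with hb
  · by_contra hcon
    exact false_of_branching hτ hθ hP hi hD₁ hD₂ hL hCL hp hLθ hb (by linarith) (by linarith)
  · simpa using add_nonneg n1 n2

lemma avg_mi_nonneg {s t c : Setoid (Sp A K)} (hs : s ≤ c) (ht : t ≤ c) :
    0 ≤ avg (mi s t c) := by
  rw [avg_mi]
  linarith [ent_submod hs ht]

end Space

section Space

variable {A : Finset (ℝ × ℝ)} {K : ℕ}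

/-- The conditional entropies summed over the first `i` levels. -/
def SH (A : Finset (ℝ × ℝ)) (K : ℕ) (t : ℝ) (i m : ℕ) : ℝ :=
  ∑ j ∈ Finset.range i, cH A K t j m

lemma abs_sum_cH_shift_sub_le [Nonempty (Sp A K)] {t : ℝ} (ht : |t| ≤ 1) (i l m : ℕ) :
    |∑ j ∈ Finset.range i, cH A K t (j + l) m - SH A K t i m| ≤ l * ((m + 3) * Real.log 2) :=
  abs_sum_range_shift_sub_le (φ := fun j => cH A K t j m) (fun j => cH_nonneg t j m)
    (fun j => cH_le ht j m) i l

/-- The second difference of the summed conditional entropies. -/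
def SD (A : Finset (ℝ × ℝ)) (K : ℕ) (t : ℝ) (i n l q : ℕ) : ℝ :=
  (SH A K t i (n + l + q) - SH A K t i (n + l)) - (SH A K t i (n + q) - SH A K t i n)

lemma sum_avg_mi_le [Nonempty (Sp A K)] {t t' : ℝ} (ht : |t| ≤ 1) {i n l q a : ℕ}
    (hD : 2 ^ (n + l + q) * |t' - t| ≤ 2 ^ l) (hq : q = a + l + 1) (hK : i + (n + l) + a ≤ K) :
    ∑ j ∈ Finset.range i, avg (mi (Ts A K t (j + (n + l + q)) ⊓ Cs A K t t' j (n + l))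
      (Ys A K (j + l) ⊓ Cs A K t t' j (n + l)) (Cs A K t t' j (n + l))) ≤
    SD A K t i n l q + i * (2 / 2 ^ a * Real.log 3) + 2 * (l * ((n + q + 3) * Real.log 2)) := by
  have h1 := Finset.sum_le_sum (s := Finset.range i) fun j hj =>
    avg_mi_le (A := A) (K := K) (j := j) hD hq (by have := Finset.mem_range.1 hj; omega)
  simp only [Finset.sum_add_distrib, Finset.sum_sub_distrib, Finset.sum_const,
    Finset.card_range, nsmul_eq_mul] at h1
  have h2 := abs_le.1 (abs_sum_cH_shift_sub_le (A := A) (K := K) ht i l (n + q))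
  have h3 := abs_le.1 (abs_sum_cH_shift_sub_le (A := A) (K := K) ht i l n)
  have h4 : (l : ℝ) * ((n + 3) * Real.log 2) ≤ l * ((n + q + 3) * Real.log 2) := by
    gcongr
    linarith [(Nat.cast_nonneg q : (0 : ℝ) ≤ q)]
  push_cast at h2
  unfold SD
  simp only [SH] at *
  linarith

lemma sum_ite_boundary_le (i m : ℕ) :
    ∑ j ∈ Finset.range i, (if j + m ≤ i then (0 : ℝ) else 1) ≤ m := by
  have e : ∀ j, (if j + m ≤ i then (0 : ℝ) else 1) = if ¬ (j + m ≤ i) then (1 : ℝ) else 0 := by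
    intro j; split_ifs <;> simp_all
  simp only [e]
  rw [Finset.sum_boole]
  have : ((Finset.range i).filter fun j => ¬ (j + m ≤ i)) ⊆ Finset.Ico (i - m) i := by
    intro j hj
    simp only [Finset.mem_filter, Finset.mem_range, Finset.mem_Ico] at hj ⊢
    omega
  have h := Finset.card_le_card this
  rw [Nat.card_Ico] at h
  exact_mod_cast (by omega : _ ≤ m)

lemma ent_Qs_monotone : Monotone fun j => ent (Qs A K j) := fun j j' h => by
  obtain ⟨m, rfl⟩ := Nat.exists_eq_add_of_le h
  exact ent_anti (Qs_anti j m)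

open Classical in
lemma le_sum_avg_branching [Nonempty (Sp A K)] {t t' : ℝ} (ht : |t| ≤ 1)
    (hA : ∀ z ∈ A, |z.1| ≤ 1 ∧ |z.2| ≤ 1) {i : ℕ}
    (hsep : ∀ z ∈ A, ∀ z' ∈ A, z ≠ z' → 1 / 2 ^ i ≤ |z.1 - z'.1| ∨ 1 / 2 ^ i ≤ |z.2 - z'.2|)
    {n l p : ℕ} (htt' : 2 ^ (n + (l + p)) * |t' - t| ≤ 1) :
    SH A K t i (n + p) - SH A K t i (n + (l + p)) + l * Real.log A.card -
      i * (2 * Real.log 5 + 3 * Real.log 2) -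
      (l * ((n + p + 3) * Real.log 2) + l * (2 * ((l + 3) * Real.log 2))) ≤
    l * Real.log 2 * ∑ j ∈ Finset.range i, avg (fun ω =>
      if Branching (Cs A K t t' j (n + (l + p))) (j + (l + p)) p (1 / 2 ^ (2 * (l + p))) ω
        then (1 : ℝ) else 0) := by
  have e : n + (l + p) = n + p + l := by omega
  have h1 : ∀ j ∈ Finset.range i, (cH A K t (j + l) (n + p) + ent (Qs A K (j + l))) -
      (cH A K t j (n + (l + p)) + ent (Qs A K j)) - 2 * Real.log 5 - 3 * Real.log 2 ≤
      l * Real.log 2 * avg (fun ω =>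
      if Branching (Cs A K t t' j (n + (l + p))) (j + (l + p)) p (1 / 2 ^ (2 * (l + p))) ω
        then (1 : ℝ) else 0) := by
    intro j _
    have a1 := le_ent_strip (A := A) (K := K) ht (j := j) (n := n + p) (l := l) (e ▸ htt')
    have a2 := ent_strip_le (A := A) (K := K) (C := Cs A K t t' j (n + (l + p))) (j := j)
      (l := l) (p := p) (inf_le_left.trans inf_le_left)
    rw [← e] at a1
    linarith
  have h2 := Finset.sum_le_sum h1
  rw [← Finset.mul_sum] at h2
  refine le_trans ?_ h2
  have h3 := abs_le.1 (abs_sum_cH_shift_sub_le (A := A) (K := K) ht i l (n + p))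
  have h4 := le_sum_range_shift_sub (ent_Qs_monotone (A := A) (K := K)) i l
  have h5 := ent_Qs_eq (K := K) hsep
  have h6 := ent_Qs_le (K := K) hA l
  have h7 : l * (Real.log A.card - 2 * ((l + 3) * Real.log 2)) ≤
      l * (ent (Qs A K i) - ent (Qs A K l)) :=
    mul_le_mul_of_nonneg_left (by linarith) (Nat.cast_nonneg l)
  simp only [Finset.sum_add_distrib, Finset.sum_sub_distrib, Finset.sum_const,
    Finset.card_range, nsmul_eq_mul] at h4 ⊢
  push_cast at h3
  simp only [SH] at *
  linarith

open Classical in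
lemma level_inequality [Nonempty (Sp A K)] {t t' C α θ : ℝ} {i n l q p a L : ℕ}
    (ht : |t| ≤ 1) (ht' : |t'| ≤ 1) (hθ : 0 ≤ θ) (hP : ProjBound A t C α (1 / 2 ^ i))
    (hA : ∀ z ∈ A, |z.1| ≤ 1 ∧ |z.2| ≤ 1)
    (hsep : ∀ z ∈ A, ∀ z' ∈ A, z ≠ z' → 1 / 2 ^ i ≤ |z.1 - z'.1| ∨ 1 / 2 ^ i ≤ |z.2 - z'.2|)
    (htt' : t < t') (hq : q = a + (l + p) + 1) (hK : i + (n + (l + p)) + a ≤ K)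
    (hD₁ : 2 ^ (l + p) < 2 * (2 ^ (n + (l + p) + q) * (t' - t)))
    (hD₂ : 2 ^ (n + (l + p) + q) * (t' - t) ≤ 2 ^ (l + p))
    (hL : 0 < L) (hCL : C * (8 * L) ^ α ≤ L / 2) (hp : 4 ≤ p)
    (hLθ : L * (8 * √θ / (1 / 2 ^ (2 * (l + p))) + 32 / 2 ^ p) < 1 / 2) :
    θ * (SH A K t i (n + p) - SH A K t i (n + (l + p)) + l * Real.log A.card -
      i * (2 * Real.log 5 + 3 * Real.log 2) -
      (l * ((n + p + 3) * Real.log 2) + l * (2 * ((l + 3) * Real.log 2)))) ≤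
    l * Real.log 2 * (SD A K t i n (l + p) q + SD A K t' i n (l + p) q +
      i * (4 / 2 ^ a * Real.log 3) + 4 * ((l + p) * ((n + q + 3) * Real.log 2)) +
      θ * (n + (l + p) + q)) := by
  have habs : |t' - t| = t' - t := abs_of_pos (sub_pos.2 htt')
  have hlog : 0 < Real.log 2 := Real.log_pos (by norm_num)
  have hsmall : 2 ^ (n + (l + p)) * |t' - t| ≤ 1 := by
    rw [habs]
    have h1 : (2 : ℝ) ^ (n + (l + p) + q) * (t' - t) =
        2 ^ (n + (l + p)) * (t' - t) * 2 ^ q := by rw [pow_add _ _ q]; ring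
    have h2 : (2 : ℝ) ^ (l + p) ≤ 2 ^ q := pow_le_pow_right₀ (by norm_num) (by omega)
    have h3 : (0 : ℝ) < 2 ^ q := by positivity
    rw [h1] at hD₂
    exact le_of_mul_le_mul_right (by linarith) h3
  refine (mul_le_mul_of_nonneg_left
    (le_sum_avg_branching (K := K) ht hA hsep hsmall) hθ).trans ?_
  rw [mul_left_comm]
  refine mul_le_mul_of_nonneg_left ?_ (by positivity)
  have m1 := sum_avg_mi_le (A := A) (K := K) (t := t) (t' := t') ht (habs.symm ▸ hD₂) hq hK
  have m2 := sum_avg_mi_le (A := A) (K := K) (t := t') (t' := t) ht'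
    (by rw [abs_sub_comm, habs]; exact hD₂) hq hK
  have hj : ∀ j ∈ Finset.range i, θ * avg (fun ω =>
      if Branching (Cs A K t t' j (n + (l + p))) (j + (l + p)) p (1 / 2 ^ (2 * (l + p))) ω
        then (1 : ℝ) else 0) ≤
      avg (mi (Ts A K t (j + (n + (l + p) + q)) ⊓ Cs A K t t' j (n + (l + p)))
        (Ys A K (j + (l + p)) ⊓ Cs A K t t' j (n + (l + p))) (Cs A K t t' j (n + (l + p)))) +
      avg (mi (Ts A K t' (j + (n + (l + p) + q)) ⊓ Cs A K t' t j (n + (l + p)))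
        (Ys A K (j + (l + p)) ⊓ Cs A K t' t j (n + (l + p))) (Cs A K t' t j (n + (l + p)))) +
      θ * (if j + (n + (l + p) + q) ≤ i then (0 : ℝ) else 1) := by
    intro j _
    rw [Cs_comm t' t]
    split_ifs with hji
    · rw [mul_zero, add_zero]
      exact avg_branching_le (by positivity) hθ hP hji hD₁ hD₂ hL hCL hp hLθ
    · have a1 := avg_mi_nonneg (s := Ts A K t (j + (n + (l + p) + q)) ⊓
        Cs A K t t' j (n + (l + p))) (t := Ys A K (j + (l + p)) ⊓ Cs A K t t' j (n + (l + p)))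
        inf_le_right inf_le_right
      have a2 := avg_mi_nonneg (s := Ts A K t' (j + (n + (l + p) + q)) ⊓
        Cs A K t t' j (n + (l + p))) (t := Ys A K (j + (l + p)) ⊓ Cs A K t t' j (n + (l + p)))
        inf_le_right inf_le_right
      have a3 : avg (fun ω : Sp A K =>
          if Branching (Cs A K t t' j (n + (l + p))) (j + (l + p)) p (1 / 2 ^ (2 * (l + p))) ω
          then (1 : ℝ) else 0) ≤ 1 := by
        have := avg_mono (Ω := Sp A K) (g := fun _ => 1) (f := fun ω : Sp A K =>
          if Branching (Cs A K t t' j (n + (l + p))) (j + (l + p)) p (1 / 2 ^ (2 * (l + p))) ω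
          then (1 : ℝ) else 0) fun ω => by split_ifs <;> norm_num
        rwa [avg_const] at this
      have a4 := mul_le_mul_of_nonneg_left a3 hθ
      linarith
  have h := Finset.sum_le_sum hj
  rw [← Finset.mul_sum, Finset.sum_add_distrib, Finset.sum_add_distrib, ← Finset.mul_sum] at h
  have hbd := mul_le_mul_of_nonneg_left (sum_ite_boundary_le i (n + (l + p) + q)) hθ
  push_cast at m1 m2 hbd
  have e4 : (4 : ℝ) / 2 ^ a = 2 * (2 / 2 ^ a) := by ring
  rw [e4]
  linarith

end Space

lemma sub_le_mul_of_increment_le {F : ℕ → ℝ} {s : ℝ} {k : ℕ} (h : ∀ n, k ≤ n → F (n + 1) - F n ≤ s)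
    {n : ℕ} (hn : k ≤ n) (l : ℕ) : F (n + l) - F n ≤ l * s := by
  induction l with
  | zero => simp
  | succ l ih =>
    have := h (n + l) (by omega)
    rw [← add_assoc]
    push_cast
    linarith

lemma mul_le_sub_of_le_increment {F : ℕ → ℝ} {s : ℝ} {k : ℕ} (h : ∀ n, k ≤ n → s ≤ F (n + 1) - F n)
    {n : ℕ} (hn : k ≤ n) (l : ℕ) : l * s ≤ F (n + l) - F n := by
  have := sub_le_mul_of_increment_le (F := fun n => - F n) (s := -s) (k := k)
    (fun n hn => by linarith [h n hn]) hn l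
  linarith

lemma increment_le_of_convex {F : ℕ → ℝ} {b s : ℝ}
    (hF : ∀ n, F (n + 1) - F n ≤ F (n + 2) - F (n + 1)) (hb : ∀ n, F n ≤ b + s * n) (k : ℕ) :
    F (k + 1) - F k ≤ s := by
  by_contra! hcon
  have hmono : Monotone fun n => F (n + 1) - F n := monotone_nat_of_le_succ hF
  obtain ⟨l, hl⟩ := exists_nat_gt ((b + s * k - F k) / (F (k + 1) - F k - s))
  rw [div_lt_iff₀ (by linarith)] at hl
  have h1 := mul_le_sub_of_le_increment (F := F) (s := F (k + 1) - F k) (k := k)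
    (fun n hn => hmono hn) le_rfl l
  have h2 := hb (k + l)
  push_cast at h2
  nlinarith

lemma exists_second_difference_le {F : ℕ → ℝ} {b s : ℝ}
    (hF : ∀ n, F (n + 1) - F n ≤ F (n + 2) - F (n + 1)) (hb : ∀ n, F n ≤ b + s * n)
    {ε : ℝ} (hε : 0 < ε) :
    ∃ k, ∀ n, k ≤ n → ∀ l q : ℕ, (F (n + l + q) - F (n + l)) - (F (n + q) - F n) ≤ q * ε := by
  have hmono : Monotone fun n => F (n + 1) - F n := monotone_nat_of_le_succ hF
  have hbdd : BddAbove (Set.range fun n => F (n + 1) - F n) :=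
    ⟨s, by rintro _ ⟨n, rfl⟩; exact increment_le_of_convex hF hb n⟩
  obtain ⟨k, hk⟩ := exists_lt_of_lt_ciSup
    (sub_lt_self (⨆ n, (F (n + 1) - F n)) hε)
  refine ⟨k, fun n hn l q => ?_⟩
  have h1 := sub_le_mul_of_increment_le (F := F) (s := ⨆ n, (F (n + 1) - F n)) (k := 0)
    (fun n _ => le_ciSup hbdd n) (Nat.zero_le (n + l)) q
  have h2 := mul_le_sub_of_le_increment (F := F) (s := (⨆ n, (F (n + 1) - F n)) - ε) (k := k)
    (fun n hn => hk.le.trans (hmono hn)) hn q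
  linarith

lemma exists_lt_sub_lt_of_infinite {S : Set ℝ} (hS : S.Infinite) (hb : ∀ t ∈ S, |t| ≤ 1)
    {η : ℝ} (hη : 0 < η) : ∃ t ∈ S, ∃ t' ∈ S, t < t' ∧ t' - t < η := by
  have hmap : Set.MapsTo (fun t : ℝ => ⌊t / η⌋) S (Set.Icc ⌊-1 / η⌋ ⌊1 / η⌋) := fun t ht => by
    obtain ⟨h1, h2⟩ := abs_le.1 (hb t ht)
    exact ⟨Int.floor_le_floor (by gcongr), Int.floor_le_floor (by gcongr)⟩
  obtain ⟨t, ht, t', ht', hne, he⟩ := hS.exists_ne_map_eq_of_mapsTo hmap (Set.finite_Icc _ _)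
  have h := Int.abs_sub_lt_one_of_floor_eq_floor he
  rw [← sub_div, abs_div, abs_of_pos hη, div_lt_one hη] at h
  rcases lt_or_gt_of_ne hne with hlt | hlt
  · exact ⟨t, ht, t', ht', hlt, by rw [abs_sub_comm] at h; exact (le_abs_self _).trans_lt h⟩
  · exact ⟨t', ht', t, ht, hlt, (le_abs_self _).trans_lt h⟩

section Limit

variable {A : ℕ → Finset (ℝ × ℝ)}

lemma exists_limit_SH (hne : ∀ i, (A i).Nonempty) (𝒰 : Ultrafilter ℕ) {t : ℝ} (ht : |t| ≤ 1)
    (m : ℕ) : ∃ F : ℝ, Tendsto (fun i => SH (A i) (2 * i) t i m / i) 𝒰 (𝓝 F) := by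
  have hmem : ∀ i, SH (A i) (2 * i) t i m / i ∈ Set.Icc (0 : ℝ) ((m + 3) * Real.log 2) := by
    intro i
    have : Nonempty (Sp (A i) (2 * i)) := ⟨(⟨_, (hne i).choose_spec⟩, 0)⟩
    refine ⟨div_nonneg (Finset.sum_nonneg fun j _ => cH_nonneg t j m) (Nat.cast_nonneg i), ?_⟩
    refine div_le_of_le_mul₀ (Nat.cast_nonneg i) (by positivity) ?_
    have := Finset.sum_le_sum (s := Finset.range i) fun j _ =>
      cH_le (A := A i) (K := 2 * i) ht j m
    simp only [Finset.sum_const, Finset.card_range, nsmul_eq_mul] at this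
    unfold SH
    linarith
  obtain ⟨F, -, hF⟩ := (isCompact_Icc (a := (0 : ℝ)) (b := (m + 3) * Real.log 2)).ultrafilter_le_nhds
    (𝒰.map fun i => SH (A i) (2 * i) t i m / i)
    (by rw [Filter.le_principal_iff]; exact Filter.mem_map.2 (Filter.Eventually.of_forall hmem))
  exact ⟨F, hF⟩

lemma tendsto_const_div {𝒰 : Ultrafilter ℕ} (h𝒰 : (𝒰 : Filter ℕ) ≤ atTop) (E : ℝ) :
    Tendsto (fun i : ℕ => E / i) 𝒰 (𝓝 0) :=
  (tendsto_const_div_atTop_nhds_zero_nat E).mono_left h𝒰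

lemma limit_SH_convex (hne : ∀ i, (A i).Nonempty) {𝒰 : Ultrafilter ℕ}
    (h𝒰 : (𝒰 : Filter ℕ) ≤ atTop) {t : ℝ} (ht : |t| ≤ 1) {F : ℕ → ℝ}
    (hF : ∀ m, Tendsto (fun i => SH (A i) (2 * i) t i m / i) 𝒰 (𝓝 (F m))) (n : ℕ) :
    F (n + 1) - F n ≤ F (n + 2) - F (n + 1) := by
  set E : ℝ := (n + 4) * Real.log 2 + (n + 3) * Real.log 2 with hE
  have h1 := ((hF (n + 1)).sub (hF n)).sub (tendsto_const_div h𝒰 E)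
  have h2 := (hF (n + 2)).sub (hF (n + 1))
  rw [sub_zero] at h1
  refine le_of_tendsto_of_tendsto h1 h2 (Eventually.of_forall fun i => ?_)
  have : Nonempty (Sp (A i) (2 * i)) := ⟨(⟨_, (hne i).choose_spec⟩, 0)⟩
  have h3 := Finset.sum_le_sum (s := Finset.range i) fun j _ =>
    cH_convex (A := A i) (K := 2 * i) t j n
  rw [Finset.sum_sub_distrib, Finset.sum_sub_distrib] at h3
  have h4 := abs_le.1 (abs_sum_cH_shift_sub_le (A := A i) (K := 2 * i) ht i 1 (n + 1))
  have h5 := abs_le.1 (abs_sum_cH_shift_sub_le (A := A i) (K := 2 * i) ht i 1 n)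
  simp only [← sub_div]
  refine div_le_div_of_nonneg_right ?_ (Nat.cast_nonneg i)
  push_cast at h4 h5
  simp only [SH] at *
  rw [hE]
  linarith

lemma limit_SH_le (hne : ∀ i, (A i).Nonempty) {𝒰 : Ultrafilter ℕ}
    (h𝒰 : (𝒰 : Filter ℕ) ≤ atTop) {t C α : ℝ} (ht : |t| ≤ 1) (hC : 1 ≤ C) (hα : 0 ≤ α)
    (hP : ∀ᶠ i in atTop, ProjBound (A i) t C α (1 / 2 ^ i)) {F : ℕ → ℝ}
    (hF : ∀ m, Tendsto (fun i => SH (A i) (2 * i) t i m / i) 𝒰 (𝓝 (F m))) (m : ℕ) :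
    F m ≤ (Real.log (2 * C) + α * Real.log 2) + α * Real.log 2 * m := by
  set B : ℝ := (Real.log (2 * C) + α * Real.log 2) + α * Real.log 2 * m with hB
  set E : ℝ := m * ((m + 3) * Real.log 2) with hE
  have hlog : 0 < Real.log 2 := Real.log_pos (by norm_num)
  have hlogC : 0 ≤ Real.log (2 * C) := Real.log_nonneg (by linarith)
  have h2 := (tendsto_const_nhds (x := B) (f := (𝒰 : Filter ℕ))).add (tendsto_const_div h𝒰 E)
  rw [add_zero] at h2
  refine le_of_tendsto_of_tendsto (hF m) h2 ?_
  filter_upwards [h𝒰 hP, h𝒰 (eventually_gt_atTop 0)] with i hPi hi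
  have : Nonempty (Sp (A i) (2 * i)) := ⟨(⟨_, (hne i).choose_spec⟩, 0)⟩
  have hi' : (0 : ℝ) < i := by exact_mod_cast hi
  have hB0 : 0 ≤ B := by positivity
  have hj : ∀ j ∈ Finset.range i, cH (A i) (2 * i) t j m ≤
      B + (if j + m ≤ i then (0 : ℝ) else 1) * ((m + 3) * Real.log 2) := by
    intro j _
    split_ifs with hjm
    · have := cH_le_of_projBound (K := 2 * i) (by linarith) hPi ht hjm
      rw [hB]; linarith
    · have := cH_le (A := A i) (K := 2 * i) ht j m
      linarith
  have h3 := Finset.sum_le_sum hj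
  rw [Finset.sum_add_distrib, ← Finset.sum_mul, Finset.sum_const, Finset.card_range,
    nsmul_eq_mul] at h3
  have h4 := mul_le_mul_of_nonneg_right (sum_ite_boundary_le i m)
    (by positivity : 0 ≤ (m + 3) * Real.log 2)
  rw [div_le_iff₀ hi', add_mul, div_mul_cancel₀ _ hi'.ne']
  unfold SH
  linarith

lemma limit_level_inequality (hA : ∀ i, ∀ z ∈ A i, |z.1| ≤ 1 ∧ |z.2| ≤ 1)
    (hsep : ∀ i, ∀ z ∈ A i, ∀ z' ∈ A i, z ≠ z' →
      1 / 2 ^ i ≤ |z.1 - z'.1| ∨ 1 / 2 ^ i ≤ |z.2 - z'.2|)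
    {c β : ℝ} (hc : 0 < c) (hcard : ∀ i : ℕ, c * 2 ^ (β * i) ≤ (A i).card)
    (hne : ∀ i, (A i).Nonempty) {𝒰 : Ultrafilter ℕ} (h𝒰 : (𝒰 : Filter ℕ) ≤ atTop)
    {t t' C α θ : ℝ} (ht : |t| ≤ 1) (ht' : |t'| ≤ 1) (hθ : 0 ≤ θ)
    (hP : ∀ᶠ i in atTop, ProjBound (A i) t C α (1 / 2 ^ i)) {F F' : ℕ → ℝ}
    (hF : ∀ m, Tendsto (fun i => SH (A i) (2 * i) t i m / i) 𝒰 (𝓝 (F m)))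
    (hF' : ∀ m, Tendsto (fun i => SH (A i) (2 * i) t' i m / i) 𝒰 (𝓝 (F' m)))
    {n l q p a L : ℕ} (htt' : t < t') (hq : q = a + (l + p) + 1)
    (hD₁ : 2 ^ (l + p) < 2 * (2 ^ (n + (l + p) + q) * (t' - t)))
    (hD₂ : 2 ^ (n + (l + p) + q) * (t' - t) ≤ 2 ^ (l + p))
    (hL : 0 < L) (hCL : C * (8 * L) ^ α ≤ L / 2) (hp : 4 ≤ p)
    (hLθ : L * (8 * √θ / (1 / 2 ^ (2 * (l + p))) + 32 / 2 ^ p) < 1 / 2) :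
    θ * (F (n + p) - F (n + (l + p)) + l * (β * Real.log 2) -
      (2 * Real.log 5 + 3 * Real.log 2)) ≤
    l * Real.log 2 *
      (((F (n + (l + p) + q) - F (n + (l + p))) - (F (n + q) - F n)) +
       ((F' (n + (l + p) + q) - F' (n + (l + p))) - (F' (n + q) - F' n)) +
      4 / 2 ^ a * Real.log 3) := by
  set E₁ : ℝ := l * ((n + p + 3) * Real.log 2) + l * (2 * ((l + 3) * Real.log 2)) with hE₁
  set E₂ : ℝ := 4 * ((l + p) * ((n + q + 3) * Real.log 2)) + θ * (n + (l + p) + q) with hE₂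
  have g1 : Tendsto (fun i : ℕ => θ * (SH (A i) (2 * i) t i (n + p) / i -
      SH (A i) (2 * i) t i (n + (l + p)) / i + l * (β * Real.log 2) -
      (2 * Real.log 5 + 3 * Real.log 2) + (l * Real.log c - E₁) / i)) 𝒰
      (𝓝 (θ * (F (n + p) - F (n + (l + p)) + l * (β * Real.log 2) -
      (2 * Real.log 5 + 3 * Real.log 2) + 0))) :=
    (((((hF _).sub (hF _)).add_const _).sub_const _).add (tendsto_const_div h𝒰 _)).const_mul θ
  have g2 : Tendsto (fun i : ℕ => l * Real.log 2 *
      (((SH (A i) (2 * i) t i (n + (l + p) + q) / i - SH (A i) (2 * i) t i (n + (l + p)) / i) -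
        (SH (A i) (2 * i) t i (n + q) / i - SH (A i) (2 * i) t i n / i)) +
       ((SH (A i) (2 * i) t' i (n + (l + p) + q) / i - SH (A i) (2 * i) t' i (n + (l + p)) / i) -
        (SH (A i) (2 * i) t' i (n + q) / i - SH (A i) (2 * i) t' i n / i)) +
      4 / 2 ^ a * Real.log 3 + E₂ / i)) 𝒰 (𝓝 (l * Real.log 2 *
      (((F (n + (l + p) + q) - F (n + (l + p))) - (F (n + q) - F n)) +
       ((F' (n + (l + p) + q) - F' (n + (l + p))) - (F' (n + q) - F' n)) +
      4 / 2 ^ a * Real.log 3 + 0))) :=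
    (((((hF _).sub (hF _)).sub ((hF _).sub (hF _))).add
      (((hF' _).sub (hF' _)).sub ((hF' _).sub (hF' _)))).add_const _ |>.add
        (tendsto_const_div h𝒰 _)).const_mul _
  rw [add_zero] at g1 g2
  refine le_of_tendsto_of_tendsto g1 g2 ?_
  filter_upwards [h𝒰 hP, h𝒰 (eventually_gt_atTop (n + (l + p) + a))] with i hPi hi
  have : Nonempty (Sp (A i) (2 * i)) := ⟨(⟨_, (hne i).choose_spec⟩, 0)⟩
  have hi' : (0 : ℝ) < i := by exact_mod_cast (by omega : 0 < i)
  have h := level_inequality (K := 2 * i) ht ht' hθ hPi (hA i) (hsep i) htt' hq (by omega)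
    hD₁ hD₂ hL hCL hp hLθ
  have hlogA : Real.log c + i * (β * Real.log 2) ≤ Real.log (A i).card := by
    have := Real.log_le_log (by positivity) (hcard i)
    rw [Real.log_mul hc.ne' (by positivity), Real.log_rpow (by norm_num)] at this
    linarith
  have hlogA' := mul_le_mul_of_nonneg_left hlogA (Nat.cast_nonneg l)
  have hθA := mul_le_mul_of_nonneg_left hlogA' hθ
  refine le_of_mul_le_mul_right ?_ hi'
  have e1 : ∀ x : ℝ, x / i * i = x := fun x => div_mul_cancel₀ _ hi'.ne'
  calc _ = θ * (SH (A i) (2 * i) t i (n + p) / i * i - SH (A i) (2 * i) t i (n + (l + p)) / i * i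
        + l * (i * (β * Real.log 2)) - i * (2 * Real.log 5 + 3 * Real.log 2) +
        (l * Real.log c - E₁) / i * i) := by ring
    _ ≤ l * Real.log 2 * (SD (A i) (2 * i) t i n (l + p) q + SD (A i) (2 * i) t' i n (l + p) q +
      i * (4 / 2 ^ a * Real.log 3) + E₂ / i * i) := by
        simp only [e1]
        rw [hE₂, hE₁]
        refine le_trans ?_ (h.trans (le_of_eq (by ring)))
        nlinarith [hθA]
    _ = _ := by
        unfold SD
        field_simp

end Limit

lemma exists_nat_mul_rpow_le {C α : ℝ} (hα : α < 1) :
    ∃ L : ℕ, 0 < L ∧ C * (8 * L) ^ α ≤ L / 2 := by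
  have h := ((tendsto_rpow_atTop (by linarith : 0 < 1 - α)).comp
    tendsto_natCast_atTop_atTop).eventually_ge_atTop (2 * C * 8 ^ α)
  obtain ⟨L, hL, hL0⟩ := (h.and (eventually_gt_atTop 0)).exists
  refine ⟨L, hL0, ?_⟩
  have hL' : (0 : ℝ) < L := by exact_mod_cast hL0
  have e : (L : ℝ) = (L : ℝ) ^ α * (L : ℝ) ^ (1 - α) := by
    rw [← Real.rpow_add hL', add_sub_cancel, Real.rpow_one]
  have h2 := mul_le_mul_of_nonneg_left hL (by positivity : 0 ≤ (L : ℝ) ^ α)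
  rw [Real.mul_rpow (by norm_num) hL'.le]
  simp only [Function.comp] at h2
  rw [← e] at h2
  linarith

lemma exists_mul_le_two_pow {x y : ℝ} (hy : 0 < y) : ∃ p : ℕ, 4 ≤ p ∧ x / 2 ^ p ≤ y := by
  obtain ⟨p, hp⟩ := pow_unbounded_of_one_lt (x / y) (by norm_num : (1 : ℝ) < 2)
  refine ⟨p + 4, by omega, ?_⟩
  rw [div_lt_iff₀ hy] at hp
  rw [div_le_iff₀ (by positivity), pow_add]
  have : 0 < y * 2 ^ p := by positivity
  linarith

/-- A sequence of finite planar sets of dimension greater than `α` cannot have uncountably many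
projections with covering numbers of exponent `α < 1`. -/
theorem false_of_uncountable_projBound {α β c C : ℝ} (hα : 0 ≤ α) (hα₁ : α < 1) (hαβ : α < β)
    (hc : 0 < c) (hC : 1 ≤ C) (A : ℕ → Finset (ℝ × ℝ))
    (hA : ∀ i, ∀ z ∈ A i, |z.1| ≤ 1 ∧ |z.2| ≤ 1)
    (hsep : ∀ i, ∀ z ∈ A i, ∀ z' ∈ A i, z ≠ z' →
      1 / 2 ^ i ≤ |z.1 - z'.1| ∨ 1 / 2 ^ i ≤ |z.2 - z'.2|)
    (hcard : ∀ i : ℕ, c * 2 ^ (β * i) ≤ (A i).card) {G : Set ℝ} (hG : ¬ G.Countable)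
    (hG₁ : ∀ t ∈ G, |t| ≤ 1)
    (hP : ∀ t ∈ G, ∀ᶠ i in atTop, ProjBound (A i) t C α (1 / 2 ^ i)) : False := by
  have hlog : 0 < Real.log 2 := Real.log_pos (by norm_num)
  have hlog3 : 0 < Real.log 3 := Real.log_pos (by norm_num)
  have hne : ∀ i, (A i).Nonempty := by
    intro i
    have h1 : 0 < c * (2 : ℝ) ^ (β * i) := by positivity
    have h2 : (0 : ℝ) < (A i).card := h1.trans_le (hcard i)
    exact Finset.card_pos.1 (by exact_mod_cast h2)
  obtain ⟨L, hL, hCL⟩ := exists_nat_mul_rpow_le (C := C) hα₁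
  have hL' : (0 : ℝ) < L := by exact_mod_cast hL
  obtain ⟨p, hp, hLp⟩ := exists_mul_le_two_pow (x := 32 * L) (y := 1 / 8) (by norm_num)
  obtain ⟨l, hl⟩ := exists_nat_ge ((2 * Real.log 5 + 3 * Real.log 2 + 1) / ((β - α) * Real.log 2))
  rw [div_le_iff₀ (mul_pos (by linarith) hlog)] at hl
  set τ : ℝ := 1 / 2 ^ (2 * (l + p)) with hτ
  have hτ0 : 0 < τ := by positivity
  set θ : ℝ := (τ / (64 * L)) ^ 2 with hθ
  have hθ0 : 0 < θ := by positivity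
  have hLθ : L * (8 * √θ / τ + 32 / 2 ^ p) < 1 / 2 := by
    have e : L * (8 * √θ / τ) = 1 / 8 := by
      rw [hθ, Real.sqrt_sq (by positivity)]
      field_simp
      norm_num
    have e2 : (L : ℝ) * (32 / 2 ^ p) = 32 * L / 2 ^ p := by ring
    rw [mul_add, e, e2]
    linarith
  obtain ⟨a, -, ha⟩ := exists_mul_le_two_pow (x := l * Real.log 2 * (4 * Real.log 3)) (y := θ / 4)
    (by positivity)
  set q := a + (l + p) + 1 with hq
  set ε : ℝ := θ / (8 * q * (l * Real.log 2 + 1)) with hε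
  have hq0 : (0 : ℝ) < q := by exact_mod_cast (by omega : 0 < q)
  have hε0 : 0 < ε := by positivity
  have h𝒰 : ((Filter.hyperfilter ℕ : Ultrafilter ℕ) : Filter ℕ) ≤ atTop :=
    Nat.hyperfilter_le_atTop
  choose! F hF using fun (t : ℝ) (ht : |t| ≤ 1) (m : ℕ) =>
    exists_limit_SH hne (Filter.hyperfilter ℕ) ht m
  have hconv : ∀ t ∈ G, ∀ n, F t (n + 1) - F t n ≤ F t (n + 2) - F t (n + 1) := fun t ht n =>
    limit_SH_convex hne h𝒰 (hG₁ t ht) (hF t (hG₁ t ht)) n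
  have hbd : ∀ t ∈ G, ∀ m : ℕ, F t m ≤ (Real.log (2 * C) + α * Real.log 2) +
      α * Real.log 2 * m := fun t ht m =>
    limit_SH_le hne h𝒰 (hG₁ t ht) hC hα (hP t ht) (hF t (hG₁ t ht)) m
  choose! k hk using fun t (ht : t ∈ G) => exists_second_difference_le (hconv t ht) (hbd t ht) hε0
  obtain ⟨k₀, hk₀⟩ : ∃ k₀, ¬ {t ∈ G | k t = k₀}.Countable := by
    by_contra! hcon
    refine hG ((Set.countable_iUnion hcon).mono fun t ht => ?_)
    exact Set.mem_iUnion.2 ⟨k t, ht, rfl⟩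
  obtain ⟨t, ⟨ht, hkt⟩, t', ⟨ht', hkt'⟩, htt', hδ⟩ := exists_lt_sub_lt_of_infinite
    (fun h => hk₀ (Set.Finite.countable h)) (fun t ht => hG₁ t ht.1)
    (η := 1 / 2 ^ (k₀ + q)) (by positivity)
  have hδ0 : 0 < t' - t := sub_pos.2 htt'
  have hδ1 : (2 : ℝ) ^ (k₀ + q) < 1 / (t' - t) := by
    rw [lt_div_iff₀ (by positivity)] at hδ
    rw [lt_div_iff₀ hδ0]
    linarith
  obtain ⟨N, hN₁, hN₂⟩ := exists_nat_pow_near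
    ((one_le_pow₀ (by norm_num : (1 : ℝ) ≤ 2)).trans hδ1.le) (by norm_num : (1 : ℝ) < 2)
  have hN : k₀ + q < N + 1 := (pow_lt_pow_iff_right₀ (by norm_num : (1 : ℝ) < 2)).1
    (hδ1.trans hN₂)
  obtain ⟨n, rfl⟩ : ∃ n, N = n + q := ⟨N - q, by omega⟩
  have hn : k₀ ≤ n := by omega
  rw [le_div_iff₀ hδ0] at hN₁
  rw [div_lt_iff₀ hδ0, pow_succ] at hN₂
  have epow : (2 : ℝ) ^ (n + (l + p) + q) * (t' - t) =
      2 ^ (n + q) * (t' - t) * 2 ^ (l + p) := by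
    rw [add_right_comm, pow_add _ (n + q)]; ring
  have hlp : (0 : ℝ) < 2 ^ (l + p) := by positivity
  have h := limit_level_inequality hA hsep hc hcard hne h𝒰 (hG₁ t ht) (hG₁ t' ht') hθ0.le
    (hP t ht) (hF t (hG₁ t ht)) (hF t' (hG₁ t' ht')) htt' hq
    (by rw [epow, ← mul_assoc]; exact lt_mul_of_one_lt_left hlp (by linarith))
    (by rw [epow]; exact mul_le_of_le_one_left hlp.le hN₁) hL hCL hp hLθ
  have s1 := hk t ht n (hkt ▸ hn) (l + p) q
  have s2 := hk t' ht' n (hkt' ▸ hn) (l + p) q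
  have s3 := sub_le_mul_of_increment_le (F := F t) (s := α * Real.log 2) (k := 0)
    (fun m _ => increment_le_of_convex (hconv t ht) (hbd t ht) m) (Nat.zero_le (n + p)) l
  rw [show n + p + l = n + (l + p) by omega] at s3
  have u1 : θ ≤ θ * (F t (n + p) - F t (n + (l + p)) + l * (β * Real.log 2) -
      (2 * Real.log 5 + 3 * Real.log 2)) := by
    refine le_mul_of_one_le_right hθ0.le ?_
    linarith
  have u2 := h.trans (mul_le_mul_of_nonneg_left
    (add_le_add_left (add_le_add s1 s2) (4 / 2 ^ a * Real.log 3))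
    (by positivity : 0 ≤ l * Real.log 2))
  have u3 : l * Real.log 2 * (4 / 2 ^ a * Real.log 3) ≤ θ / 4 := by
    refine le_trans (le_of_eq ?_) ha
    ring
  have u4 : l * Real.log 2 * (q * ε) ≤ θ / 8 := by
    have e : q * ε = θ / 8 / (l * Real.log 2 + 1) := by
      rw [hε]; field_simp
    rw [e, mul_div_assoc', div_le_iff₀ (by positivity)]
    linarith
  rw [mul_add, mul_add] at u2
  linarith

/-- Distinct points of the finite set `B` are at distance at least `r`. -/
def Separated {X : Type*} [PseudoMetricSpace X] (r : ℝ) (B : Finset X) : Prop :=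
  ∀ a ∈ B, ∀ b ∈ B, a ≠ b → r ≤ dist a b

lemma exists_maximal_separated {X : Type*} [PseudoMetricSpace X] (E : Set X) {r : ℝ} {N : ℕ}
    (h : ∀ B : Finset X, ↑B ⊆ E → Separated r B → B.card ≤ N) :
    ∃ B : Finset X, ↑B ⊆ E ∧ Separated r B ∧ ∀ x ∈ E, x ∈ B ∨ ∃ b ∈ B, dist x b < r := by
  classical
  let S : Set ℕ := {n | ∃ B : Finset X, ↑B ⊆ E ∧ Separated r B ∧ B.card = n}
  have hb : BddAbove S := ⟨N, by rintro _ ⟨B, h1, h2, rfl⟩; exact h B h1 h2⟩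
  have hne : S.Nonempty := ⟨0, ∅, by simp, by simp [Separated], rfl⟩
  obtain ⟨B, h1, h2, h3⟩ := Nat.sSup_mem hne hb
  refine ⟨B, h1, h2, fun x hx => ?_⟩
  by_contra! hcon
  obtain ⟨hxB, hcon⟩ := hcon
  have : (insert x B).card ∈ S := by
    refine ⟨insert x B, ?_, ?_, rfl⟩
    · rw [Finset.coe_insert]
      exact insert_subset hx h1
    · intro a ha b hb hab
      rcases Finset.mem_insert.1 ha with rfl | ha' <;> rcases Finset.mem_insert.1 hb with rfl | hb'
      · exact absurd rfl hab
      · exact hcon _ hb'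
      · rw [dist_comm]; exact hcon _ ha'
      · exact h2 a ha' b hb' hab
  have := le_csSup hb this
  rw [Finset.card_insert_of_notMem hxB] at this
  omega

lemma exists_separated_of_lt_assouadDim {X : Type*} [PseudoMetricSpace X] {E : Set X} {β : ℝ}
    (hβ : 0 ≤ β) (h : β < assouadDim E) {K : ℝ} (hK : 0 < K) :
    ∃ x ∈ E, ∃ s R : ℝ, 0 < s ∧ s ≤ R ∧ ∃ B : Finset X, ↑B ⊆ E ∩ closedBall x R ∧
      Separated s B ∧ K * (R / s) ^ β < B.card := by
  classical
  by_contra! hcon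
  refine h.not_ge (csInf_le ⟨0, fun _ h => h.1⟩ ⟨hβ, K * 2 ^ β, by positivity, ?_⟩)
  intro x hx r R hr hrR
  have key := hcon x hx (r / 2) R (by positivity) (by linarith)
  obtain ⟨B, hB, hs, hcov⟩ := exists_maximal_separated (E ∩ closedBall x R) (r := r / 2)
    (N := ⌊K * (R / (r / 2)) ^ β⌋₊) fun B h1 h2 => Nat.le_floor (key B h1 h2)
  refine ⟨B.image fun b => closedBall b (r / 2), ?_, ?_, ?_⟩
  · intro y hy
    simp only [Finset.mem_image, iUnion_exists, biUnion_and', iUnion_iUnion_eq_right, mem_iUnion,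
      mem_closedBall, exists_prop]
    rcases hcov y hy with h | ⟨b, hb, h⟩
    · exact ⟨y, h, by rw [dist_self]; positivity⟩
    · exact ⟨b, hb, h.le⟩
  · intro U hU
    obtain ⟨b, -, rfl⟩ := Finset.mem_image.1 hU
    refine ediam_le fun y hy z hz => ?_
    rw [edist_dist]
    refine ENNReal.ofReal_le_ofReal ?_
    have := dist_triangle_right y z b
    rw [mem_closedBall] at hy hz
    linarith
  · calc ((B.image fun b => closedBall b (r / 2)).card : ℝ) ≤ B.card := by
          exact_mod_cast Finset.card_image_le
      _ ≤ K * (R / (r / 2)) ^ β := key B hB hs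
      _ = K * 2 ^ β * (R / r) ^ β := by
          rw [show R / (r / 2) = 2 * (R / r) by field_simp,
            Real.mul_rpow (by norm_num) (div_nonneg (by linarith) hr.le)]
          ring

/-- Finite subsets of `D` with mutual distances in `[ρ, R]` have at most `C (R / ρ) ^ α` points. -/
def SepBound (D : Set ℝ) (C α : ℝ) : Prop :=
  ∀ B : Finset ℝ, ↑B ⊆ D → ∀ ρ R, 0 < ρ → ρ ≤ R →
    (∀ a ∈ B, ∀ b ∈ B, a ≠ b → ρ ≤ |a - b| ∧ |a - b| ≤ R) → (B.card : ℝ) ≤ C * (R / ρ) ^ α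

lemma sepBound_of_cover {D : Set ℝ} {C α : ℝ} (hC : 0 < C)
    (h : ∀ x ∈ D, ∀ r R : ℝ, 0 < r → r < R →
      ∃ 𝒰 : Finset (Set ℝ), (D ∩ closedBall x R ⊆ ⋃ U ∈ 𝒰, U) ∧
      (∀ U ∈ 𝒰, ediam U ≤ ENNReal.ofReal r) ∧ ((𝒰.card : ℝ) ≤ C * (R / r) ^ α)) :
    SepBound D (C * 2 ^ α) α := by
  intro B hB ρ R hρ hρR hsep
  rcases B.eq_empty_or_nonempty with rfl | ⟨b₀, hb₀⟩
  · simp only [Finset.card_empty, Nat.cast_zero]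
    have : 0 ≤ R / ρ := div_nonneg (by linarith) hρ.le
    positivity
  obtain ⟨𝒰, hcov, hdiam, hcard⟩ := h b₀ (hB hb₀) (ρ / 2) R (by positivity) (by linarith)
  have hmem : ∀ b ∈ B, ∃ U ∈ 𝒰, b ∈ U := by
    intro b hb
    have : b ∈ ⋃ U ∈ 𝒰, U := hcov ⟨hB hb, by
      rw [mem_closedBall, Real.dist_eq]
      by_cases hbb : b = b₀
      · rw [hbb]; simp; linarith
      · exact (hsep b hb b₀ hb₀ hbb).2⟩
    simpa using this
  choose! f hf hfm using hmem
  have hle : B.card ≤ 𝒰.card := by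
    refine Finset.card_le_card_of_injOn f hf fun a ha b hb hab => ?_
    by_contra hne
    have h1 := edist_le_ediam_of_mem (hfm a ha) (hab ▸ hfm b hb)
    have h2 := h1.trans (hdiam _ (hf a ha))
    rw [edist_dist, ENNReal.ofReal_le_ofReal_iff (by positivity), Real.dist_eq] at h2
    linarith [(hsep a ha b hb hne).1]
  calc (B.card : ℝ) ≤ 𝒰.card := by exact_mod_cast hle
    _ ≤ _ := hcard
    _ = C * 2 ^ α * (R / ρ) ^ α := by
      rw [show R / (ρ / 2) = 2 * (R / ρ) by field_simp,
            Real.mul_rpow (by norm_num) (div_nonneg (by linarith) hρ.le)]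
      ring

lemma exists_cover_real (D : Set ℝ) (x : ℝ) {r R : ℝ} (hr : 0 < r) (hrR : r < R) :
    ∃ 𝒰 : Finset (Set ℝ), (D ∩ closedBall x R ⊆ ⋃ U ∈ 𝒰, U) ∧
      (∀ U ∈ 𝒰, ediam U ≤ ENNReal.ofReal r) ∧ ((𝒰.card : ℝ) ≤ 4 * (R / r) ^ (1 : ℝ)) := by
  classical
  refine ⟨(Finset.range (⌊2 * R / r⌋₊ + 1)).image
    fun n : ℕ => Icc (x - R + n * r) (x - R + (n + 1) * r), ?_, ?_, ?_⟩
  · rintro y ⟨-, hy⟩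
    rw [Real.closedBall_eq_Icc] at hy
    have h0 : 0 ≤ (y - (x - R)) / r := div_nonneg (by linarith [hy.1]) hr.le
    have hle : (y - (x - R)) / r ≤ 2 * R / r := by gcongr; linarith [hy.2]
    have h1 := Nat.floor_le h0
    have h2 := Nat.lt_floor_add_one ((y - (x - R)) / r)
    rw [le_div_iff₀ hr] at h1
    rw [div_lt_iff₀ hr] at h2
    simp only [Finset.mem_image, Finset.mem_range, iUnion_exists, biUnion_and',
      iUnion_iUnion_eq_right, mem_iUnion, exists_prop]
    exact ⟨_, Nat.lt_succ_of_le (Nat.floor_le_floor hle), by linarith, by linarith⟩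
  · intro U hU
    obtain ⟨n, -, rfl⟩ := Finset.mem_image.1 hU
    rw [Real.ediam_Icc]
    refine ENNReal.ofReal_le_ofReal (le_of_eq (by ring))
  · have h1 : 1 ≤ R / r := (one_le_div hr).2 hrR.le
    have h2 := Nat.floor_le (show 0 ≤ 2 * R / r by rw [mul_div_assoc]; linarith)
    rw [mul_div_assoc] at h2
    calc _ ≤ (((Finset.range (⌊2 * R / r⌋₊ + 1)).card : ℕ) : ℝ) := by
          exact_mod_cast Finset.card_image_le
      _ ≤ _ := by
        rw [Finset.card_range, Real.rpow_one, mul_div_assoc]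
        push_cast
        linarith

lemma TotallyBounded.exists_card_le_of_separated {X : Type*} [PseudoMetricSpace X] {S : Set X}
    (hS : TotallyBounded S) {r : ℝ} (hr : 0 < r) :
    ∃ N : ℕ, ∀ B : Finset X, ↑B ⊆ S → Separated r B → B.card ≤ N := by
  classical
  obtain ⟨t, ht, hcov⟩ := Metric.totallyBounded_iff.1 hS (r / 2) (by positivity)
  refine ⟨ht.toFinset.card, fun B hB hs => ?_⟩
  have hmem : ∀ b ∈ B, ∃ y ∈ t, dist b y < r / 2 := fun b hb => by
    simpa using hcov (hB hb)
  choose! f hf hfd using hmem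
  refine Finset.card_le_card_of_injOn f (fun b hb => by simpa using hf b hb) fun a ha b hb hab => ?_
  by_contra hne
  have h1 := hs a ha b hb hne
  have h2 := dist_triangle_right a b (f a)
  have h3 := hfd a ha
  have h4 := hfd b hb
  rw [← hab] at h4
  linarith

lemma exists_dense_ball {X : Type*} [PseudoMetricSpace X] {B : Finset X} {x : X} {s R β K : ℝ}
    (hs : 0 < s) (hsR : s ≤ R) (hβ : 0 ≤ β) (hK : 0 < K)
    (hB : ↑B ⊆ closedBall x R) (hcard : K * (R / s) ^ β < B.card) :
    ∃ b ∈ B, ∃ ρ₀, s ≤ ρ₀ ∧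
      K / 2 * (ρ₀ / (2 * s)) ^ β < (B.filter fun z => dist z b ≤ ρ₀).card ∧
      ∀ b' ∈ B, ∀ ρ, s ≤ ρ → ((B.filter fun z => dist z b' ≤ ρ).card : ℝ) ≤
        2 * (B.filter fun z => dist z b ≤ ρ₀).card * (ρ / ρ₀) ^ β := by
  have hR : 0 < R := hs.trans_le hsR
  have hBpos : (0 : ℝ) < B.card := lt_of_le_of_lt (by positivity) hcard
  obtain ⟨b₀, hb₀⟩ : B.Nonempty := Finset.card_pos.1 (by exact_mod_cast hBpos)
  let S : Set ℝ := {q | ∃ b ∈ B, ∃ ρ, s ≤ ρ ∧ q = (B.filter fun z => dist z b ≤ ρ).card / ρ ^ β}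
  have hbdd : BddAbove S := by
    refine ⟨B.card / s ^ β, ?_⟩
    rintro _ ⟨b, -, ρ, hρ, rfl⟩
    gcongr
    exact Finset.filter_subset _ _
  have hmem : (B.card : ℝ) / (2 * R) ^ β ∈ S := by
    refine ⟨b₀, hb₀, 2 * R, by linarith, ?_⟩
    rw [Finset.filter_true_of_mem]
    intro z hz
    have h1 := mem_closedBall.1 (hB hz)
    have h2 := mem_closedBall.1 (hB hb₀)
    linarith [dist_triangle_right z b₀ x]
  have hSlow : K / (2 * s) ^ β < sSup S := by
    refine lt_of_lt_of_le ?_ (le_csSup hbdd hmem)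
    rw [div_lt_div_iff₀ (by positivity) (by positivity), Real.mul_rpow (by norm_num) hR.le,
      Real.mul_rpow (by norm_num) hs.le]
    rw [Real.div_rpow hR.le hs.le, mul_div_assoc', div_lt_iff₀ (by positivity)] at hcard
    have : (0 : ℝ) < 2 ^ β := by positivity
    nlinarith
  have hSpos : 0 < sSup S := lt_of_le_of_lt (by positivity) hSlow
  obtain ⟨_, ⟨b, hb, ρ₀, hρ₀, rfl⟩, hlt⟩ := exists_lt_of_lt_csSup ⟨_, hmem⟩ (half_lt_self hSpos)
  have hρ₀' : 0 < ρ₀ := hs.trans_le hρ₀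
  refine ⟨b, hb, ρ₀, hρ₀, ?_, fun b' hb' ρ hρ => ?_⟩
  · rw [lt_div_iff₀ (by positivity)] at hlt
    refine lt_of_lt_of_le ?_ hlt.le
    rw [Real.div_rpow hρ₀'.le (by positivity)]
    have : (0 : ℝ) < ρ₀ ^ β := by positivity
    calc K / 2 * (ρ₀ ^ β / (2 * s) ^ β) = K / (2 * s) ^ β / 2 * ρ₀ ^ β := by ring
      _ < _ := by gcongr
  · have hρ' : 0 < ρ := hs.trans_le hρ
    have h1 := le_csSup hbdd ⟨b', hb', ρ, hρ, rfl⟩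
    have h2 : ((B.filter fun z => dist z b' ≤ ρ).card : ℝ) / ρ ^ β ≤
        2 * ((B.filter fun z => dist z b ≤ ρ₀).card / ρ₀ ^ β) := by linarith
    rw [div_le_iff₀ (by positivity)] at h2
    rw [Real.div_rpow hρ'.le hρ₀'.le]
    calc _ ≤ _ := h2
      _ = _ := by ring

lemma exists_regular_blowup {F : Set (Euc 2)} {β : ℝ} (hβ : 0 ≤ β) (h : β < assouadDim F) {n : ℕ}
    (hn : 1 ≤ n) :
    ∃ A : Finset (Euc 2), A.Nonempty ∧ (∀ z ∈ A, ‖z‖ ≤ 1) ∧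
      (∃ b : Euc 2, ∃ l : ℝ, 0 < l ∧ ∀ z ∈ A, b + l • z ∈ F) ∧
      ∀ x ρ, 1 / (n : ℝ) ≤ ρ → ((A.filter fun z => dist z x ≤ ρ).card : ℝ) ≤
        2 * 2 ^ β * A.card * ρ ^ β := by
  classical
  have hn0 : (0 : ℝ) < n := by exact_mod_cast hn
  obtain ⟨N, hN⟩ := (isCompact_closedBall (0 : Euc 2) 1).totallyBounded.exists_card_le_of_separated
    (r := 1 / n) (by positivity)
  obtain ⟨x, hx, s, R, hs, hsR, B, hB, hsep, hcard⟩ :=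
    exists_separated_of_lt_assouadDim hβ h (K := 2 * 2 ^ β * (N + 1)) (by positivity)
  obtain ⟨b, hb, ρ₀, hρ₀, hlow, hreg⟩ := exists_dense_ball hs hsR hβ (by positivity)
    (fun z hz => (hB hz).2) hcard
  have hρ₀' : 0 < ρ₀ := hs.trans_le hρ₀
  set B' := B.filter fun z => dist z b ≤ ρ₀ with hB'
  have hinj : Function.Injective fun z : Euc 2 => ρ₀⁻¹ • (z - b) := fun z w hzw => by
    have := smul_right_injective (Euc 2) (inv_ne_zero hρ₀'.ne') hzw
    exact sub_left_injective this
  have hdist : ∀ z w : Euc 2, dist (ρ₀⁻¹ • (z - b)) (ρ₀⁻¹ • (w - b)) = dist z w / ρ₀ := by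
    intro z w
    rw [dist_smul₀, dist_sub_right, norm_inv, Real.norm_of_nonneg hρ₀'.le]
    field_simp
  set A := B'.image fun z => ρ₀⁻¹ • (z - b) with hA
  have hAcard : A.card = B'.card := Finset.card_image_of_injective _ hinj
  have hA1 : ∀ z ∈ A, ‖z‖ ≤ 1 := by
    intro z hz
    obtain ⟨w, hw, rfl⟩ := Finset.mem_image.1 hz
    have h1 := (Finset.mem_filter.1 hw).2
    have h2 := hdist w b
    rw [sub_self, smul_zero, dist_zero_right] at h2
    rw [h2]
    exact div_le_one_of_le₀ h1 hρ₀'.le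
  have hsn : s / ρ₀ < 1 / n := by
    by_contra! hcon
    have h1 : A.card ≤ N := by
      refine hN A (fun z hz => by simpa using hA1 z hz) fun z hz w hw hzw => ?_
      obtain ⟨z, hz', rfl⟩ := Finset.mem_image.1 hz
      obtain ⟨w, hw', rfl⟩ := Finset.mem_image.1 hw
      rw [hdist]
      refine hcon.trans ?_
      gcongr
      exact hsep z (Finset.mem_filter.1 hz').1 w (Finset.mem_filter.1 hw').1
        fun h => hzw (by rw [h])
    have h2 : (1 / 2 : ℝ) ^ β ≤ (ρ₀ / (2 * s)) ^ β := by
      refine Real.rpow_le_rpow (by norm_num) ?_ hβ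
      rw [div_le_div_iff₀ (by norm_num) (by positivity)]
      linarith
    have h3 : (N + 1 : ℝ) = 2 * 2 ^ β * (N + 1) / 2 * (1 / 2) ^ β := by
      rw [Real.div_rpow (by norm_num) (by norm_num), Real.one_rpow]
      have : (0 : ℝ) < 2 ^ β := by positivity
      field_simp
    have h4 : (N + 1 : ℝ) < B'.card := by
      exact lt_of_le_of_lt (h3.le.trans (mul_le_mul_of_nonneg_left h2 (by positivity))) hlow
    have h5 : (B'.card : ℝ) ≤ N := by rw [← hAcard]; exact_mod_cast h1
    linarith
  refine ⟨A, ?_, hA1, ⟨b, ρ₀, hρ₀', fun z hz => ?_⟩, fun x ρ hρ => ?_⟩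
  · rw [hA, Finset.image_nonempty]
    exact ⟨b, Finset.mem_filter.2 ⟨hb, by rw [dist_self]; exact hρ₀'.le⟩⟩
  · obtain ⟨w, hw, rfl⟩ := Finset.mem_image.1 hz
    rw [smul_inv_smul₀ hρ₀'.ne', add_sub_cancel]
    exact (hB (Finset.mem_filter.1 hw).1).1
  · have hρ' : 0 < ρ := lt_of_lt_of_le (by positivity) hρ
    rcases (A.filter fun z => dist z x ≤ ρ).eq_empty_or_nonempty with h0 | ⟨z₀, hz₀⟩
    · rw [h0]
      simp only [Finset.card_empty, Nat.cast_zero]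
      positivity
    obtain ⟨hz₀, hz₀x⟩ := Finset.mem_filter.1 hz₀
    obtain ⟨w₀, hw₀, rfl⟩ := Finset.mem_image.1 hz₀
    have hsub : (A.filter fun z => dist z x ≤ ρ) ⊆
        (B.filter fun z => dist z w₀ ≤ 2 * ρ * ρ₀).image fun z => ρ₀⁻¹ • (z - b) := by
      intro z hz
      obtain ⟨hz, hzx⟩ := Finset.mem_filter.1 hz
      obtain ⟨w, hw, rfl⟩ := Finset.mem_image.1 hz
      refine Finset.mem_image_of_mem _ (Finset.mem_filter.2 ⟨(Finset.mem_filter.1 hw).1, ?_⟩)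
      rw [← div_le_iff₀ hρ₀', ← hdist]
      linarith [dist_triangle_right (ρ₀⁻¹ • (w - b)) (ρ₀⁻¹ • (w₀ - b)) x]
    have hle := hreg w₀ (Finset.mem_filter.1 hw₀).1 (2 * ρ * ρ₀) (by
      rw [div_lt_iff₀ hρ₀'] at hsn
      nlinarith)
    calc ((A.filter fun z => dist z x ≤ ρ).card : ℝ)
        ≤ (B.filter fun z => dist z w₀ ≤ 2 * ρ * ρ₀).card := by
          exact_mod_cast (Finset.card_le_card hsub).trans Finset.card_image_le
      _ ≤ _ := hle
      _ = _ := by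
        rw [hAcard, mul_div_cancel_right₀ _ hρ₀'.ne', Real.mul_rpow (by norm_num) hρ'.le]
        ring

lemma exists_limit_measure {A : ℕ → Finset (Euc 2)} {C β : ℝ} (hA : ∀ n, (A n).Nonempty)
    (hA₁ : ∀ n, ∀ z ∈ A n, ‖z‖ ≤ 1)
    (hreg : ∀ (n : ℕ) x ρ, 1 / ((n : ℝ) + 1) ≤ ρ →
      (((A n).filter fun z => dist z x ≤ ρ).card : ℝ) ≤ C * (A n).card * ρ ^ β) :
    ∃ μ : Measure (Euc 2), IsProbabilityMeasure μ ∧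
      (∀ x r, 0 < r → μ (ball x r) ≤ ENNReal.ofReal (C * r ^ β)) ∧
      ∀ S : Finset (Euc 2), ↑S ⊆ μ.support → ∀ ε > 0, ∃ n, ∀ u ∈ S, ∃ z ∈ A n, dist z u < ε := by
  classical
  let μs : ℕ → ProbabilityMeasure (Euc 2) := fun n =>
    ⟨(PMF.uniformOfFinset (A n) (hA n)).toMeasure, inferInstance⟩
  have hμs : ∀ n t, MeasurableSet t → (μs n : Measure (Euc 2)) t =
      ((A n).filter fun z => z ∈ t).card / (A n).card := fun n t ht =>
    PMF.toMeasure_uniformOfFinset_apply (hA n) t ht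
  have htight : IsTightMeasureSet
      {((μ : ProbabilityMeasure (Euc 2)) : Measure (Euc 2)) | μ ∈ range μs} := by
    rw [isTightMeasureSet_iff_exists_isCompact_measure_compl_le]
    refine fun ε _ => ⟨closedBall 0 1, isCompact_closedBall _ _, ?_⟩
    rintro _ ⟨_, ⟨n, rfl⟩, rfl⟩
    refine le_of_eq_of_le ?_ zero_le
    rw [hμs n _ measurableSet_closedBall.compl]
    simp only [ENNReal.div_eq_zero_iff, Nat.cast_eq_zero, Finset.card_eq_zero,
      Finset.filter_eq_empty_iff, ENNReal.natCast_ne_top, or_false]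
    intro z hz
    simpa using hA₁ n z hz
  obtain ⟨μ, -, hμ⟩ := (isCompact_closure_of_isTightMeasureSet htight).ultrafilter_le_nhds
    ((hyperfilter ℕ : Ultrafilter ℕ).map μs) (by
      rw [le_principal_iff]
      exact mem_of_superset (Filter.mem_map.2 (univ_mem' fun n => mem_range_self n)) subset_closure)
  have hlim : Tendsto μs (hyperfilter ℕ : Filter ℕ) (𝓝 μ) := hμ
  have hopen := fun G hG => ProbabilityMeasure.le_liminf_measure_open_of_tendsto hlim (G := G) hG
  refine ⟨μ, inferInstance, fun x r hr => ?_, fun S hS ε hε => ?_⟩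
  · refine (hopen _ isOpen_ball).trans (liminf_le_of_frequently_le' (Eventually.frequently ?_))
    have hev : ∀ᶠ n : ℕ in atTop, 1 / ((n : ℝ) + 1) < r :=
      tendsto_one_div_add_atTop_nhds_zero_nat.eventually (gt_mem_nhds hr)
    filter_upwards [Nat.hyperfilter_le_atTop hev] with n hn
    have hpos : (0 : ℝ) < (A n).card := by exact_mod_cast (hA n).card_pos
    rw [hμs n _ measurableSet_ball]
    rw [ENNReal.div_le_iff (by exact_mod_cast hpos.ne') (by simp), ← ENNReal.ofReal_natCast,
      ← ENNReal.ofReal_natCast, ← ENNReal.ofReal_mul' hpos.le]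
    refine ENNReal.ofReal_le_ofReal ?_
    refine le_trans ?_ ((hreg n x r hn.le).trans (le_of_eq (by ring)))
    refine Nat.cast_le.2 (Finset.card_le_card fun z hz => ?_)
    rw [Finset.mem_filter] at hz ⊢
    exact ⟨hz.1, (mem_ball.1 hz.2).le⟩
  · have hev : ∀ᶠ n in (hyperfilter ℕ : Filter ℕ), ∀ u ∈ S, ∃ z ∈ A n, dist z u < ε := by
      rw [Filter.eventually_all_finset]
      intro u hu
      have h1 : 0 < (μ : Measure (Euc 2)) (ball u ε) :=
        (Measure.mem_support_iff_forall u).1 (hS hu) _ (ball_mem_nhds u hε)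
      filter_upwards [eventually_lt_of_lt_liminf (h1.trans_le (hopen _ isOpen_ball))] with n hn
      rw [hμs n _ measurableSet_ball] at hn
      by_contra! hcon
      rw [Finset.filter_false_of_mem] at hn
      · simp at hn
      · intro z hz
        simpa using hcon z hz
    exact hev.exists

/-- A Frostman measure on a tangent of `F`, whose support is approximated at every scale by
rescaled copies of pieces of `F`. -/
lemma exists_frostman_tangent {F : Set (Euc 2)} {β : ℝ} (hβ : 0 ≤ β) (h : β < assouadDim F) :
    ∃ μ : Measure (Euc 2), IsProbabilityMeasure μ ∧ TotallyBounded μ.support ∧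
      (∃ C : ℝ, 0 < C ∧ ∀ x r, 0 < r → μ (closedBall x r) ≤ ENNReal.ofReal (C * r ^ β)) ∧
      ∀ S : Finset (Euc 2), ↑S ⊆ μ.support → ∀ ε > 0, ∃ l : ℝ, 0 < l ∧ ∃ φ : Euc 2 → Euc 2,
        (∀ u ∈ S, φ u ∈ F) ∧ ∀ u ∈ S, ∀ v ∈ S, |dist (φ u) (φ v) - l * dist u v| ≤ ε * l := by
  have key := fun n : ℕ => exists_regular_blowup hβ h (n := n + 1) (by omega)
  choose A hA hA₁ hAF hreg using key
  choose b l hl hbl using hAF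
  obtain ⟨μ, hμ, hball, happ⟩ := exists_limit_measure (C := 2 * 2 ^ β) (β := β) hA hA₁
    fun n x ρ hρ => hreg n x ρ (by push_cast; exact hρ)
  refine ⟨μ, hμ, ?_, ⟨2 * 2 ^ β * 2 ^ β, by positivity, fun x r hr => ?_⟩, fun S hS ε hε => ?_⟩
  · refine (isCompact_closedBall (0 : Euc 2) 2).totallyBounded.subset fun u hu => ?_
    obtain ⟨n, hn⟩ := happ {u} (by simpa using hu) 1 one_pos
    obtain ⟨z, hz, hzu⟩ := hn u (by simp)
    have := dist_triangle_left u 0 z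
    rw [dist_zero_right] at this
    rw [mem_closedBall, dist_zero_right]
    rw [dist_zero_right] at this
    linarith [hA₁ n z hz]
  · refine (measure_mono (closedBall_subset_ball (by linarith : r < 2 * r))).trans
      ((hball x (2 * r) (by positivity)).trans (le_of_eq ?_))
    rw [Real.mul_rpow (by norm_num) hr.le]
    ring_nf
  · obtain ⟨n, hn⟩ := happ S hS (ε / 2) (by positivity)
    choose! ψ hψ hψd using hn
    refine ⟨l n, hl n, fun u => b n + l n • ψ u, fun u hu => hbl n _ (hψ u hu), fun u hu v hv => ?_⟩
    rw [dist_add_left, dist_smul₀, Real.norm_of_nonneg (hl n).le, ← mul_sub, abs_mul,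
      abs_of_pos (hl n), mul_comm]
    refine mul_le_mul_of_nonneg_right ?_ (hl n).le
    have h1 := dist_dist_dist_le (ψ u) (ψ v) u v
    rw [Real.dist_eq] at h1
    linarith [hψd u hu, hψd v hv]

lemma SepBound.of_approx {F E : Set (Euc 2)} {C α : ℝ}
    (hF : SepBound (distSet F) C α)
    (happ : ∀ S : Finset (Euc 2), ↑S ⊆ E → ∀ ε > 0, ∃ l : ℝ, 0 < l ∧ ∃ φ : Euc 2 → Euc 2,
      (∀ u ∈ S, φ u ∈ F) ∧ ∀ u ∈ S, ∀ v ∈ S, |dist (φ u) (φ v) - l * dist u v| ≤ ε * l) :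
    SepBound (distSet E) (C * 4 ^ α) α := by
  classical
  intro B hB ρ R hρ hρR hsep
  have : ∀ d ∈ B, ∃ x ∈ E, ∃ y ∈ E, d = dist x y := fun d hd => hB hd
  choose! p hp q hq hpq using this
  obtain ⟨l, hl, φ, hφ, hφd⟩ := happ (B.image p ∪ B.image q) (by
    intro u hu
    simp only [Finset.coe_union, Finset.coe_image, mem_union, mem_image, Finset.mem_coe] at hu
    rcases hu with ⟨d, hd, rfl⟩ | ⟨d, hd, rfl⟩
    exacts [hp d hd, hq d hd]) (ρ / 4) (by positivity)
  have hpm : ∀ d ∈ B, p d ∈ B.image p ∪ B.image q := fun d hd =>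
    Finset.mem_union_left _ (Finset.mem_image_of_mem _ hd)
  have hqm : ∀ d ∈ B, q d ∈ B.image p ∪ B.image q := fun d hd =>
    Finset.mem_union_right _ (Finset.mem_image_of_mem _ hd)
  let f : ℝ → ℝ := fun d => dist (φ (p d)) (φ (q d))
  have hf : ∀ d ∈ B, |f d - l * d| ≤ ρ / 4 * l := fun d hd => by
    have := hφd _ (hpm d hd) _ (hqm d hd)
    rwa [← hpq d hd] at this
  have hff : ∀ a ∈ B, ∀ b ∈ B, a ≠ b → l * (ρ / 2) ≤ |f a - f b| ∧ |f a - f b| ≤ l * (2 * R) := by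
    intro a ha b hb hab
    obtain ⟨h1, h2⟩ := hsep a ha b hb hab
    have h3 : |(f a - f b) - l * (a - b)| ≤ l * (ρ / 2) := by
      calc |(f a - f b) - l * (a - b)| = |(f a - l * a) - (f b - l * b)| := by ring_nf
        _ ≤ |f a - l * a| + |f b - l * b| := abs_sub _ _
        _ ≤ _ := by linarith [hf a ha, hf b hb]
    have h4 : |l * (a - b)| = l * |a - b| := by rw [abs_mul, abs_of_pos hl]
    have h5 := abs_sub_abs_le_abs_sub (f a - f b) (l * (a - b))
    have h6 := abs_sub_abs_le_abs_sub (l * (a - b)) (f a - f b)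
    rw [abs_sub_comm (l * (a - b))] at h6
    constructor <;> nlinarith
  have hinj : Set.InjOn f B := fun a ha b hb hab => by
    by_contra hne
    have := (hff a ha b hb hne).1
    rw [hab, sub_self, abs_zero] at this
    nlinarith
  have := hF (B.image f) (by
    intro d hd
    obtain ⟨a, ha, rfl⟩ := Finset.mem_image.1 (Finset.mem_coe.1 hd)
    exact ⟨_, hφ _ (hpm a ha), _, hφ _ (hqm a ha), rfl⟩) (l * (ρ / 2)) (l * (2 * R)) (by positivity)
    (by nlinarith) (by
      intro x hx y hy hxy
      obtain ⟨a, ha, rfl⟩ := Finset.mem_image.1 hx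
      obtain ⟨b, hb, rfl⟩ := Finset.mem_image.1 hy
      exact hff a ha b hb fun h => hxy (by rw [h]))
  rw [Finset.card_image_of_injOn hinj] at this
  refine this.trans (le_of_eq ?_)
  rw [show l * (2 * R) / (l * (ρ / 2)) = 4 * (R / ρ) by field_simp; ring,
    Real.mul_rpow (by norm_num) (div_nonneg (by linarith) hρ.le)]
  ring

lemma measure_le_card_mul {X : Type*} [PseudoMetricSpace X] [MeasurableSpace X] {μ : Measure X}
    {P : Set X} {B : Finset X} {r m N : ℝ} (hm : 0 ≤ m) (hcov : ∀ x ∈ P, ∃ b ∈ B, dist x b ≤ r)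
    (hball : ∀ b ∈ B, μ (closedBall b r) ≤ ENNReal.ofReal m) (hN : (B.card : ℝ) ≤ N) :
    μ P ≤ ENNReal.ofReal (N * m) :=
  calc μ P ≤ μ (⋃ b ∈ B, closedBall b r) := measure_mono fun x hx => by
        simpa using hcov x hx
    _ ≤ ∑ b ∈ B, μ (closedBall b r) := measure_biUnion_finset_le _ _
    _ ≤ B.card • ENNReal.ofReal m := Finset.sum_le_card_nsmul _ _ _ hball
    _ = ENNReal.ofReal (B.card * m) := by
        rw [nsmul_eq_mul, ENNReal.ofReal_mul (by positivity), ENNReal.ofReal_natCast]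
    _ ≤ _ := ENNReal.ofReal_le_ofReal (mul_le_mul_of_nonneg_right hN hm)

lemma measure_radial_eq_zero {μ : Measure (Euc 2)} {E P : Set (Euc 2)} {C C₁ α β M : ℝ}
    (hαβ : α < β) (hC : 0 < C)
    (hball : ∀ x r, 0 < r → μ (closedBall x r) ≤ ENNReal.ofReal (C * r ^ β))
    (hsep : SepBound (distSet E) C₁ α) {y : Euc 2} (hy : y ∈ E) (hM : 1 ≤ M)
    (hEM : ∀ x ∈ E, dist x y ≤ M) (hPE : P ⊆ E)
    (hP : ∀ x ∈ P, ∀ x' ∈ P, dist x x' ≤ |dist x y - dist x' y|) : μ P = 0 := by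
  classical
  have key : ∀ r : ℝ, 0 < r → r ≤ 1 → μ P ≤ ENNReal.ofReal (C₁ * M ^ α * C * r ^ (β - α)) := by
    intro r hr hr1
    have hcard : ∀ B : Finset ℝ, ↑B ⊆ (fun x => dist x y) '' P → Separated r B →
        (B.card : ℝ) ≤ C₁ * (M / r) ^ α := by
      intro B hB hs
      refine hsep B (fun d hd => ?_) r M hr (hr1.trans hM) fun a ha b hb hab =>
        ⟨hs a ha b hb hab, ?_⟩
      · obtain ⟨x, hx, rfl⟩ := hB hd
        exact ⟨x, hPE hx, y, hy, rfl⟩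
      · obtain ⟨x, hx, rfl⟩ := hB ha
        obtain ⟨x', hx', rfl⟩ := hB hb
        have h1 := hEM x (hPE hx)
        have h2 := hEM x' (hPE hx')
        exact abs_sub_le_of_nonneg_of_le dist_nonneg h1 dist_nonneg h2
    obtain ⟨B, hB, hBs, hcov⟩ := exists_maximal_separated ((fun x => dist x y) '' P) (r := r)
      (N := ⌊C₁ * (M / r) ^ α⌋₊) fun B h1 h2 => Nat.le_floor (hcard B h1 h2)
    have : ∀ t ∈ B, ∃ x ∈ P, dist x y = t := fun t ht => hB ht
    choose! f hf hft using this
    refine (measure_le_card_mul (B := B.image f) (r := r) (m := C * r ^ β)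
      (N := C₁ * (M / r) ^ α) (by positivity) (fun x hx => ?_) (fun b _ => hball b r hr)
      (le_trans (by exact_mod_cast Finset.card_image_le) (hcard B hB hBs))).trans (le_of_eq ?_)
    · obtain ⟨t, ht, htx⟩ : ∃ t ∈ B, |dist x y - t| ≤ r := by
        rcases hcov _ (mem_image_of_mem _ hx) with h | ⟨b, hb, h⟩
        · exact ⟨_, h, by simpa using hr.le⟩
        · exact ⟨b, hb, h.le⟩
      refine ⟨f t, Finset.mem_image_of_mem _ ht, (hP x hx _ (hf t ht)).trans ?_⟩
      rwa [hft t ht]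
    · rw [Real.div_rpow (by linarith) hr.le, Real.rpow_sub hr]
      ring_nf
  have hlim : Tendsto (fun r : ℝ => ENNReal.ofReal (C₁ * M ^ α * C * r ^ (β - α))) (𝓝[>] 0)
      (𝓝 0) := by
    have h1 := (Real.continuousAt_rpow_const 0 (β - α) (Or.inr (by linarith))).tendsto
    rw [Real.zero_rpow (by linarith)] at h1
    have h2 := (h1.const_mul (C₁ * M ^ α * C)).mono_left (nhdsWithin_le_nhds (s := Ioi 0))
    rw [mul_zero] at h2
    simpa [Function.comp_def] using (ENNReal.continuous_ofReal.tendsto 0).comp h2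
  refine le_antisymm (ge_of_tendsto hlim ?_) zero_le
  filter_upwards [Ioc_mem_nhdsGT one_pos] with r hr using key r hr.1 hr.2

lemma exists_rich_ball {X : Type*} [PseudoMetricSpace X] [SecondCountableTopology X]
    [MeasurableSpace X] {μ : Measure X}
    {C β : ℝ} (hC : 0 < C)
    (hball : ∀ x r, 0 < r → μ (closedBall x r) ≤ ENNReal.ofReal (C * r ^ β))
    {y : X} (hy : y ∈ μ.support) {L ρ₀ : ℝ} (hL : 2 ≤ L) (hρ₀ : 0 < ρ₀) :
    ∃ x ∈ μ.support, dist x y ≤ ρ₀ ∧ ∃ R, 0 < R ∧ R ≤ ρ₀ ∧ ∃ B : Finset X,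
      ↑B ⊆ μ.support ∩ closedBall x R ∧ Separated (R / L) B ∧ 1 / 2 * L ^ β ≤ B.card := by
  by_contra! hcon
  have key : ∀ k : ℕ, ∀ x ∈ μ.support, ∀ R, 0 < R → dist x y + 2 * R ≤ ρ₀ →
      μ (closedBall x R) ≤ ENNReal.ofReal (C * (1 / 2) ^ k * R ^ β) := by
    intro k
    induction k with
    | zero =>
      intro x _ R hR _
      simpa using hball x R hR
    | succ k ih =>
      intro x hx R hR hxR
      have hd : 0 ≤ dist x y := dist_nonneg
      have hcard := hcon x hx (by linarith) R hR (by linarith)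
      obtain ⟨B, hB, hBs, hcov⟩ := exists_maximal_separated (μ.support ∩ closedBall x R)
        (r := R / L) (N := ⌊1 / 2 * L ^ β⌋₊) fun B h1 h2 => Nat.le_floor (hcard B h1 h2).le
      have hRL : R / L ≤ R / 2 := by gcongr
      have hRL0 : 0 < R / L := by positivity
      calc μ (closedBall x R) ≤ μ (μ.support ∩ closedBall x R) := by
            rw [inter_comm, measure_inter_conull Measure.measure_compl_support]
        _ ≤ ENNReal.ofReal (1 / 2 * L ^ β * (C * (1 / 2) ^ k * (R / L) ^ β)) := by
            refine measure_le_card_mul (B := B) (r := R / L) (by positivity) (fun z hz => ?_)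
              (fun b hb => ih b (hB hb).1 _ hRL0 ?_) (hcard B hB hBs).le
            · rcases hcov z hz with h | ⟨b, hb, h⟩
              · exact ⟨z, h, by simpa using hRL0.le⟩
              · exact ⟨b, hb, h.le⟩
            · have h1 := mem_closedBall.1 (hB hb).2
              linarith [dist_triangle b x y]
        _ = _ := by
            rw [Real.div_rpow hR.le (by linarith), pow_succ]
            have : (0 : ℝ) < L ^ β := by positivity
            field_simp
  have hlim : Tendsto (fun k : ℕ => ENNReal.ofReal (C * (1 / 2) ^ k * (ρ₀ / 2) ^ β)) atTop
      (𝓝 0) := by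
    have h1 := ((tendsto_pow_atTop_nhds_zero_of_lt_one (r := (1 / 2 : ℝ)) (by norm_num)
      (by norm_num)).const_mul C).mul_const ((ρ₀ / 2) ^ β)
    rw [mul_zero, zero_mul] at h1
    simpa [Function.comp_def] using (ENNReal.continuous_ofReal.tendsto 0).comp h1
  have h0 : μ (closedBall y (ρ₀ / 2)) = 0 :=
    le_antisymm (ge_of_tendsto' hlim fun k => key k y hy (ρ₀ / 2) (by positivity)
      (by rw [dist_self]; linarith)) zero_le
  exact ((Measure.mem_support_iff_forall y).1 hy _
    (closedBall_mem_nhds y (by positivity))).ne' h0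

lemma abs_dist_mul_sub_add_inner_le {V : Type*} [NormedAddCommGroup V] [InnerProductSpace ℝ V]
    {x y p q : V} {ρ : ℝ} (hp : dist p y ≤ ρ) (hq : dist q y ≤ ρ) :
    |dist x y * (dist x p - dist x q) + inner ℝ (x - y) (p - q)| ≤ 2 * ρ * dist p q := by
  have h1 : (dist x p - dist x q) * (dist x p + dist x q) =
      - inner ℝ (p - q) ((x - y) + (x - y) + ((y - p) + (y - q))) := by
    have h2 : dist x p ^ 2 = inner ℝ (x - p) (x - p) := by
      rw [dist_eq_norm, real_inner_self_eq_norm_sq]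
    have h3 : dist x q ^ 2 = inner ℝ (x - q) (x - q) := by
      rw [dist_eq_norm, real_inner_self_eq_norm_sq]
    have h4 : (x - y) + (x - y) + ((y - p) + (y - q)) = (x - p) + (x - q) := by abel
    have h5 : p - q = (x - q) - (x - p) := by abel
    rw [h4, h5, inner_sub_left, inner_add_right, inner_add_right, real_inner_comm (x - p) (x - q)]
    linear_combination h2 - h3
  rw [inner_add_right, inner_add_right, real_inner_comm] at h1
  have h2 : |inner ℝ (p - q) ((y - p) + (y - q))| ≤ dist p q * (2 * ρ) := by
    refine (abs_real_inner_le_norm _ _).trans ?_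
    rw [dist_eq_norm]
    gcongr
    refine (norm_add_le _ _).trans ?_
    rw [← dist_eq_norm, ← dist_eq_norm, dist_comm, dist_comm y]
    linarith
  have h3 : |dist x p - dist x q| ≤ dist p q := by
    rw [dist_comm x, dist_comm x]
    exact abs_dist_sub_le p q x
  have h4 : |2 * dist x y - (dist x p + dist x q)| ≤ 2 * ρ := by
    have h5 := abs_le.1 (abs_dist_sub_le p y x)
    have h6 := abs_le.1 (abs_dist_sub_le q y x)
    rw [dist_comm _ x, dist_comm _ x] at h5 h6
    rw [abs_le]
    constructor <;> linarith
  have h5 : |(dist x p - dist x q) * (2 * dist x y - (dist x p + dist x q))| ≤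
      dist p q * (2 * ρ) := by
    rw [abs_mul]
    gcongr
  rw [abs_le] at h2 h5 ⊢
  constructor <;> nlinarith

/-- The two coordinates of `z` after the homothety taking `closedBall c R` to the unit ball. -/
def normCoord (j k : Fin 2) (c : Euc 2) (R : ℝ) (z : Euc 2) : ℝ × ℝ :=
  ((z j - c j) / R, (z k - c k) / R)

lemma inner_eq_of_ne {j k : Fin 2} (hjk : j ≠ k) (u v : Euc 2) :
    inner ℝ u v = u j * v j + u k * v k := by
  fin_cases j <;> fin_cases k <;> simp_all [PiLp.inner_apply, Fin.sum_univ_two] <;> ring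

lemma norm_sq_eq_of_ne {j k : Fin 2} (hjk : j ≠ k) (u : Euc 2) :
    ‖u‖ ^ 2 = u j ^ 2 + u k ^ 2 := by
  rw [← real_inner_self_eq_norm_sq, inner_eq_of_ne hjk]
  ring

lemma projBound_normCoord {E : Set (Euc 2)} {C₁ α : ℝ} (hsep : SepBound (distSet E) C₁ α)
    {j k : Fin 2} (hjk : j ≠ k) {x y c : Euc 2} (hx : x ∈ E) (hxy : x ≠ y)
    (hslope : |x k - y k| ≤ |x j - y j|) {R ρ₀ δ : ℝ} (hR : 0 < R) (hRρ : R ≤ ρ₀) (hδ : 0 < δ)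
    (hc : dist c y ≤ ρ₀) (hρ₀ : 64 * ρ₀ ≤ dist x y * δ) {B : Finset (Euc 2)}
    (hB : ↑B ⊆ E ∩ closedBall c R) :
    ProjBound (B.image (normCoord j k c R)) ((x k - y k) / (x j - y j)) (C₁ * 8 ^ α) α δ := by
  classical
  intro B' hB' ρ r hρ hρr hpair
  have hd : 0 < dist x y := dist_pos.2 hxy
  have hρ' : 0 < ρ := hδ.trans_le hρ
  set a := x j - y j with ha
  have hnorm : dist x y ^ 2 = a ^ 2 + (x k - y k) ^ 2 := by
    rw [dist_eq_norm, norm_sq_eq_of_ne hjk]; rfl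
  have had : |a| ≤ dist x y :=
    abs_le_of_sq_le_sq (by nlinarith [sq_nonneg (x k - y k)]) hd.le
  have hda : dist x y ≤ 2 * |a| := by
    have := sq_le_sq.2 hslope
    refine abs_le_of_sq_le_sq' ?_ (by positivity) |>.2
    rw [mul_pow, sq_abs]
    nlinarith
  have ha0 : a ≠ 0 := fun h => by rw [h, abs_zero] at hda; linarith
  have : ∀ z ∈ B', ∃ p ∈ B, normCoord j k c R p = z := fun z hz => by simpa using hB' hz
  choose! g hg hgz using this
  set t := (x k - y k) / a with ht
  have hat : a * t = x k - y k := by rw [ht]; field_simp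
  have hcoord : ∀ z ∈ B', R * z.1 = g z j - c j ∧ R * z.2 = g z k - c k := fun z hz => by
    have h := hgz z hz
    rw [normCoord, Prod.ext_iff] at h
    rw [← h.1, ← h.2]
    exact ⟨mul_div_cancel₀ _ hR.ne', mul_div_cancel₀ _ hR.ne'⟩
  have hfar : ∀ z ∈ B', ∀ z' ∈ B', z ≠ z' → R * ρ / 4 ≤ |dist x (g z) - dist x (g z')| ∧
      |dist x (g z) - dist x (g z')| ≤ 2 * R * r := by
    intro z hz z' hz' hne
    obtain ⟨h1, h2⟩ := hpair z hz z' hz' hne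
    have hp := mem_closedBall.1 (hB (hg z hz)).2
    have hq := mem_closedBall.1 (hB (hg z' hz')).2
    have hmain := abs_dist_mul_sub_add_inner_le (x := x) (y := y) (p := g z) (q := g z')
      (ρ := 2 * ρ₀) (by linarith [dist_triangle (g z) c y]) (by linarith [dist_triangle (g z') c y])
    have hin : inner ℝ (x - y) (g z - g z') =
        a * (R * ((z.1 + t * z.2) - (z'.1 + t * z'.2))) := by
      obtain ⟨h3, h4⟩ := hcoord z hz
      obtain ⟨h5, h6⟩ := hcoord z' hz'
      rw [inner_eq_of_ne hjk]
      simp only [PiLp.sub_apply]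
      linear_combination -a * (h3 - h5) - a * t * (h4 - h6) - hat * (g z k - g z' k)
    set D := (z.1 + t * z.2) - (z'.1 + t * z'.2)
    set Δ := dist x (g z) - dist x (g z')
    have hpq : dist (g z) (g z') ≤ 2 * R := by linarith [dist_triangle_right (g z) (g z') c]
    have herr : 2 * (2 * ρ₀) * dist (g z) (g z') ≤ dist x y * (R * ρ / 8) := by
      calc 2 * (2 * ρ₀) * dist (g z) (g z') ≤ 2 * (2 * ρ₀) * (2 * R) :=
          mul_le_mul_of_nonneg_left hpq (by linarith)
        _ = (64 * ρ₀) * (R / 8) := by ring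
        _ ≤ (dist x y * δ) * (R / 8) := by gcongr
        _ ≤ (dist x y * ρ) * (R / 8) := by gcongr
        _ = _ := by ring
    rw [hin] at hmain
    have h3 : |a * (R * D)| = |a| * (R * |D|) := by rw [abs_mul, abs_mul, abs_of_pos hR]
    have h4 : |dist x y * Δ| = dist x y * |Δ| := by rw [abs_mul, abs_of_pos hd]
    have h5 := abs_sub_abs_le_abs_sub (dist x y * Δ) (-(a * (R * D)))
    have h6 := abs_sub_abs_le_abs_sub (-(a * (R * D))) (dist x y * Δ)
    rw [abs_sub_comm (-(a * (R * D)))] at h6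
    rw [sub_neg_eq_add, abs_neg, h3, h4] at h5 h6
    have h7 : dist x y / 2 * (R * ρ) ≤ |a| * (R * |D|) := by gcongr; linarith
    have h8 : |a| * (R * |D|) ≤ dist x y * (R * r) := by gcongr
    have h9 : R * ρ ≤ R * r := by gcongr
    constructor
    · refine le_of_mul_le_mul_left ?_ hd
      nlinarith [mul_pos hd (mul_pos hR hρ')]
    · refine le_of_mul_le_mul_left ?_ hd
      nlinarith [mul_le_mul_of_nonneg_left h9 hd.le, mul_pos hd (mul_pos hR hρ')]
  have hinj : Set.InjOn (fun z => dist x (g z)) B' := fun z hz z' hz' hzz' => by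
    by_contra hne
    have := (hfar z hz z' hz' hne).1
    simp only at hzz'
    rw [hzz', sub_self, abs_zero] at this
    nlinarith [mul_pos hR hρ']
  have := hsep (B'.image fun z => dist x (g z)) (by
    intro d hd
    obtain ⟨z, hz, rfl⟩ := Finset.mem_image.1 (Finset.mem_coe.1 hd)
    exact ⟨x, hx, _, (hB (hg z hz)).1, rfl⟩) (R * ρ / 4) (2 * R * r) (by positivity)
    (by nlinarith [mul_le_mul_of_nonneg_left hρr hR.le, mul_pos hR hρ']) (by
      intro u hu v hv huv
      obtain ⟨z, hz, rfl⟩ := Finset.mem_image.1 hu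
      obtain ⟨z', hz', rfl⟩ := Finset.mem_image.1 hv
      exact hfar z hz z' hz' fun h => huv (by rw [h]))
  rw [Finset.card_image_of_injOn hinj] at this
  refine this.trans (le_of_eq ?_)
  rw [show 2 * R * r / (R * ρ / 4) = 8 * (r / ρ) by field_simp; ring,
    Real.mul_rpow (by norm_num) (div_nonneg (by linarith) hρ'.le)]
  ring

lemma normCoord_separated {j k : Fin 2} (hjk : j ≠ k) {c p q : Euc 2} {R δ : ℝ} (hR : 0 < R)
    (hδ : 0 < δ) (h : 2 * (R * δ) ≤ dist p q) :
    δ ≤ |(normCoord j k c R p).1 - (normCoord j k c R q).1| ∨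
      δ ≤ |(normCoord j k c R p).2 - (normCoord j k c R q).2| := by
  by_contra! hcon
  simp only [normCoord, ← sub_div, sub_sub_sub_cancel_right, abs_div, abs_of_pos hR,
    div_lt_iff₀ hR] at hcon
  have h1 := sq_lt_sq' (by linarith [abs_nonneg (p j - q j), mul_pos hδ hR]) hcon.1
  have h2 := sq_lt_sq' (by linarith [abs_nonneg (p k - q k), mul_pos hδ hR]) hcon.2
  have h3 : dist p q ^ 2 = (p j - q j) ^ 2 + (p k - q k) ^ 2 := by
    rw [dist_eq_norm, norm_sq_eq_of_ne hjk]; rfl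
  rw [sq_abs] at h1 h2
  have h4 : (2 * (R * δ)) ^ 2 ≤ dist p q ^ 2 := by gcongr
  nlinarith [mul_pos hδ hR]

lemma abs_normCoord_le {j k : Fin 2} {c p : Euc 2} {R : ℝ} (hR : 0 < R)
    (h : dist p c ≤ R) :
    |(normCoord j k c R p).1| ≤ 1 ∧ |(normCoord j k c R p).2| ≤ 1 := by
  have key : ∀ l : Fin 2, |(p l - c l) / R| ≤ 1 := fun l => by
    rw [abs_div, abs_of_pos hR, div_le_one hR]
    refine le_trans ?_ h
    rw [dist_eq_norm]
    simpa using PiLp.norm_apply_le (p - c) l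
  exact ⟨key j, key k⟩

lemma countable_slopes {μ : Measure (Euc 2)} {C C₁ α β : ℝ} (hα : 0 ≤ α) (hα₁ : α < 1)
    (hαβ : α < β) (hC : 0 < C) (hC₁ : 1 ≤ C₁)
    (hball : ∀ x r, 0 < r → μ (closedBall x r) ≤ ENNReal.ofReal (C * r ^ β))
    (hsep : SepBound (distSet μ.support) C₁ α) {y : Euc 2} (hy : y ∈ μ.support) {j k : Fin 2}
    (hjk : j ≠ k) :
    {t : ℝ | ∃ x ∈ μ.support, x ≠ y ∧ |x k - y k| ≤ |x j - y j| ∧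
      t = (x k - y k) / (x j - y j)}.Countable := by
  classical
  by_contra hG
  have hdata : ∀ i : ℕ, ∃ c ∈ μ.support, dist c y ≤ 1 / 4 ^ i ∧ ∃ R, 0 < R ∧ R ≤ 1 / 4 ^ i ∧
      ∃ B : Finset (Euc 2), ↑B ⊆ μ.support ∩ closedBall c R ∧ Separated (R / (2 ^ i / 2)) B ∧
      1 / 2 * (2 ^ i / 2) ^ β ≤ (B.card : ℝ) := by
    intro i
    rcases le_or_gt 2 i with hi | hi
    · refine exists_rich_ball hC hball hy ?_ (by positivity)
      have : (2 : ℝ) ^ 2 ≤ 2 ^ i := pow_le_pow_right₀ (by norm_num) hi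
      linarith
    · refine ⟨y, hy, by rw [dist_self]; positivity, 1 / 4 ^ i, by positivity, le_rfl, {y}, ?_, ?_, ?_⟩
      · have : (0 : ℝ) < 4 ^ i := by positivity
        simp [hy, this.le]
      · intro a ha b hb hab
        simp only [Finset.mem_singleton] at ha hb
        exact absurd (ha.trans hb.symm) hab
      · have h1 : (2 : ℝ) ^ i ≤ 2 ^ 1 := pow_le_pow_right₀ (by norm_num) (by omega)
        have h2 : ((2 : ℝ) ^ i / 2) ^ β ≤ 1 :=
          Real.rpow_le_one (by positivity) (by linarith) (by linarith)
        simp only [Finset.card_singleton, Nat.cast_one]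
        linarith
  choose c hc hcy R hR hR4 B hB hBs hBcard using hdata
  have hsepB : ∀ i, ∀ p ∈ B i, ∀ q ∈ B i, p ≠ q →
      1 / 2 ^ i ≤ |(normCoord j k (c i) (R i) p).1 - (normCoord j k (c i) (R i) q).1| ∨
      1 / 2 ^ i ≤ |(normCoord j k (c i) (R i) p).2 - (normCoord j k (c i) (R i) q).2| := by
    intro i p hp q hq hpq
    refine normCoord_separated hjk (hR i) (by positivity) ?_
    refine le_trans (le_of_eq ?_) (hBs i p hp q hq hpq)
    field_simp
  have hinj : ∀ i, Set.InjOn (normCoord j k (c i) (R i)) (B i) := by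
    intro i p hp q hq hpq
    by_contra hne
    have := hsepB i p hp q hq hne
    rw [hpq, sub_self, sub_self, abs_zero, or_self] at this
    exact absurd this (not_le.2 (by positivity))
  refine false_of_uncountable_projBound (c := 1 / 2 * (1 / 2) ^ β) (C := C₁ * 8 ^ α) hα hα₁ hαβ
    (by positivity) (one_le_mul_of_one_le_of_one_le hC₁ (Real.one_le_rpow (by norm_num) hα))
    (fun i => (B i).image (normCoord j k (c i) (R i))) ?_ ?_ ?_ hG ?_ ?_
  · intro i z hz
    obtain ⟨p, hp, rfl⟩ := Finset.mem_image.1 hz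
    exact abs_normCoord_le (hR i) (mem_closedBall.1 (hB i hp).2)
  · intro i z hz z' hz' hne
    obtain ⟨p, hp, rfl⟩ := Finset.mem_image.1 hz
    obtain ⟨q, hq, rfl⟩ := Finset.mem_image.1 hz'
    exact hsepB i p hp q hq fun h => hne (by rw [h])
  · intro i
    rw [Finset.card_image_of_injOn (hinj i)]
    refine le_trans (le_of_eq ?_) (hBcard i)
    rw [mul_comm β, Real.rpow_mul (by norm_num), Real.rpow_natCast, mul_assoc,
      ← Real.mul_rpow (by norm_num) (by positivity)]
    ring_nf
  · rintro t ⟨x, -, -, hx, rfl⟩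
    rw [abs_div]
    exact div_le_one_of_le₀ hx (abs_nonneg _)
  · rintro t ⟨x, hx, hxy, hslope, rfl⟩
    have hd : 0 < dist x y := dist_pos.2 hxy
    filter_upwards [(tendsto_pow_atTop_atTop_of_one_lt (one_lt_two (α := ℝ))).eventually_ge_atTop
      (64 / dist x y)] with i hi
    refine projBound_normCoord hsep hjk hx hxy hslope (hR i) (hR4 i) (by positivity) (hcy i) ?_
      (hB i)
    rw [div_le_iff₀ hd] at hi
    rw [show (4 : ℝ) ^ i = 2 ^ i * 2 ^ i by rw [← mul_pow]; norm_num]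
    rw [mul_one_div, mul_one_div, div_le_div_iff₀ (by positivity) (by positivity)]
    nlinarith [show (0 : ℝ) < 2 ^ i by positivity]

lemma dist_ray {V : Type*} [NormedAddCommGroup V] [NormedSpace ℝ V] (y v : V) {s s' : ℝ}
    (hs : 0 ≤ s) (hs' : 0 ≤ s') :
    dist (y + s • v) (y + s' • v) = |dist (y + s • v) y - dist (y + s' • v) y| := by
  simp only [dist_self_add_left, dist_add_left, norm_smul, Real.norm_of_nonneg hs,
    Real.norm_of_nonneg hs']
  rw [dist_eq_norm, ← sub_smul, norm_smul, ← sub_mul, abs_mul, abs_norm, Real.norm_eq_abs]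

lemma false_of_frostman {μ : Measure (Euc 2)} [IsProbabilityMeasure μ] {C C₁ α β : ℝ}
    (hα : 0 ≤ α) (hα₁ : α < 1) (hαβ : α < β) (hC : 0 < C) (hC₁ : 1 ≤ C₁)
    (hbdd : TotallyBounded μ.support)
    (hball : ∀ x r, 0 < r → μ (closedBall x r) ≤ ENNReal.ofReal (C * r ^ β))
    (hsep : SepBound (distSet μ.support) C₁ α) : False := by
  obtain ⟨y, hy⟩ := Measure.nonempty_support (IsProbabilityMeasure.ne_zero μ)
  obtain ⟨M, hM⟩ := hbdd.isBounded.subset_closedBall y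
  have hray : ∀ v : Euc 2, μ {x ∈ μ.support | ∃ s : ℝ, 0 ≤ s ∧ x = y + s • v} = 0 := by
    intro v
    refine measure_radial_eq_zero hαβ hC hball hsep hy (le_max_left 1 M)
      (fun x hx => (mem_closedBall.1 (hM hx)).trans (le_max_right _ _)) (fun x hx => hx.1) ?_
    rintro _ ⟨-, s, hs, rfl⟩ _ ⟨-, s', hs', rfl⟩
    exact (dist_ray y v hs hs').le
  have h01 := countable_slopes hα hα₁ hαβ hC hC₁ hball hsep hy (j := 0) (k := 1) (by decide)
  have h10 := countable_slopes hα hα₁ hαβ hC hC₁ hball hsep hy (j := 1) (k := 0) (by decide)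
  set G₀ := {t : ℝ | ∃ x ∈ μ.support, x ≠ y ∧ |x 1 - y 1| ≤ |x 0 - y 0| ∧
      t = (x 1 - y 1) / (x 0 - y 0)}
  set G₁ := {t : ℝ | ∃ x ∈ μ.support, x ≠ y ∧ |x 0 - y 0| ≤ |x 1 - y 1| ∧
      t = (x 0 - y 0) / (x 1 - y 1)}
  let W : Set (Euc 2) := {0} ∪ ((fun t : ℝ => !₂[1, t]) '' G₀ ∪ (fun t : ℝ => !₂[t, 1]) '' G₁)
  have hW : W.Countable := (countable_singleton 0).union ((h01.image _).union (h10.image _))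
  have hline : ∀ x ∈ μ.support, ∃ v ∈ W, ∃ s : ℝ, x = y + s • v := by
    intro x hx
    by_cases hxy : x = y
    · exact ⟨0, Or.inl rfl, 0, by simp [hxy]⟩
    rcases le_total |x 1 - y 1| |x 0 - y 0| with h | h
    · refine ⟨_, Or.inr (Or.inl ⟨_, ⟨x, hx, hxy, h, rfl⟩, rfl⟩), x 0 - y 0, ?_⟩
      have h0 : x 0 - y 0 = 0 → x 1 - y 1 = 0 := fun h0 => by simpa [h0] using h
      ext l
      fin_cases l
      · simp
      · simp [mul_div_cancel_of_imp' h0]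
    · refine ⟨_, Or.inr (Or.inr ⟨_, ⟨x, hx, hxy, h, rfl⟩, rfl⟩), x 1 - y 1, ?_⟩
      have h0 : x 1 - y 1 = 0 → x 0 - y 0 = 0 := fun h0 => by simpa [h0] using h
      ext l
      fin_cases l
      · simp [mul_div_cancel_of_imp' h0]
      · simp
  have hnull : μ (⋃ v ∈ W, ({x ∈ μ.support | ∃ s : ℝ, 0 ≤ s ∧ x = y + s • v} ∪
      {x ∈ μ.support | ∃ s : ℝ, 0 ≤ s ∧ x = y + s • (-v)})) = 0 :=
    (measure_biUnion_null_iff hW).2 fun v _ => measure_union_null (hray v) (hray (-v))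
  have hsub : μ.support ⊆ ⋃ v ∈ W, ({x ∈ μ.support | ∃ s : ℝ, 0 ≤ s ∧ x = y + s • v} ∪
      {x ∈ μ.support | ∃ s : ℝ, 0 ≤ s ∧ x = y + s • (-v)}) := by
    intro x hx
    obtain ⟨v, hv, s, hs⟩ := hline x hx
    refine mem_biUnion hv ?_
    rcases le_total 0 s with h | h
    · exact Or.inl ⟨hx, s, h, hs⟩
    · exact Or.inr ⟨hx, -s, by linarith, by rwa [neg_smul_neg]⟩
  have h1 : μ μ.support = 0 := measure_mono_null hsub hnull
  have h2 : μ univ = 0 := by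
    rw [← union_compl_self μ.support]
    exact measure_union_null h1 Measure.measure_compl_support
  simp at h2

/-- **Theorem 3.1** (planar distance set problem for Assouad dimension): for every
non-empty set `F ⊆ ℝ²`, `dim_A D(F) ≥ min{dim_A F, 1}`. -/
theorem assouad_distance_set_planar (F : Set (Euc 2)) (hne : F.Nonempty) :
    min (assouadDim F) 1 ≤ assouadDim (distSet F) := by
  refine le_csInf ⟨1, zero_le_one, 4, by norm_num, fun x _ r R hr hrR =>
    exists_cover_real _ x hr hrR⟩ ?_
  rintro α ⟨hα, C, hC, hcov⟩
  by_contra! hlt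
  obtain ⟨hαF, hα₁⟩ := lt_min_iff.1 hlt
  obtain ⟨β, hαβ, hβ⟩ := exists_between hαF
  obtain ⟨μ, hμ, hbdd, ⟨C', hC', hball⟩, happ⟩ := exists_frostman_tangent (hα.trans hαβ.le) hβ
  have hF : SepBound (distSet F) ((C + 1) * 2 ^ α) α :=
    sepBound_of_cover (by linarith) fun x hx r R hr hrR => by
      obtain ⟨𝒰, h1, h2, h3⟩ := hcov x hx r R hr hrR
      have : 0 < R := hr.trans hrR
      exact ⟨𝒰, h1, h2, h3.trans (by gcongr; linarith)⟩
  refine false_of_frostman hα hα₁ hαβ hC' ?_ hbdd hball (hF.of_approx happ)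
  exact one_le_mul_of_one_le_of_one_le (one_le_mul_of_one_le_of_one_le (by linarith)
    (Real.one_le_rpow (by norm_num) hα)) (Real.one_le_rpow (by norm_num) hα)

end
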